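/- Let X be an irreducible smooth projective variety of dimension at least 2 in P^n over an algebraically closed field of characteristic 0, and let P0 be a closed point on X. Then a general hyperplane of P^n passing through P0 intersects X in an irreducible smooth subvariety of codimension 1 on X. -/

import Mathlib

open MvPolynomial

/-- Points of projective `n`-space over `k`. -/
abbrev ProjPt (k : Type) [Field k] (n : ℕ) : Type := Projectivization k (Fin (n+1) → k)

variable {k : Type} [Field k] {n : ℕ}

/-- A polynomial vanishes at a projective point if it vanishes on every
representative vector of the point. -/
def VanishesAt (h : MvPolynomial (Fin (n+1)) k) (x : ProjPt k n) : Prop :=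
  ∀ (v : Fin (n+1) → k) (hv : v ≠ 0), Projectivization.mk k v hv = x → eval v h = 0

/-- Common projective zero locus of a family of polynomials. -/
def projZeroLocus (I : Set (MvPolynomial (Fin (n+1)) k)) : Set (ProjPt k n) :=
  {x | ∀ h ∈ I, VanishesAt h x}

/-- Zariski-closed subsets of projective space: common zero loci of families of
homogeneous polynomials. -/
def IsClosedSub (S : Set (ProjPt k n)) : Prop :=
  ∃ I : Set (MvPolynomial (Fin (n+1)) k),
    (∀ h ∈ I, ∃ m : ℕ, h.IsHomogeneous m) ∧ S = projZeroLocus I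

/-- A subset is irreducible if it is nonempty and is not covered by two closed sets
unless it is contained in one of them. -/
def IsIrredSub (S : Set (ProjPt k n)) : Prop :=
  S.Nonempty ∧ ∀ C₁ C₂ : Set (ProjPt k n),
    IsClosedSub C₁ → IsClosedSub C₂ → S ⊆ C₁ ∪ C₂ → S ⊆ C₁ ∨ S ⊆ C₂

/-- `T` is an irreducible closed subset of `S` (in the subspace Zariski topology). -/
def IsClosedIrredIn (S T : Set (ProjPt k n)) : Prop :=
  T ⊆ S ∧ (∃ C, IsClosedSub C ∧ T = C ∩ S) ∧ IsIrredSub T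

/-- `S` has dimension at least `m` : there is a strictly increasing chain of `m+1`
irreducible closed subsets of `S`. -/
def DimGE (S : Set (ProjPt k n)) (m : ℕ) : Prop :=
  ∃ c : Fin (m+1) → Set (ProjPt k n), StrictMono c ∧ ∀ i, IsClosedIrredIn S (c i)

/-- `S` has (Krull) dimension exactly `d`. -/
def HasDim (S : Set (ProjPt k n)) (d : ℕ) : Prop :=
  DimGE S d ∧ ¬ DimGE S (d+1)

/-- The gradient vector of a polynomial at a vector. -/
noncomputable def gradientAt (h : MvPolynomial (Fin (n+1)) k) (v : Fin (n+1) → k) :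
    Fin (n+1) → k :=
  fun j => eval v (pderiv j h)

/-- The homogeneous polynomials vanishing identically on `S`. -/
def homVanishingPolys (S : Set (ProjPt k n)) : Set (MvPolynomial (Fin (n+1)) k) :=
  {h | (∃ m : ℕ, h.IsHomogeneous m) ∧ ∀ x ∈ S, VanishesAt h x}

/-- Jacobian criterion: `S` (of dimension `d`) is smooth at `x` if the span of the
gradients at `x` of the homogeneous polynomials vanishing on `S` has rank `n - d`. -/
def SmoothPtAt (S : Set (ProjPt k n)) (d : ℕ) (x : ProjPt k n) : Prop :=
  ∀ (v : Fin (n+1) → k) (hv : v ≠ 0), Projectivization.mk k v hv = x →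
    Module.finrank k
      ↥(Submodule.span k {w | ∃ h ∈ homVanishingPolys S, w = gradientAt h v}) = n - d

/-- `S` is an irreducible smooth projective variety of dimension `d`. -/
def IsSmoothVariety (S : Set (ProjPt k n)) (d : ℕ) : Prop :=
  IsClosedSub S ∧ IsIrredSub S ∧ HasDim S d ∧ ∀ x ∈ S, SmoothPtAt S d x

/-- Polynomial function on a `k`-vector space `W`. -/
def IsPolyFun (k : Type) [Field k] {W : Type} [AddCommGroup W] [Module k W] (F : W → k) : Prop :=
  ∃ (r : ℕ) (lam : Fin r → (W →ₗ[k] k)) (p : MvPolynomial (Fin r) k),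
    F = fun w => eval (fun i => lam i w) p

/-- Zariski-closed subsets of a `k`-vector space `W` : common zero loci of families
of polynomial functions. -/
def IsZClosed (k : Type) [Field k] {W : Type} [AddCommGroup W] [Module k W] (Z : Set W) : Prop :=
  ∃ ℱ : Set (W → k), (∀ F ∈ ℱ, IsPolyFun k F) ∧ Z = {w | ∀ F ∈ ℱ, F w = 0}

/-- `Z` is a cone: stable under scalar multiplication. -/
def IsCone (k : Type) [Field k] {W : Type} [AddCommGroup W] [Module k W] (Z : Set W) : Prop :=
  ∀ (c : k) (w : W), w ∈ Z → c • w ∈ Z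

/-- `q` points of projective space are in general position: if `q < n+1` their
representative vectors are linearly independent; if `q = n+1` any `n` of them are
linearly independent. -/
def InGeneralPosition {q : ℕ} (P : Fin q → ProjPt k n) : Prop :=
  if q < n + 1 then LinearIndependent k (fun s => (P s).rep)
  else ∀ s : Fin q, LinearIndependent k (fun t : {t : Fin q // t ≠ s} => (P t.1).rep)

-- Part A
namespace Bert
open MvPolynomial

theorem exists_deriv {k : Type} [Field k] [CharZero k] {σ : Type} [Finite σ]
    {K E : Type} [Field K] [Field E] [Algebra (MvPolynomial σ k) K]
    [IsFractionRing (MvPolynomial σ k) K] [Algebra K E] [FiniteDimensional K E]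
    [Algebra (MvPolynomial σ k) E] [IsScalarTower (MvPolynomial σ k) K E]
    [Algebra k E] [IsScalarTower k (MvPolynomial σ k) E] (i : σ) :
    ∃ D : Derivation k E E, ∀ r : MvPolynomial σ k,
      D (algebraMap _ E r) = algebraMap _ E (pderiv i r) := by
  haveI : CharZero K := by
    exact charZero_of_injective_algebraMap (IsFractionRing.injective (MvPolynomial σ k) K)
  haveI : Algebra.FormallyEtale (MvPolynomial σ k) K :=
    Algebra.FormallyEtale.of_isLocalization (nonZeroDivisors (MvPolynomial σ k))
  haveI : Algebra.FormallyEtale K E := Algebra.FormallyEtale.of_isSeparable K E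
  haveI : Algebra.FormallyEtale (MvPolynomial σ k) E := Algebra.FormallyEtale.comp _ K E
  let d0 : Derivation k (MvPolynomial σ k) E :=
    (Algebra.linearMap (MvPolynomial σ k) E).compDer (pderiv i)
  let e := KaehlerDifferential.tensorKaehlerEquivOfFormallyEtale k (MvPolynomial σ k) E
  let L : KaehlerDifferential k E →ₗ[E] E := (d0.liftKaehlerDifferential.liftBaseChange E).comp e.symm.toLinearMap
  refine ⟨L.compDer (KaehlerDifferential.D k E), fun r => ?_⟩
  have : KaehlerDifferential.D k E (algebraMap _ E r) = e (1 ⊗ₜ KaehlerDifferential.D k _ r) := by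
    simp [e]
  change (d0.liftKaehlerDifferential.liftBaseChange E) (e.symm (KaehlerDifferential.D k E (algebraMap _ E r))) = _
  rw [this, LinearEquiv.symm_apply_apply]
  simp [d0]

theorem spec {k : Type} [Field k] {n : ℕ} {τ : Type} [Finite τ]
    (P : Set (MvPolynomial τ (MvPolynomial (Fin n) k)))
    (h : ∀ (E : Type) [Field E] [Algebra (FractionRing (MvPolynomial (Fin n) k)) E]
      [FiniteDimensional (FractionRing (MvPolynomial (Fin n) k)) E] (z : τ → E),
      ∃ p ∈ P, eval₂ ((algebraMap (FractionRing (MvPolynomial (Fin n) k)) E).comp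
        (algebraMap (MvPolynomial (Fin n) k) (FractionRing (MvPolynomial (Fin n) k)))) z p ≠ 0) :
    ∃ g : MvPolynomial (Fin n) k, g ≠ 0 ∧ ∀ a : Fin n → k, eval a g ≠ 0 →
      ∀ z : τ → k, ∃ p ∈ P, eval₂ (eval a) z p ≠ 0 := by
  set R := MvPolynomial (Fin n) k
  set K := FractionRing R
  by_cases hJ : ∃ g : R, g ≠ 0 ∧ C g ∈ Ideal.span P
  · obtain ⟨g, hg, hgJ⟩ := hJ
    refine ⟨g, hg, fun a ha z => ?_⟩
    by_contra! hc
    have : Ideal.span P ≤ RingHom.ker (eval₂Hom (eval a) z) :=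
      Ideal.span_le.2 fun p hp => hc p hp
    have := this hgJ
    rw [RingHom.mem_ker, coe_eval₂Hom, eval₂_C] at this
    exact ha this
  · exfalso
    push Not at hJ
    have hne : (Ideal.span P).map (MvPolynomial.map (σ := τ) (algebraMap R K)) ≠ ⊤ := by
      letI : Algebra (MvPolynomial τ R) (MvPolynomial τ K) := (MvPolynomial.map (algebraMap R K)).toAlgebra
      have hloc : IsLocalization ((nonZeroDivisors R).map (C : R →+* MvPolynomial τ R)) (MvPolynomial τ K) :=
        MvPolynomial.isLocalization _ _
      have := (IsLocalization.map_algebraMap_ne_top_iff_disjoint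
        ((nonZeroDivisors R).map (C : R →+* MvPolynomial τ R)) (MvPolynomial τ K) (Ideal.span P)).2
      apply this
      rw [Set.disjoint_left]
      rintro _ ⟨g, hg, rfl⟩ h2
      exact hJ g (nonZeroDivisors.ne_zero hg) h2
    obtain ⟨M, hM, hle⟩ := Ideal.exists_le_maximal _ hne
    letI : Field (MvPolynomial τ K ⧸ M) := Ideal.Quotient.field M
    haveI : Module.Finite K (MvPolynomial τ K ⧸ M) :=
      finite_of_finite_type_of_isJacobsonRing K (MvPolynomial τ K ⧸ M)
    obtain ⟨p, hp, hpne⟩ := h (MvPolynomial τ K ⧸ M) (fun t => Ideal.Quotient.mk M (X t))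
    apply hpne
    have h1 : MvPolynomial.map (algebraMap R K) p ∈ M := hle (Ideal.mem_map_of_mem _ (Ideal.subset_span hp))
    rw [← Ideal.Quotient.eq_zero_iff_mem] at h1
    rw [← h1]
    have : (eval₂Hom ((algebraMap K (MvPolynomial τ K ⧸ M)).comp (algebraMap R K))
        (fun t => Ideal.Quotient.mk M (X t))) =
        (Ideal.Quotient.mk M).comp (MvPolynomial.map (algebraMap R K)) := by
      apply MvPolynomial.ringHom_ext
      · intro r
        simp
        rfl
      · intro i
        simp
    exact congrArg (fun f => f p) this

end Bert

-- Part B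
namespace Bert
open MvPolynomial

theorem lead_aux {k B : Type} [Field k] [CommRing B] [Algebra k B] {σ : Type}
    (u : σ → B) (b : σ → k) (m : σ →₀ ℕ) :
    (aeval (fun i => Polynomial.C (u i) + Polynomial.C (algebraMap k B (b i)) * Polynomial.X)
      (monomial m (1:k)) : Polynomial B).natDegree ≤ m.degree ∧
    (aeval (fun i => Polynomial.C (u i) + Polynomial.C (algebraMap k B (b i)) * Polynomial.X)
      (monomial m (1:k)) : Polynomial B).coeff m.degree =
      algebraMap k B (eval b (monomial m (1:k))) := by
  induction m using Finsupp.induction_linear with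
  | zero => simp
  | add f g hf hg =>
    have h1 : (monomial (f + g) (1:k)) = monomial f 1 * monomial g 1 := by
      rw [monomial_mul, one_mul]
    rw [h1, map_mul, map_mul, map_mul, map_add]
    refine ⟨Polynomial.natDegree_mul_le_of_le hf.1 hg.1, ?_⟩
    rw [Polynomial.coeff_mul_add_eq_of_natDegree_le hf.1 hg.1, hf.2, hg.2]
  | single i e =>
    have hd : (Polynomial.C (u i) + Polynomial.C (algebraMap k B (b i)) * Polynomial.X).natDegree ≤ 1 := by
      rw [add_comm]
      exact Polynomial.natDegree_linear_le
    have h1 : (monomial (Finsupp.single i e) (1:k)) = X i ^ e := by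
      rw [X_pow_eq_monomial]
    rw [h1, map_pow, map_pow, aeval_X, Finsupp.degree_single, eval_X]
    refine ⟨by simpa using Polynomial.natDegree_pow_le_of_le e hd, ?_⟩
    have := Polynomial.coeff_pow_of_natDegree_le (m := e) hd
    rw [mul_one] at this
    rw [this]
    simp [Polynomial.coeff_C]

theorem lead_hom {k B : Type} [Field k] [CommRing B] [Algebra k B] {σ : Type}
    (u : σ → B) (b : σ → k) (f : MvPolynomial σ k) (N : ℕ) (hf : f.IsHomogeneous N) :
    (aeval (fun i => Polynomial.C (u i) + Polynomial.C (algebraMap k B (b i)) * Polynomial.X)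
      f : Polynomial B).natDegree ≤ N ∧
    (aeval (fun i => Polynomial.C (u i) + Polynomial.C (algebraMap k B (b i)) * Polynomial.X)
      f : Polynomial B).coeff N = algebraMap k B (eval b f) := by
  have key : ∀ m ∈ f.support, 
    (aeval (fun i => Polynomial.C (u i) + Polynomial.C (algebraMap k B (b i)) * Polynomial.X)
      (monomial m (f.coeff m)) : Polynomial B).natDegree ≤ N ∧
    (aeval (fun i => Polynomial.C (u i) + Polynomial.C (algebraMap k B (b i)) * Polynomial.X)
      (monomial m (f.coeff m)) : Polynomial B).coeff N =
      algebraMap k B (eval b (monomial m (f.coeff m))) := by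
    intro m hm
    have hN : m.degree = N := by
      have := hf (mem_support_iff.1 hm)
      rwa [Finsupp.degree_eq_weight_one] 
    have h1 : monomial m (f.coeff m) = (f.coeff m) • monomial m (1:k) := by
      rw [smul_monomial, smul_eq_mul, mul_one]
    obtain ⟨h2, h3⟩ := lead_aux u b m
    rw [hN] at h2 h3
    rw [h1, map_smul]
    refine ⟨(Polynomial.natDegree_smul_le _ _).trans h2, ?_⟩
    rw [Polynomial.coeff_smul, h3, smul_eval, Algebra.smul_def, map_mul]
  have hs := f.support_sum_monomial_coeff
  rw [← hs, map_sum, map_sum]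
  refine ⟨Polynomial.natDegree_sum_le_of_forall_le _ _ fun m hm => (key m hm).1, ?_⟩
  rw [Polynomial.finset_sum_coeff, map_sum]
  exact Finset.sum_congr rfl fun m hm => (key m hm).2

/-- If `f(y)=0` with `f` homogeneous, `f(b) ≠ 0`, `y = u + b t`, then `t` is integral. -/
theorem integral_of_hom {k A : Type} [Field k] [CommRing A] [Algebra k A] {σ : Type}
    (B : Subalgebra k A) (u : σ → B) (b : σ → k) (f : MvPolynomial σ k) (N : ℕ)
    (hf : f.IsHomogeneous N) (hb : eval b f ≠ 0) (t : A)
    (h0 : aeval (fun i => (u i : A) + algebraMap k A (b i) * t) f = 0) : IsIntegral B t := by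
  obtain ⟨h1, h2⟩ := lead_hom (B := B) u b f N hf
  set q := (aeval (fun i => Polynomial.C (u i) + Polynomial.C (algebraMap k B (b i)) * Polynomial.X)
      f : Polynomial B)
  refine ⟨Polynomial.C (algebraMap k B (eval b f)⁻¹) * q, ?_, ?_⟩
  · refine Polynomial.monic_of_natDegree_le_of_coeff_eq_one N ?_ ?_
    · exact (Polynomial.natDegree_C_mul_le _ _).trans h1
    · rw [Polynomial.coeff_C_mul, h2, ← map_mul, inv_mul_cancel₀ hb, map_one]
  · rw [Polynomial.eval₂_mul]
    have : Polynomial.eval₂ (algebraMap B A) t q = 0 := by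
      rw [← h0]
      have : ((Polynomial.aeval t : Polynomial B →ₐ[B] A).restrictScalars k).comp
        (aeval (fun i => Polynomial.C (u i) + Polynomial.C (algebraMap k B (b i)) * Polynomial.X)) = 
        (aeval (fun i => (u i : A) + algebraMap k A (b i) * t)) := by
        apply MvPolynomial.algHom_ext
        intro i
        simp
      exact congrArg (fun g => g f) this
    rw [this, mul_zero]


theorem eval_smul_hom {k : Type} [Field k] {σ : Type} {f : MvPolynomial σ k} {N : ℕ}
    (hf : f.IsHomogeneous N) (c : k) (v : σ → k) : eval (c • v) f = c ^ N * eval v f := by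
  rw [eval_eq, eval_eq, Finset.mul_sum]
  refine Finset.sum_congr rfl fun m hm => ?_
  have h1 := hf (mem_support_iff.1 hm)
  have h1 : m.degree = N := by rwa [Finsupp.degree_eq_weight_one]
  simp only [Pi.smul_apply, smul_eq_mul, mul_pow, Finset.prod_mul_distrib]
  rw [Finset.prod_pow_eq_pow_sum, ← h1, Finsupp.degree_apply]
  ring

/-- homogeneous ideals -/
def HomI {k : Type} [Field k] {σ : Type} (I : Ideal (MvPolynomial σ k)) : Prop :=
  ∀ f ∈ I, ∀ N, homogeneousComponent N f ∈ I

theorem homI_iff {k : Type} [Field k] {σ : Type} {I : Ideal (MvPolynomial σ k)} :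
    HomI I ↔ (letI := gradedAlgebra (σ := σ) (R := k); I.IsHomogeneous (homogeneousSubmodule σ k)) := by
  constructor
  · intro hI N f hf
    have := hI f hf N
    rwa [← decomposition.decompose'_apply] at this
  · intro hI f hf N
    have := hI N hf
    rwa [← decomposition.decompose'_apply]

theorem homI_isPrime {k : Type} [Field k] {σ : Type} {I : Ideal (MvPolynomial σ k)}
    (hI : HomI I) (hne : I ≠ ⊤) (h : ∀ f g : MvPolynomial σ k, ∀ M N, f.IsHomogeneous M →
      g.IsHomogeneous N → f * g ∈ I → f ∈ I ∨ g ∈ I) : I.IsPrime := by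
  letI := gradedAlgebra (σ := σ) (R := k)
  refine Ideal.IsHomogeneous.isPrime_of_homogeneous_mem_or_mem (homI_iff.1 hI) hne ?_
  rintro f g ⟨M, hM⟩ ⟨N, hN⟩ hfg
  exact h f g M N hM hN hfg

theorem exists_core {k : Type} [Field k] {σ : Type} (P : Ideal (MvPolynomial σ k)) [P.IsPrime] :
    ∃ Q : Ideal (MvPolynomial σ k), Q.IsPrime ∧ HomI Q ∧ Q ≤ P ∧
      (∀ J : Ideal (MvPolynomial σ k), HomI J → J ≤ P → J ≤ Q) ∧
      ∀ f N, f.IsHomogeneous N → f ∈ P → f ∈ Q := by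
  letI := gradedAlgebra (σ := σ) (R := k)
  refine ⟨(P.homogeneousCore (homogeneousSubmodule σ k)).toIdeal,
    Ideal.IsPrime.homogeneousCore inferInstance, ?_, Ideal.toIdeal_homogeneousCore_le _ _, ?_, ?_⟩
  · rw [homI_iff]
    exact (P.homogeneousCore (homogeneousSubmodule σ k)).isHomogeneous
  · intro J hJ hle
    rw [homI_iff] at hJ
    rw [← hJ.toIdeal_homogeneousCore_eq_self]
    exact Ideal.homogeneousCore_mono (homogeneousSubmodule σ k) hle
  · intro f N hf hfP
    exact Ideal.mem_homogeneousCore_of_homogeneous_of_mem ⟨N, hf⟩ hfP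

theorem aeval_lin_hom {k : Type} [Field k] {σ τ : Type} 
    (y : τ → MvPolynomial σ k) (hy : ∀ i, (y i).IsHomogeneous 1) {f : MvPolynomial τ k} {N : ℕ}
    (hf : f.IsHomogeneous N) : (aeval y f).IsHomogeneous N := by
  simpa using hf.aeval y hy

theorem comp_aeval_lin {k : Type} [Field k] {σ τ : Type} 
    (y : τ → MvPolynomial σ k) (hy : ∀ i, (y i).IsHomogeneous 1) (f : MvPolynomial τ k) (N : ℕ) :
    homogeneousComponent N (aeval y f) = aeval y (homogeneousComponent N f) := by
  conv_lhs => rw [← sum_homogeneousComponent f]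
  rw [map_sum, map_sum]
  have : ∀ i ∈ Finset.range (f.totalDegree + 1),
      homogeneousComponent N (aeval y (homogeneousComponent i f)) =
      if i = N then aeval y (homogeneousComponent N f) else 0 := by
    intro i _
    rw [homogeneousComponent_of_mem (aeval_lin_hom y hy (homogeneousComponent_isHomogeneous i f))]
    by_cases h1 : i = N
    · subst h1; simp
    · rw [if_neg h1, if_neg (Ne.symm h1)]
  rw [Finset.sum_congr rfl this, Finset.sum_ite_eq']
  split_ifs with h
  · rfl
  · rw [homogeneousComponent_eq_zero, map_zero]
    simpa using h

/-- linear Noether normalization data -/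
noncomputable def lnMap {k : Type} [Field k] {σ : Type} (I : Ideal (MvPolynomial σ k)) {D : ℕ}
    (y : Fin D → MvPolynomial σ k) : MvPolynomial (Fin D) k →ₐ[k] (MvPolynomial σ k ⧸ I) :=
  (Ideal.Quotient.mkₐ k I).comp (aeval y)

structure LN {k : Type} [Field k] {σ : Type} (I : Ideal (MvPolynomial σ k)) {D : ℕ}
    (y : Fin D → MvPolynomial σ k) : Prop where
  lin : ∀ i, (y i).IsHomogeneous 1
  inj : Function.Injective (lnMap I y)
  int : (lnMap I y).toRingHom.IsIntegral

theorem integral_trans_aux {T A B : Type} [CommRing T] [CommRing A] [CommRing B] [Algebra B A]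
    (φ : T →+* A) (hall : ∀ p, φ p ∈ integralClosure B A) (a : A) (ha : φ.IsIntegralElem a) :
    IsIntegral B a := by
  obtain ⟨p, hp, hpe⟩ := ha
  apply isIntegral_trans (A := integralClosure B A)
  let g : T →+* integralClosure B A := φ.codRestrict (integralClosure B A) hall
  refine ⟨p.map g, hp.map g, ?_⟩
  rw [Polynomial.eval₂_map, ← hpe]
  rfl

theorem exists_LN {k : Type} [Field k] [Infinite k] {m : ℕ} (I : Ideal (MvPolynomial (Fin m) k))
    (hI : HomI I) (hne : I ≠ ⊤) :
    ∃ (D : ℕ) (y : Fin D → MvPolynomial (Fin m) k), LN I y := by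
  classical
  have hex : ∃ (D : ℕ), ∃ (y : Fin D → MvPolynomial (Fin m) k),
    (∀ i, (y i).IsHomogeneous 1) ∧ (lnMap I y).toRingHom.IsIntegral := by
    refine ⟨m, X, fun i => isHomogeneous_X _ _, ?_⟩
    apply RingHom.isIntegral_of_surjective
    intro x
    obtain ⟨f, rfl⟩ := Ideal.Quotient.mk_surjective x
    refine ⟨f, ?_⟩
    simp [lnMap]
  have hmin := fun {D} => Nat.find_min hex (m := D)
  have hspec := Nat.find_spec hex
  generalize Nat.find hex = D at hmin hspec
  obtain ⟨y, hlin, hIntg⟩ := hspec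
  refine ⟨D, y, hlin, ?_, hIntg⟩
  by_contra hinj
  rw [injective_iff_map_eq_zero] at hinj
  push Not at hinj
  obtain ⟨p, hp, hp0⟩ := hinj
  obtain ⟨N, hN⟩ : ∃ N, homogeneousComponent N p ≠ 0 := by
    by_contra! h
    apply hp0
    rw [← sum_homogeneousComponent p]
    exact Finset.sum_eq_zero fun i _ => h i
  set f := homogeneousComponent N p
  have hf : f.IsHomogeneous N := homogeneousComponent_isHomogeneous N p
  have hfI : lnMap I y f = 0 := by
    have h1 : aeval y p ∈ I := Ideal.Quotient.eq_zero_iff_mem.1 hp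
    have h2 := hI _ h1 N
    rw [comp_aeval_lin y hlin] at h2
    exact Ideal.Quotient.eq_zero_iff_mem.2 h2
  obtain ⟨b, hb⟩ : ∃ b, eval b f ≠ 0 := by
    by_contra! h
    exact hN (MvPolynomial.funext fun x => by simpa using h x)
  have hN0 : N ≠ 0 := by
    rintro rfl
    obtain ⟨c, hc⟩ : ∃ c, f = C c := ⟨_, homogeneousComponent_zero p⟩
    rw [hc] at hb hfI
    rw [eval_C] at hb
    have : (C c : MvPolynomial (Fin m) k) ∈ I := by
      apply Ideal.Quotient.eq_zero_iff_mem.1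
      have h3 : lnMap I y (C c) = Ideal.Quotient.mk I (C c) := by simp [lnMap]; rfl
      rw [← h3, hfI]
    exact hne (Ideal.eq_top_of_isUnit_mem _ this (IsUnit.map C (isUnit_iff_ne_zero.2 hb)))
  obtain ⟨i0, hi0⟩ : ∃ i, b i ≠ 0 := by
    by_contra! h
    have : b = 0 := by ext i; simpa using h i
    rw [this] at hb
    apply hb
    have h0 := hf.coeff_eq_zero (d := 0) (by simpa using hN0.symm)
    rw [eval_zero, constantCoeff_eq, h0]
  obtain ⟨D', rfl⟩ : ∃ D', D = D' + 1 := ⟨D - 1, by have := i0.2; omega⟩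
  -- scaled direction
  let b' : Fin (D' + 1) → k := fun i => b i / b i0
  have hb' : eval b' f ≠ 0 := by
    have h1 : b' = fun i => (b i0)⁻¹ * b i := by ext i; simp [b', div_eq_inv_mul]
    have h2 := eval_smul_hom hf (b i0)⁻¹ b
    rw [h1]
    change eval ((b i0)⁻¹ • b) f ≠ 0
    rw [h2]
    exact mul_ne_zero (pow_ne_zero _ (inv_ne_zero hi0)) hb
  have hb'0 : b' i0 = 1 := div_self hi0
  let y' : Fin D' → MvPolynomial (Fin m) k := fun j =>
    y (i0.succAbove j) - C (b' (i0.succAbove j)) * y i0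
  refine hmin (Nat.lt_succ_self D') ⟨y', ?_, ?_⟩
  · intro j
    refine (hlin _).sub ?_
    simpa using (isHomogeneous_C _ (b' (i0.succAbove j))).mul (hlin i0)
  set A := MvPolynomial (Fin m) k ⧸ I
  let B : Subalgebra k A := (lnMap I y').range
  let B' : Subalgebra B A := integralClosure B A
  have hrange : ∀ a : A, IsIntegral B a → (lnMap I y').toRingHom.IsIntegralElem a := by
    rintro a ⟨p, hp, hpe⟩
    have hsurj : Function.Surjective (lnMap I y').rangeRestrict := (lnMap I y').rangeRestrict_surjective
    obtain ⟨q, hq1, hq2, hq3⟩ := Polynomial.lifts_and_natDegree_eq_and_monic 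
      ((Polynomial.mem_lifts _).2 (Polynomial.map_surjective ((lnMap I y').rangeRestrict.toRingHom) hsurj p)) hp
    refine ⟨q, hq3, ?_⟩
    rw [← hpe, ← hq1, Polynomial.eval₂_map]
    rfl
  have hy'B : ∀ j, Ideal.Quotient.mk I (y' j) ∈ B := fun j => ⟨X j, by simp [lnMap]⟩
  have hyi0 : IsIntegral B (Ideal.Quotient.mk I (y i0)) := by
    let u : Fin (D' + 1) → B := i0.insertNth 0 (fun j => ⟨_, hy'B j⟩)
    refine integral_of_hom B u b' f N hf hb' _ ?_
    rw [← hfI]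
    have : (fun i => (u i : A) + algebraMap k A (b' i) * Ideal.Quotient.mk I (y i0)) =
        fun i => Ideal.Quotient.mk I (y i) := by
      ext i
      refine i0.succAboveCases ?_ (fun j => ?_) i
      · simp [u, hb'0]
      · simp only [u, Fin.insertNth_apply_succAbove, y', map_sub, map_mul]
        have : algebraMap k A (b' (i0.succAbove j)) = Ideal.Quotient.mk I (C (b' (i0.succAbove j))) := rfl
        rw [this]
        ring
    rw [this]
    have h4 : (aeval (fun i => Ideal.Quotient.mk I (y i)) : _ →ₐ[k] A) = lnMap I y := by
      apply MvPolynomial.algHom_ext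
      intro i
      simp [lnMap]
    rw [h4]
  have hy : ∀ i, IsIntegral B (Ideal.Quotient.mk I (y i)) := by
    intro i
    refine i0.succAboveCases hyi0 (fun j => ?_) i
    have h1 : y (i0.succAbove j) = y' j + C (b' (i0.succAbove j)) * y i0 := by simp [y']
    rw [h1, map_add, map_mul]
    refine IsIntegral.add ?_ (IsIntegral.mul ?_ hyi0)
    · exact isIntegral_algebraMap (R := B) (x := ⟨_, hy'B j⟩)
    · exact isIntegral_algebraMap (R := B) (x := algebraMap k B (b' (i0.succAbove j)))
  have hall : ∀ p, lnMap I y p ∈ B' := by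
    intro p
    induction p using MvPolynomial.induction_on with
    | C a => 
      have : lnMap I y (C a) = algebraMap B A (algebraMap k B a) := by simp [lnMap]; rfl
      rw [this]
      exact B'.algebraMap_mem _
    | add p q hp hq => rw [map_add]; exact B'.add_mem hp hq
    | mul_X p i hp =>
      rw [map_mul]
      refine B'.mul_mem hp ?_
      have : lnMap I y (X i) = Ideal.Quotient.mk I (y i) := by simp [lnMap]
      rw [this]
      exact hy i
  intro a
  apply hrange
  exact integral_trans_aux (lnMap I y).toRingHom hall a (hIntg a)

end Bert

-- Part C
namespace Bert
open MvPolynomial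

variable {k : Type} [Field k] {n : ℕ}

/-- ideal of all polynomials vanishing on (the cone over) `S` -/
def vanI (S : Set (ProjPt k n)) : Ideal (MvPolynomial (Fin (n+1)) k) where
  carrier := {h | ∀ x ∈ S, VanishesAt h x}
  add_mem' := by
    intro a b ha hb x hx v hv hvx
    rw [map_add, ha x hx v hv hvx, hb x hx v hv hvx, add_zero]
  zero_mem' := by
    intro x hx v hv hvx
    simp
  smul_mem' := by
    intro c a ha x hx v hv hvx
    rw [smul_eq_mul, map_mul, ha x hx v hv hvx, mul_zero]

theorem mem_vanI {S : Set (ProjPt k n)} {h : MvPolynomial (Fin (n+1)) k} :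
    h ∈ vanI S ↔ ∀ x ∈ S, VanishesAt h x := Iff.rfl

theorem mk_smul_eq (v : Fin (n+1) → k) (hv : v ≠ 0) (c : k) (hc : c ≠ 0) :
    Projectivization.mk k (c • v) (smul_ne_zero hc hv) = Projectivization.mk k v hv := by
  rw [Projectivization.mk_eq_mk_iff']
  exact ⟨c, rfl⟩

theorem vanishesAt_hom {h : MvPolynomial (Fin (n+1)) k} {N : ℕ} (hh : h.IsHomogeneous N)
    (v : Fin (n+1) → k) (hv : v ≠ 0) :
    VanishesAt h (Projectivization.mk k v hv) ↔ eval v h = 0 := by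
  constructor
  · intro H
    exact H v hv rfl
  · intro H w hw hwv
    rw [Projectivization.mk_eq_mk_iff'] at hwv
    obtain ⟨c, rfl⟩ := hwv
    rw [eval_smul_hom hh, H, mul_zero]

theorem eval_comp_zero [Infinite k] {σ : Type} {f : MvPolynomial σ k} {v : σ → k}
    (h : ∀ c : k, c ≠ 0 → eval (c • v) f = 0) (N : ℕ) : eval v (homogeneousComponent N f) = 0 := by
  classical
  let p : Polynomial k := ∑ i ∈ Finset.range (f.totalDegree + 1),
    Polynomial.C (eval v (homogeneousComponent i f)) * Polynomial.X ^ i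
  have hp : ∀ c : k, p.eval c = eval (c • v) f := by
    intro c
    conv_rhs => rw [← sum_homogeneousComponent f]
    rw [map_sum, Polynomial.eval_finset_sum]
    refine Finset.sum_congr rfl fun i _ => ?_
    rw [eval_smul_hom (homogeneousComponent_isHomogeneous i f)]
    rw [Polynomial.eval_mul, Polynomial.eval_C, Polynomial.eval_pow, Polynomial.eval_X, mul_comm]
  have hp0 : p = 0 := by
    have : p * Polynomial.X = 0 := by
      apply Polynomial.funext
      intro c
      by_cases hc : c = 0
      · simp [hc]
      · simp [hp, h c hc]
    simpa using this
  by_cases hN : N < f.totalDegree + 1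
  · have h1 : p.coeff N = eval v (homogeneousComponent N f) := by
      simp only [p, Polynomial.finset_sum_coeff, Polynomial.coeff_C_mul_X_pow]
      rw [Finset.sum_ite_eq, if_pos (Finset.mem_range.2 hN)]
    rw [← h1, hp0, Polynomial.coeff_zero]
  · rw [homogeneousComponent_eq_zero _ _ (by omega), map_zero]

theorem homI_vanI [Infinite k] (S : Set (ProjPt k n)) : HomI (vanI S) := by
  intro f hf N x hx v hv hvx
  apply eval_comp_zero
  intro c hc
  exact hf x hx (c • v) (smul_ne_zero hc hv) (by rw [mk_smul_eq v hv c hc, hvx])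

theorem exists_rep (x : ProjPt k n) : ∃ (v : Fin (n+1) → k) (hv : v ≠ 0),
    Projectivization.mk k v hv = x := ⟨x.rep, x.rep_nonzero, x.mk_rep⟩

theorem mem_pzl {Q : Ideal (MvPolynomial (Fin (n+1)) k)} (hQ : HomI Q)
    (v : Fin (n+1) → k) (hv : v ≠ 0) :
    Projectivization.mk k v hv ∈ projZeroLocus (Q : Set (MvPolynomial (Fin (n+1)) k)) ↔
      ∀ h ∈ Q, eval v h = 0 := by
  constructor
  · intro H h hh
    exact H h hh v hv rfl
  · intro H h hh w hw hwv
    rw [← sum_homogeneousComponent h, map_sum]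
    refine Finset.sum_eq_zero fun i _ => ?_
    rw [Projectivization.mk_eq_mk_iff'] at hwv
    obtain ⟨c, rfl⟩ := hwv
    rw [eval_smul_hom (homogeneousComponent_isHomogeneous i h), H _ (hQ h hh i), mul_zero]

theorem closed_eq {S : Set (ProjPt k n)} (hS : IsClosedSub S) :
    projZeroLocus (vanI S : Set (MvPolynomial (Fin (n+1)) k)) = S := by
  obtain ⟨I, hI, rfl⟩ := hS
  ext x
  constructor
  · intro hx h hh
    exact hx h (fun y hy => hy h hh)
  · intro hx h hh
    exact hh x hx

theorem isClosed_pzl {Q : Ideal (MvPolynomial (Fin (n+1)) k)} (hQ : HomI Q) :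
    IsClosedSub (projZeroLocus (Q : Set (MvPolynomial (Fin (n+1)) k))) := by
  refine ⟨{h | h ∈ Q ∧ ∃ m, h.IsHomogeneous m}, fun h hh => hh.2, ?_⟩
  ext x
  obtain ⟨v, hv, rfl⟩ := exists_rep x
  rw [mem_pzl hQ]
  constructor
  · rintro H h ⟨hh, m, hm⟩
    rw [vanishesAt_hom hm]
    exact H h hh
  · intro H h hh
    rw [← sum_homogeneousComponent h, map_sum]
    refine Finset.sum_eq_zero fun i _ => ?_
    have hi := homogeneousComponent_isHomogeneous i h
    rw [← vanishesAt_hom hi v hv]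
    exact H _ ⟨hQ h hh i, i, hi⟩

theorem isClosed_inter {S T : Set (ProjPt k n)} (hS : IsClosedSub S) (hT : IsClosedSub T) :
    IsClosedSub (S ∩ T) := by
  obtain ⟨I, hI, rfl⟩ := hS
  obtain ⟨J, hJ, rfl⟩ := hT
  refine ⟨I ∪ J, fun h hh => hh.elim (hI h) (hJ h), ?_⟩
  ext x
  constructor
  · rintro ⟨h1, h2⟩ h (hh | hh)
    · exact h1 h hh
    · exact h2 h hh
  · intro H
    exact ⟨fun h hh => H h (Or.inl hh), fun h hh => H h (Or.inr hh)⟩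

theorem isClosed_single {h : MvPolynomial (Fin (n+1)) k} {m : ℕ} (hh : h.IsHomogeneous m) :
    IsClosedSub (projZeroLocus {h}) :=
  ⟨{h}, fun g hg => ⟨m, by rw [Set.mem_singleton_iff.1 hg]; exact hh⟩, rfl⟩

theorem exists_X_not_mem {S : Set (ProjPt k n)} (hS : S.Nonempty) : ∃ i, X i ∉ vanI S := by
  obtain ⟨x, hx⟩ := hS
  obtain ⟨v, hv, rfl⟩ := exists_rep x
  obtain ⟨i, hi⟩ := Function.ne_iff.1 hv
  refine ⟨i, fun H => hi ?_⟩
  simpa using H _ hx v hv rfl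

theorem vanI_prime [Infinite k] {S : Set (ProjPt k n)} (hS : IsIrredSub S) : (vanI S).IsPrime := by
  refine homI_isPrime (homI_vanI S) ?_ ?_
  · intro h
    obtain ⟨i, hi⟩ := exists_X_not_mem hS.1
    exact hi (by rw [h]; trivial)
  · intro f g M N hf hg hfg
    have := hS.2 _ _ (isClosed_single hf) (isClosed_single hg) ?_
    · refine this.imp (fun H => ?_) (fun H => ?_)
      · intro x hx
        exact H hx f rfl
      · intro x hx
        exact H hx g rfl
    · intro x hx
      have h1 := hfg x hx
      obtain ⟨v, hv, rfl⟩ := exists_rep x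
      rw [vanishesAt_hom (hf.mul hg), map_mul, mul_eq_zero] at h1
      refine h1.imp (fun H => ?_) (fun H => ?_)
      · rintro _ rfl
        rwa [vanishesAt_hom hf]
      · rintro _ rfl
        rwa [vanishesAt_hom hg]

theorem vanI_pzl [IsAlgClosed k] {Q : Ideal (MvPolynomial (Fin (n+1)) k)} [hp : Q.IsPrime]
    (hQ : HomI Q) (hX : ∃ i, X i ∉ Q) :
    vanI (projZeroLocus (Q : Set (MvPolynomial (Fin (n+1)) k))) = Q := by
  apply le_antisymm
  · intro f hf
    obtain ⟨i, hi⟩ := hX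
    have h1 : X i * f ∈ vanishingIdeal k (zeroLocus k Q) := by
      rw [mem_vanishingIdeal_iff]
      intro v hv
      by_cases hv0 : v = 0
      · subst hv0
        simp
      · have : eval v f = 0 := by
          refine hf (Projectivization.mk k v hv0) ?_ v hv0 rfl
          rw [mem_pzl hQ]
          intro h hh
          have := hv h hh
          simpa [aeval_eq_eval] using this
        simp [aeval_eq_eval, this]
    rw [vanishingIdeal_zeroLocus_eq_radical, hp.radical] at h1
    exact (hp.mem_or_mem h1).resolve_left hi
  · intro f hf x hx
    exact hx f hf

theorem irred_pzl [IsAlgClosed k] {Q : Ideal (MvPolynomial (Fin (n+1)) k)} [hp : Q.IsPrime]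
    (hQ : HomI Q) (hX : ∃ i, X i ∉ Q) :
    IsIrredSub (projZeroLocus (Q : Set (MvPolynomial (Fin (n+1)) k))) := by
  have hv := vanI_pzl hQ hX
  constructor
  · by_contra h
    rw [Set.not_nonempty_iff_eq_empty] at h
    obtain ⟨i, hi⟩ := hX
    apply hi
    rw [← hv, h]
    intro x hx
    exact hx.elim
  · rintro _ _ ⟨I, hI, rfl⟩ ⟨J, hJ, rfl⟩ hsub
    by_contra! hc
    obtain ⟨h1, h2⟩ := hc
    obtain ⟨x, hx, hx2⟩ := Set.not_subset.1 h1
    obtain ⟨y, hy, hy2⟩ := Set.not_subset.1 h2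
    simp only [projZeroLocus, Set.mem_setOf_eq, not_forall] at hx2 hy2
    obtain ⟨f, hf, hfx⟩ := hx2
    obtain ⟨g, hg, hgy⟩ := hy2
    have hfQ : f ∉ Q := by rw [← hv]; exact fun H => hfx (H x hx)
    have hgQ : g ∉ Q := by rw [← hv]; exact fun H => hgy (H y hy)
    have : f * g ∈ Q := by
      rw [← hv]
      intro z hz w hw hwz
      rw [map_mul, mul_eq_zero]
      exact (hsub hz).imp (fun H => H f hf w hw hwz) (fun H => H g hg w hw hwz)
    exact (hp.mem_or_mem this).elim hfQ hgQ

end Bert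

-- Part D
namespace Bert
open MvPolynomial

variable {k : Type} [Field k] {n : ℕ}

theorem dim_le_of_integral {R S : Type} [CommRing R] [CommRing S] (f : R →+* S)
    (hf : f.IsIntegral) : ringKrullDim S ≤ ringKrullDim R := by
  letI := f.toAlgebra
  haveI : Algebra.IsIntegral R S := ⟨hf⟩
  refine Order.krullDim_le_of_strictMono (PrimeSpectrum.comap f) ?_
  intro p q hpq
  exact Ideal.IsIntegral.comap_lt_comap (R := R) hpq

theorem dim_mvp (D : ℕ) : ringKrullDim (MvPolynomial (Fin D) k) = D := by
  rw [MvPolynomial.ringKrullDim_of_isNoetherianRing, ringKrullDim_eq_zero_of_field]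
  simp

theorem LN.dim_le {m : ℕ} {I : Ideal (MvPolynomial (Fin m) k)} {D : ℕ}
    {y : Fin D → MvPolynomial (Fin m) k} (h : LN I y) :
    ringKrullDim (MvPolynomial (Fin m) k ⧸ I) ≤ D := by
  rw [← dim_mvp (k := k) D]
  exact dim_le_of_integral _ h.int

theorem LN.comap_lt {m : ℕ} {I : Ideal (MvPolynomial (Fin m) k)} {D : ℕ}
    {y : Fin D → MvPolynomial (Fin m) k} (h : LN I y) (p q : Ideal (MvPolynomial (Fin m) k))
    [p.IsPrime] (hI : I ≤ p) (hpq : p < q) :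
    p.comap (aeval y : _ →ₐ[k] _).toRingHom < q.comap (aeval y : _ →ₐ[k] _).toRingHom := by
  obtain ⟨hle, x, hxq, hxp⟩ := SetLike.lt_iff_le_and_exists.1 hpq
  obtain ⟨F, hF, hF0⟩ := h.int (Ideal.Quotient.mk I x)
  refine Ideal.comap_lt_comap_of_root_mem_sdiff hle ⟨hxq, hxp⟩ (Polynomial.map_monic_ne_zero hF) ?_
  apply hI
  rw [← Ideal.Quotient.eq_zero_iff_mem, Polynomial.hom_eval₂]
  exact hF0

/-- the irrelevant ideal -/
noncomputable def irr (k : Type) [Field k] (n : ℕ) : Ideal (MvPolynomial (Fin (n+1)) k) :=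
  RingHom.ker (constantCoeff (R := k) (σ := Fin (n+1)))

instance : (irr k n).IsPrime := RingHom.ker_isPrime _

theorem lt_irr {Q : Ideal (MvPolynomial (Fin (n+1)) k)} (hp : Q ≠ ⊤) (hQ : HomI Q)
    (hX : ∃ i, X i ∉ Q) : Q < irr k n := by
  refine lt_of_le_of_ne ?_ ?_
  · intro f hf
    have h1 := hQ f hf 0
    rw [homogeneousComponent_zero] at h1
    by_contra hc
    have hc : coeff 0 f ≠ 0 := hc
    exact hp (Ideal.eq_top_of_isUnit_mem _ h1 (IsUnit.map C (isUnit_iff_ne_zero.2 hc)))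
  · rintro rfl
    obtain ⟨i, hi⟩ := hX
    exact hi (by simp [irr])

theorem closedIrred_closed {S T : Set (ProjPt k n)} (hS : IsClosedSub S) (h : IsClosedIrredIn S T) :
    IsClosedSub T := by
  obtain ⟨-, ⟨C, hC, rfl⟩, -⟩ := h
  exact isClosed_inter hC hS

theorem dimGE_le [IsAlgClosed k] {Q : Ideal (MvPolynomial (Fin (n+1)) k)}
    (hQ : HomI Q) {D : ℕ} {y : Fin D → MvPolynomial (Fin (n+1)) k} (h : LN Q y) {m : ℕ}
    (hm : DimGE (projZeroLocus (Q : Set (MvPolynomial (Fin (n+1)) k))) m) : m + 1 ≤ D := by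
  haveI : Infinite k := IsAlgClosed.instInfinite
  obtain ⟨c, hc, hci⟩ := hm
  have hcl : ∀ i, IsClosedSub (c i) := fun i => closedIrred_closed (isClosed_pzl hQ) (hci i)
  have hpr : ∀ i, (vanI (c i)).IsPrime := fun i => vanI_prime (hci i).2.2
  have hQle : ∀ i, Q ≤ vanI (c i) := fun i f hf x hx => (hci i).1 hx f hf
  have hlt : ∀ i j, i < j → vanI (c j) < vanI (c i) := by
    intro i j hij
    refine lt_of_le_of_ne ?_ ?_
    · intro f hf x hx
      exact hf x (hc.monotone hij.le hx)
    · intro he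
      have : c i = c j := by rw [← closed_eq (hcl i), ← closed_eq (hcl j), he]
      exact (hc hij).ne this
  let f := (aeval y : MvPolynomial (Fin D) k →ₐ[k] _).toRingHom
  let s : LTSeries (PrimeSpectrum (MvPolynomial (Fin D) k)) :=
    { length := m
      toFun := fun i => ⟨(vanI (c (Fin.rev i))).comap f, Ideal.IsPrime.comap f⟩
      step := by
        intro i
        refine h.comap_lt _ _ (hQle _) (hlt _ _ ?_)
        rw [Fin.rev_lt_rev]
        exact Fin.castSucc_lt_succ }
  let e : PrimeSpectrum (MvPolynomial (Fin D) k) := ⟨(irr k n).comap f, Ideal.IsPrime.comap f⟩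
  have hlast : s.last < e := by
    refine h.comap_lt _ _ (hQle _) ?_
    exact lt_irr (hpr _).ne_top (homI_vanI _) (exists_X_not_mem (hci _).2.2.1)
  have h1 := Order.LTSeries.length_le_krullDim (s.snoc e hlast)
  have h2 : Order.krullDim (PrimeSpectrum (MvPolynomial (Fin D) k)) = D := dim_mvp D
  rw [h2] at h1
  have h3 : (s.snoc e hlast).length = m + 1 := rfl
  rw [h3] at h1
  exact_mod_cast h1

theorem dimGE_mono {S : Set (ProjPt k n)} {m m' : ℕ} (h : m ≤ m') (hS : DimGE S m') : DimGE S m := by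
  obtain ⟨c, hc, hci⟩ := hS
  refine ⟨fun i => c (Fin.castLE (by omega) i), ?_, fun i => hci _⟩
  intro i j hij
  exact hc (by simpa using hij)

/-- partial evaluation killing the first `j` variables -/
noncomputable def eps (k : Type) [Field k] (D j : ℕ) : MvPolynomial (Fin D) k →ₐ[k] MvPolynomial (Fin D) k :=
  aeval (fun i => if i.val < j then 0 else X i)

noncomputable def pj (k : Type) [Field k] (D j : ℕ) : Ideal (MvPolynomial (Fin D) k) := RingHom.ker (eps k D j)

instance (D j : ℕ) : (pj k D j).IsPrime := RingHom.ker_isPrime _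

theorem pj_le (D j : ℕ) : pj k D j ≤ pj k D (j+1) := by
  intro f hf
  have : (eps k D (j+1)).comp (eps k D j) = eps k D (j+1) := by
    apply MvPolynomial.algHom_ext
    intro i
    simp only [eps, AlgHom.comp_apply, aeval_X]
    split_ifs with h1 h2
    · simp
    · omega
    · simp_all
    · simp_all
  have h2 : eps k D j f = 0 := hf
  change eps k D (j+1) f = 0
  rw [← this, AlgHom.comp_apply, h2, map_zero]

theorem X_mem_pj (D j : ℕ) (i : Fin D) : X i ∈ pj k D j ↔ i.val < j := by
  change eps k D j (X i) = 0 ↔ _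
  simp only [eps, aeval_X]
  split_ifs with h
  · simp [h]
  · simp [h]

theorem LN.exists_over {m : ℕ} {I : Ideal (MvPolynomial (Fin m) k)} {D : ℕ}
    {y : Fin D → MvPolynomial (Fin m) k} (h : LN I y) (p : Ideal (MvPolynomial (Fin m) k))
    (hI : I ≤ p) (q : Ideal (MvPolynomial (Fin D) k)) [q.IsPrime]
    (hpq : p.comap (aeval y : _ →ₐ[k] _).toRingHom ≤ q) :
    ∃ P : Ideal (MvPolynomial (Fin m) k), P.IsPrime ∧ p ≤ P ∧
      P.comap (aeval y : _ →ₐ[k] _).toRingHom = q := by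
  letI := (lnMap I y).toRingHom.toAlgebra
  haveI : Algebra.IsIntegral (MvPolynomial (Fin D) k) (MvPolynomial (Fin m) k ⧸ I) := ⟨h.int⟩
  have hmc : (p.map (Ideal.Quotient.mk I)).comap (Ideal.Quotient.mk I) = p := by
    rw [Ideal.comap_map_of_surjective _ Ideal.Quotient.mk_surjective, ← RingHom.ker_eq_comap_bot,
      Ideal.mk_ker, sup_eq_left.2 hI]
  obtain ⟨P, hP, hPp, hPc⟩ := Ideal.exists_ideal_over_prime_of_isIntegral q
    (p.map (Ideal.Quotient.mk I)) (by
      refine le_trans ?_ hpq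
      have : algebraMap (MvPolynomial (Fin D) k) (MvPolynomial (Fin m) k ⧸ I) =
        (Ideal.Quotient.mk I).comp (aeval y : _ →ₐ[k] _).toRingHom := rfl
      rw [this, ← Ideal.comap_comap, hmc])
  refine ⟨P.comap (Ideal.Quotient.mk I), Ideal.IsPrime.comap _, ?_, ?_⟩
  · rw [← hmc]
    exact Ideal.comap_mono hP
  · rw [Ideal.comap_comap, ← hPc]
    rfl

theorem dimGE_lower [IsAlgClosed k] {Q : Ideal (MvPolynomial (Fin (n+1)) k)} [hp : Q.IsPrime]
    (hQ : HomI Q) {e : ℕ} {y : Fin (e+1) → MvPolynomial (Fin (n+1)) k} (h : LN Q y) :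
    DimGE (projZeroLocus (Q : Set (MvPolynomial (Fin (n+1)) k))) e := by
  let f := (aeval y : MvPolynomial (Fin (e+1)) k →ₐ[k] _).toRingHom
  let good : ℕ → Ideal (MvPolynomial (Fin (n+1)) k) → Prop := fun j q =>
    q.IsPrime ∧ HomI q ∧ Q ≤ q ∧ q.comap f ≤ pj k (e+1) j ∧ ∀ i : Fin (e+1), i.val < j → y i ∈ q
  have step : ∀ j (q : {q // good j q}), ∃ q' : {q // good (j+1) q}, q.1 ≤ q'.1 := by
    rintro j ⟨q, hq1, hq2, hq3, hq4, hq5⟩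
    obtain ⟨P, hP, hle, hPc⟩ := h.exists_over q hq3 (pj k (e+1) (j+1)) (hq4.trans (pj_le _ _))
    obtain ⟨P', hP'1, hP'2, hP'3, hP'4, hP'5⟩ := exists_core P
    refine ⟨⟨P', hP'1, hP'2, hP'4 Q hQ (hq3.trans hle), ?_, ?_⟩, hP'4 q hq2 hle⟩
    · rw [← hPc]
      exact Ideal.comap_mono hP'3
    · intro i hi
      apply hP'5 _ 1 (h.lin i)
      have : X i ∈ P.comap f := by
        rw [hPc]
        exact (X_mem_pj _ _ _).2 hi
      simpa [f] using this
  choose nxt hnxt using step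
  have h0 : good 0 Q := by
    refine ⟨hp, hQ, le_rfl, ?_, fun i hi => absurd hi (by omega)⟩
    intro g hg
    have hg : aeval y g ∈ Q := hg
    have : g = 0 := by
      apply h.inj
      rw [map_zero]
      exact Ideal.Quotient.eq_zero_iff_mem.2 hg
    rw [this]
    exact zero_mem _
  let c : ∀ j, {q // good j q} := fun j => Nat.rec ⟨Q, h0⟩ nxt j
  have hc : ∀ j, (c j).1 ≤ (c (j+1)).1 := fun j => hnxt j (c j)
  have hmono : Monotone fun j => (c j).1 := monotone_nat_of_le_succ hc
  have hyn : ∀ j (i : Fin (e+1)), j ≤ i.val → y i ∉ (c j).1 := by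
    intro j i hi hy
    have h1 : X i ∈ (c j).1.comap f := by simpa [f] using hy
    have := (X_mem_pj _ _ _).1 ((c j).2.2.2.2.1 h1)
    omega
  have hXn : ∀ j, j < e+1 → ∃ i, X i ∉ (c j).1 := by
    intro j hj
    by_contra! hall
    haveI := (c j).2.1
    have h1 : irr k n ≤ (c j).1 := by
      intro g hg
      have hg : constantCoeff g = 0 := hg
      have h2 : g ∈ Ideal.span (X '' (Set.univ : Set (Fin (n+1))) : Set (MvPolynomial (Fin (n+1)) k)) := by
        rw [mem_ideal_span_X_image]
        intro m hm
        by_contra! hc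
        have : m = 0 := Finsupp.ext fun i => hc i trivial
        rw [mem_support_iff, this] at hm
        exact hm hg
      refine (Ideal.span_le.2 ?_) h2
      rintro _ ⟨i, -, rfl⟩
      exact hall i
    apply hyn j ⟨j, hj⟩ le_rfl
    apply h1
    change constantCoeff _ = 0
    rw [constantCoeff_eq]
    exact (h.lin _).coeff_eq_zero (by simp)
  have hlt : ∀ i j, i < j → j < e + 1 → (c i).1 < (c j).1 := by
    intro i j hij hj
    refine lt_of_le_of_ne (hmono hij.le) ?_
    intro he
    apply hyn i ⟨i, by omega⟩ le_rfl
    rw [he]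
    exact (c j).2.2.2.2.2 _ hij
  refine ⟨fun i => projZeroLocus ((c (Fin.rev i).val).1 : Set (MvPolynomial (Fin (n+1)) k)), ?_, ?_⟩
  · intro i j hij
    have hrev : (Fin.rev j).val < (Fin.rev i).val := Fin.rev_lt_rev.2 hij
    refine lt_of_le_of_ne ?_ ?_
    · intro x hx g hg
      exact hx g (hmono hrev.le hg)
    · intro he
      haveI := (c (Fin.rev i).val).2.1
      haveI := (c (Fin.rev j).val).2.1
      have h1 := congrArg vanI he
      have h2 := vanI_pzl (Q := (c (Fin.rev i).val).1) (hp := (c (Fin.rev i).val).2.1) (c _).2.2.1 (hXn _ (Fin.rev i).2)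
      have h3 := vanI_pzl (Q := (c (Fin.rev j).val).1) (hp := (c (Fin.rev j).val).2.1) (c _).2.2.1 (hXn _ (Fin.rev j).2)
      exact (hlt _ _ hrev (Fin.rev i).2).ne (h3.symm.trans (h1.symm.trans h2))
  · intro i
    haveI := (c (Fin.rev i).val).2.1
    have hsub : projZeroLocus ((c (Fin.rev i).val).1 : Set (MvPolynomial (Fin (n+1)) k)) ⊆
        projZeroLocus (Q : Set (MvPolynomial (Fin (n+1)) k)) := fun x hx g hg =>
          hx g ((c _).2.2.2.1 hg)
    exact ⟨hsub, ⟨_, isClosed_pzl (c _).2.2.1, (Set.inter_eq_left.2 hsub).symm⟩,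
      irred_pzl (hp := (c (Fin.rev i).val).2.1) (c _).2.2.1 (hXn _ (Fin.rev i).2)⟩

theorem hasDim_of_LN [IsAlgClosed k] {Q : Ideal (MvPolynomial (Fin (n+1)) k)} [hp : Q.IsPrime]
    (hQ : HomI Q) {e : ℕ} {y : Fin (e+1) → MvPolynomial (Fin (n+1)) k} (h : LN Q y) :
    HasDim (projZeroLocus (Q : Set (MvPolynomial (Fin (n+1)) k))) e := by
  refine ⟨dimGE_lower hQ h, fun hc => ?_⟩
  have := dimGE_le hQ h hc
  omega

theorem LN_of_hasDim [IsAlgClosed k] {Q : Ideal (MvPolynomial (Fin (n+1)) k)} [hp : Q.IsPrime]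
    (hQ : HomI Q) {D : ℕ} {y : Fin D → MvPolynomial (Fin (n+1)) k} (h : LN Q y) {d : ℕ}
    (hd : HasDim (projZeroLocus (Q : Set (MvPolynomial (Fin (n+1)) k))) d) : D = d + 1 := by
  have h1 := dimGE_le hQ h hd.1
  obtain ⟨e, rfl⟩ : ∃ e, D = e + 1 := ⟨D - 1, by omega⟩
  have h2 := dimGE_lower hQ h
  by_contra hne
  exact hd.2 (dimGE_mono (by omega) h2)

end Bert

-- Part E
namespace Bert
open MvPolynomial

variable {k : Type} [Field k] {n : ℕ}

theorem exists_field {S B : Type} [CommRing S] [IsDomain S] [CommRing B] [IsDomain B]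
    (φ : S →+* B) (inj : Function.Injective φ) (fin : φ.Finite) :
    ∃ (E : Type) (_ : Field E) (_ : Algebra (FractionRing S) E)
      (_ : FiniteDimensional (FractionRing S) E) (ι : B →+* E), Function.Injective ι ∧
      ∀ s, ι (φ s) = algebraMap (FractionRing S) E (algebraMap S _ s) := by
  letI := φ.toAlgebra
  haveI : Module.Finite S B := fin
  haveI : FaithfulSMul S B := (faithfulSMul_iff_algebraMap_injective S B).2 inj
  letI : Algebra (FractionRing S) (FractionRing B) := FractionRing.liftAlgebra S _
  haveI := FractionRing.isScalarTower_liftAlgebra S (FractionRing B)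
  haveI : FiniteDimensional (FractionRing S) (FractionRing B) :=
    .of_isLocalization S B (nonZeroDivisors S)
  refine ⟨FractionRing B, inferInstance, inferInstance, inferInstance, algebraMap B _,
    IsFractionRing.injective B _, fun s => ?_⟩
  rw [← IsScalarTower.algebraMap_apply S (FractionRing S), IsScalarTower.algebraMap_apply S B]
  rfl

theorem LN.finite {m : ℕ} {I : Ideal (MvPolynomial (Fin m) k)} {D : ℕ}
    {y : Fin D → MvPolynomial (Fin m) k} (h : LN I y) : (lnMap I y).toRingHom.Finite := by
  apply RingHom.IsIntegral.to_finite h.int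
  have h1 : (algebraMap k (MvPolynomial (Fin m) k ⧸ I)).FiniteType := by
    rw [RingHom.finiteType_algebraMap]
    infer_instance
  have h2 : ((lnMap I y).toRingHom.comp (algebraMap k _)) = algebraMap k (MvPolynomial (Fin m) k ⧸ I) :=
    (lnMap I y).comp_algebraMap
  rw [← h2] at h1
  exact RingHom.FiniteType.of_comp_finiteType h1

theorem chain_rule {E : Type} [Field E] [Algebra k E] (D : Derivation k E E) {m : ℕ}
    (ψ : MvPolynomial (Fin m) k →ₐ[k] E) (f : MvPolynomial (Fin m) k) :
    D (ψ f) = ∑ j, ψ (pderiv j f) * D (ψ (X j)) := by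
  induction f using MvPolynomial.induction_on with
  | C a =>
    have : ψ (C a) = algebraMap k E a := ψ.commutes a
    simp [this]
  | add p q hp hq =>
    simp only [map_add, hp, hq, add_mul, Finset.sum_add_distrib]
  | mul_X p i hp =>
    classical
    simp only [map_mul, Derivation.leibniz, hp, smul_eq_mul, map_add, pderiv_X, add_mul,
      Finset.sum_add_distrib, Pi.single_apply]
    congr 1
    · rw [Finset.sum_eq_single i]
      · simp
      · intro b _ hb
        simp [hb.symm]
      · simp
    · rw [Finset.mul_sum]
      refine Finset.sum_congr rfl fun j _ => by ring

theorem dim_aux {E : Type} [Field E] {r m D : ℕ} (G : Matrix (Fin r) (Fin m) E)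
    (Cm : Matrix (Fin m) (Fin r) E) (W : Matrix (Fin m) (Fin D) E) (Y : Matrix (Fin D) (Fin m) E)
    (h1 : (G * Cm).det ≠ 0) (h2 : G * W = 0) (h3 : Y * W = 1) : r + D ≤ m := by
  let L : ((Fin r → E) × (Fin D → E)) →ₗ[E] (Fin m → E) := Cm.mulVecLin.coprod W.mulVecLin
  have hinj : Function.Injective L := by
    rw [injective_iff_map_eq_zero]
    rintro ⟨a, b⟩ hab
    have hab : Cm.mulVec a + W.mulVec b = 0 := hab
    have e1 := congrArg G.mulVec hab
    rw [Matrix.mulVec_add, Matrix.mulVec_mulVec, Matrix.mulVec_mulVec, h2, Matrix.zero_mulVec,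
      add_zero, Matrix.mulVec_zero] at e1
    have ha : a = 0 := Matrix.eq_zero_of_mulVec_eq_zero h1 e1
    rw [ha, Matrix.mulVec_zero, zero_add] at hab
    have e2 := congrArg Y.mulVec hab
    rw [Matrix.mulVec_mulVec, h3, Matrix.one_mulVec, Matrix.mulVec_zero] at e2
    rw [ha, e2]
    rfl
  have := LinearMap.finrank_le_finrank_of_injective hinj
  simpa using this

/-- span of gradients at `v` of the members of `Q`. -/
noncomputable def gradSpan {m : ℕ} (Q : Ideal (MvPolynomial (Fin m) k)) (v : Fin m → k) :
    Submodule k (Fin m → k) :=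
  Submodule.span k {w | ∃ f ∈ Q, w = fun j => eval v (pderiv j f)}

theorem lin_eq {m : ℕ} {f : MvPolynomial (Fin m) k} (hf : f.IsHomogeneous 1) :
    f = ∑ j, C (constantCoeff (pderiv j f)) * X j := by
  have h := hf.sum_X_mul_pderiv
  rw [one_smul] at h
  conv_lhs => rw [← h]
  refine Finset.sum_congr rfl fun j _ => ?_
  have h2 : (pderiv j f).IsHomogeneous 0 := hf.pderiv
  have h3 := totalDegree_eq_zero_iff_eq_C.1 (Nat.le_zero.1 h2.totalDegree_le)
  rw [mul_comm]
  conv_lhs => rw [h3]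
  rw [constantCoeff_eq]

theorem exists_left_inv {r m : ℕ} (u : Fin r → Fin m → k) (hu : LinearIndependent k u) :
    ∃ Cm : Matrix (Fin m) (Fin r) k, Matrix.of u * Cm = 1 := by
  have h : Function.Surjective (Matrix.of u).mulVecLin := by
    rw [← LinearMap.range_eq_top]
    apply Submodule.eq_top_of_finrank_eq
    have : (Matrix.of u).rank = r := by
      have := LinearIndependent.rank_matrix (M := Matrix.of u) hu
      simpa using this
    rw [← Matrix.rank, this]
    simp
  choose g hg using fun j => h (Pi.single j 1)
  refine ⟨Matrix.of fun i j => g j i, ?_⟩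
  ext i j
  have := congrFun (hg j) i
  simp only [Matrix.mulVecLin_apply, Matrix.mulVec, dotProduct] at this
  simp only [Matrix.mul_apply]
  rw [Matrix.one_apply]
  rw [Pi.single_apply] at this
  exact this

theorem grad_rank_le [CharZero k] {m : ℕ} {Q : Ideal (MvPolynomial (Fin m) k)} [hp : Q.IsPrime]
    {D : ℕ} {y : Fin D → MvPolynomial (Fin m) k} (h : LN Q y) (v : Fin m → k)
    (hv : ∀ f ∈ Q, eval v f = 0) : Module.finrank k (gradSpan Q v) + D ≤ m := by
  obtain ⟨E, _, _, _, ι, hι, hιs⟩ := exists_field (lnMap Q y).toRingHom h.inj h.finite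
  letI : Algebra (MvPolynomial (Fin D) k) E :=
    ((algebraMap (FractionRing (MvPolynomial (Fin D) k)) E).comp (algebraMap (MvPolynomial (Fin D) k) _)).toAlgebra
  haveI : IsScalarTower (MvPolynomial (Fin D) k) (FractionRing (MvPolynomial (Fin D) k)) E :=
    IsScalarTower.of_algebraMap_eq fun _ => rfl
  letI : Algebra k E := ((algebraMap (MvPolynomial (Fin D) k) E).comp C).toAlgebra
  haveI : IsScalarTower k (MvPolynomial (Fin D) k) E := IsScalarTower.of_algebraMap_eq fun _ => rfl
  let ψ : MvPolynomial (Fin m) k →ₐ[k] E :=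
    { toRingHom := ι.comp (Ideal.Quotient.mk Q)
      commutes' := by
        intro c
        have := hιs (C c)
        change ι (Ideal.Quotient.mk Q (C c)) = algebraMap (MvPolynomial (Fin D) k) E (C c)
        rw [← show _ = algebraMap (MvPolynomial (Fin D) k) E (C c) from this]
        congr 1
        have h2 : (lnMap Q y) (C c) = algebraMap k _ c := (lnMap Q y).commutes c
        exact h2.symm }
  have hψ : ∀ f, ψ f = 0 ↔ f ∈ Q := by
    intro f
    change ι (Ideal.Quotient.mk Q f) = 0 ↔ _
    rw [map_eq_zero_iff ι hι, Ideal.Quotient.eq_zero_iff_mem]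
  have hψy : ∀ i, ψ (y i) = algebraMap (MvPolynomial (Fin D) k) E (X i) := by
    intro i
    have h1 : _ = algebraMap (MvPolynomial (Fin D) k) E (X i) := hιs (X i)
    rw [← h1]
    have h2 : (lnMap Q y) (X i) = Ideal.Quotient.mk Q (y i) := by
      simp [lnMap]
    change ι (Ideal.Quotient.mk Q (y i)) = ι (lnMap Q y (X i))
    rw [h2]
  choose Dr hDr using fun i : Fin D => exists_deriv (k := k) (K := FractionRing (MvPolynomial (Fin D) k)) (E := E) i
  -- choose independent gradients
  obtain ⟨b, hb1, hb2, hb3⟩ := exists_linearIndependent k {w | ∃ f ∈ Q, w = fun j => eval v (pderiv j f)}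
  haveI : Finite b := hb3.finite
  obtain ⟨r, ⟨eb⟩⟩ := Finite.exists_equiv_fin b
  have hr : Module.finrank k (gradSpan Q v) = r := by
    haveI := Fintype.ofFinite b
    rw [gradSpan, ← hb2, finrank_span_set_eq_card hb3]
    simp [Fintype.card_congr eb]
  rw [hr]
  have hub : ∀ i : Fin r, ∃ f ∈ Q, (eb.symm i : Fin m → k) = fun j => eval v (pderiv j f) :=
    fun i => hb1 (eb.symm i).2
  choose f hfQ hf using hub
  obtain ⟨Cm, hCm⟩ := exists_left_inv (fun i => (eb.symm i : Fin m → k))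
    (hb3.comp _ eb.symm.injective)
  let G : Matrix (Fin r) (Fin m) (MvPolynomial (Fin m) k) := Matrix.of fun i j => pderiv j (f i)
  let Cc : Matrix (Fin m) (Fin r) (MvPolynomial (Fin m) k) := Cm.map C
  let N : Matrix (Fin r) (Fin r) (MvPolynomial (Fin m) k) := G * Cc
  have hdet : N.det ∉ Q := by
    intro hmem
    have := hv _ hmem
    have h2 : N.map (eval v) = 1 := by
      rw [← hCm]
      simp only [N, Cc]
      rw [Matrix.map_mul]
      congr 1
      · ext i j
        simp [G, hf]
      · ext i j
        simp
    replace this := (RingHom.map_det (eval v) N).symm.trans this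
    rw [RingHom.mapMatrix_apply] at this
    rw [h2] at this
    simp at this
  apply dim_aux (E := E) (G.map ψ) (Cm.map (algebraMap k E))
    (Matrix.of fun j i => Dr i (ψ (X j)))
    (Matrix.of fun i j => algebraMap k E (constantCoeff (pderiv j (y i))))
  · intro h0
    apply hdet
    rw [← hψ]
    refine (AlgHom.map_det ψ N).trans ?_
    rw [← h0]
    congr 1
    simp only [N, Cc]
    rw [AlgHom.mapMatrix_apply, Matrix.map_mul]
    congr 1
    ext i j
    exact ψ.commutes _
  · ext i j
    simp only [Matrix.mul_apply, Matrix.map_apply, Matrix.of_apply, G, Matrix.zero_apply]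
    rw [← chain_rule, (hψ _).2 (hfQ i), map_zero]
  · ext i j
    simp only [Matrix.mul_apply, Matrix.of_apply]
    have h1 : Dr j (ψ (y i)) = (1 : Matrix (Fin D) (Fin D) E) i j := by
      rw [hψy, hDr, pderiv_X, Matrix.one_apply, Pi.single_apply]
      split_ifs <;> simp
    rw [← h1, chain_rule]
    refine Finset.sum_congr rfl fun l _ => ?_
    congr 1
    have h2 : (pderiv l (y i)).IsHomogeneous 0 := (h.lin i).pderiv
    have h3 := totalDegree_eq_zero_iff_eq_C.1 (Nat.le_zero.1 h2.totalDegree_le)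
    rw [constantCoeff_eq, ← ψ.commutes, algebraMap_eq, ← h3]

theorem exists_hom_gens {m : ℕ} (I : Ideal (MvPolynomial (Fin m) k)) (hI : HomI I) :
    ∃ (r : ℕ) (f : Fin r → MvPolynomial (Fin m) k), (∀ j, ∃ N, (f j).IsHomogeneous N) ∧
      Ideal.span (Set.range f) = I := by
  have h1 : Ideal.span {f | f ∈ I ∧ ∃ N, f.IsHomogeneous N} = I := by
    apply le_antisymm
    · rw [Ideal.span_le]
      exact fun f hf => hf.1
    · intro f hf
      rw [← sum_homogeneousComponent f]
      refine Ideal.sum_mem _ fun N _ => Ideal.subset_span ⟨hI f hf N, N, ?_⟩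
      exact homogeneousComponent_isHomogeneous N f
  have h2 : (Ideal.span {f | f ∈ I ∧ ∃ N, f.IsHomogeneous N}).FG := by
    rw [h1]
    exact IsNoetherian.noetherian I
  obtain ⟨s, hs, hs2⟩ := (Submodule.fg_span_iff_fg_span_finset_subset _).1 h2
  obtain ⟨r, ⟨e⟩⟩ := Finite.exists_equiv_fin s
  refine ⟨r, fun i => (e.symm i).1, fun j => (hs (e.symm j).2).2, ?_⟩
  rw [← h1]
  have : Set.range (fun i => ((e.symm i).1 : MvPolynomial (Fin m) k)) = s := by
    ext x
    constructor
    · rintro ⟨i, rfl⟩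
      exact (e.symm i).2
    · intro hx
      exact ⟨e ⟨x, hx⟩, by simp⟩
  rw [this]
  exact hs2.symm

theorem eval₂_aeval_inl {R E τ : Type} [CommRing R] [Algebra k R] [CommRing E] (ρ : R →+* E)
    {m : ℕ} (e : Fin m → τ) (z : τ → E) (f : MvPolynomial (Fin m) k) :
    eval₂ ρ z (aeval (fun j => (X (e j) : MvPolynomial τ R)) f) =
      eval₂ (ρ.comp (algebraMap k R)) (fun j => z (e j)) f := by
  induction f using MvPolynomial.induction_on with
  | C a =>
    simp [MvPolynomial.algebraMap_eq, MvPolynomial.algebraMap_apply]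
  | add p q hp hq => simp [hp, hq]
  | mul_X p i hp => simp [hp]

theorem smooth_general [CharZero k] {N m r : ℕ} (f : Fin r → MvPolynomial (Fin m) k)
    (hf : ∀ j, ∃ N, (f j).IsHomogeneous N) (ξ : Fin N → Fin m → k) (i : Fin N) :
    ∃ g : MvPolynomial (Fin N) k, g ≠ 0 ∧ ∀ a, eval a g ≠ 0 → ∀ x : Fin m → k,
      (∀ j, eval x (f j) = 0) → ∀ c : Fin r → k,
        (∀ l, ∑ j, a j * ξ j l = ∑ j, c j * eval x (pderiv l (f j))) → ∑ l, ξ i l * x l = 0 := by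
  let R := MvPolynomial (Fin N) k
  let τ := Fin m ⊕ (Fin r ⊕ Unit)
  let xx : Fin m → MvPolynomial τ R := fun j => X (Sum.inl j)
  let p1 : Fin r → MvPolynomial τ R := fun j => aeval xx (f j)
  let p2 : Fin m → MvPolynomial τ R := fun l => ∑ j, C (X j * C (ξ j l)) -
    ∑ j, X (Sum.inr (Sum.inl j)) * aeval xx (pderiv l (f j))
  let p3 : MvPolynomial τ R := X (Sum.inr (Sum.inr ())) * (∑ l, C (C (ξ i l)) * X (Sum.inl l)) - 1
  obtain ⟨g, hg, hga⟩ := spec (k := k) (n := N) (τ := τ) (Set.range p1 ∪ Set.range p2 ∪ {p3}) (by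
    intro E _ _ _ z
    by_contra! hall
    letI : Algebra (MvPolynomial (Fin N) k) E :=
      ((algebraMap (FractionRing (MvPolynomial (Fin N) k)) E).comp
        (algebraMap (MvPolynomial (Fin N) k) _)).toAlgebra
    haveI : IsScalarTower (MvPolynomial (Fin N) k) (FractionRing (MvPolynomial (Fin N) k)) E :=
      IsScalarTower.of_algebraMap_eq fun _ => rfl
    letI : Algebra k E := ((algebraMap (MvPolynomial (Fin N) k) E).comp C).toAlgebra
    haveI : IsScalarTower k (MvPolynomial (Fin N) k) E := IsScalarTower.of_algebraMap_eq fun _ => rfl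
    obtain ⟨Dr, hDr⟩ := exists_deriv (k := k) (K := FractionRing (MvPolynomial (Fin N) k)) (E := E) i
    have hall : ∀ p ∈ Set.range p1 ∪ Set.range p2 ∪ {p3},
      eval₂ (algebraMap (MvPolynomial (Fin N) k) E) z p = 0 := hall
    let x : Fin m → E := fun j => z (Sum.inl j)
    let ψ : MvPolynomial (Fin m) k →ₐ[k] E := aeval x
    have hev : ∀ q : MvPolynomial (Fin m) k, eval₂ (algebraMap (MvPolynomial (Fin N) k) E) z (aeval xx q) = ψ q := by
      intro q
      exact eval₂_aeval_inl _ _ _ _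
    have e1 : ∀ j, ψ (f j) = 0 := fun j => by
      rw [← hev]
      exact hall _ (Or.inl (Or.inl ⟨j, rfl⟩))
    let A : Fin N → E := fun j => algebraMap (MvPolynomial (Fin N) k) E (X j)
    let ck : k → E := algebraMap k E
    have e2 : ∀ l, ∑ j, A j * ck (ξ j l) = ∑ j, z (Sum.inr (Sum.inl j)) * ψ (pderiv l (f j)) := fun l => by
      have := hall _ (Or.inl (Or.inr ⟨l, rfl⟩))
      simp only [p2, eval₂_sub, eval₂_sum, eval₂_mul, eval₂_X, eval₂_C, map_mul, hev, sub_eq_zero] at this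
      exact this
    have e3 : z (Sum.inr (Sum.inr ())) * ∑ l, ck (ξ i l) * x l = 1 := by
      have := hall _ (Or.inr rfl)
      simp only [p3, eval₂_sub, eval₂_sum, eval₂_mul, eval₂_X, eval₂_C, eval₂_one, sub_eq_zero] at this
      exact this
    have e4 : ∑ l, (∑ j, A j * ck (ξ j l)) * x l = 0 := by
      simp only [e2, Finset.sum_mul]
      rw [Finset.sum_comm]
      refine Finset.sum_eq_zero fun j _ => ?_
      obtain ⟨M, hM⟩ := hf j
      have h1 := congrArg ψ hM.sum_X_mul_pderiv
      rw [map_nsmul, e1, smul_zero, map_sum] at h1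
      rw [← mul_zero (z (Sum.inr (Sum.inl j))), ← h1, Finset.mul_sum]
      refine Finset.sum_congr rfl fun l _ => ?_
      rw [map_mul]
      have : ψ (X l) = x l := aeval_X _ _
      rw [this]
      ring
    have hDA : ∀ j, Dr (A j) = if j = i then 1 else 0 := by
      intro j
      simp only [A]
      rw [hDr, pderiv_X, Pi.single_apply]
      split_ifs <;> simp
    have hDc : ∀ c, Dr (ck c) = 0 := fun c => Dr.map_algebraMap c
    have e5 := congrArg Dr e4
    have e6 : ∀ j, ∑ l, ψ (pderiv l (f j)) * Dr (x l) = 0 := by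
      intro j
      have h1 := chain_rule Dr ψ (f j)
      rw [e1, map_zero] at h1
      rw [h1]
      refine Finset.sum_congr rfl fun l _ => ?_
      have : ψ (X l) = x l := aeval_X _ _
      rw [this]
    have e7 : ∑ l, (∑ j, A j * ck (ξ j l)) * Dr (x l) = 0 := by
      simp only [e2, Finset.sum_mul]
      rw [Finset.sum_comm]
      refine Finset.sum_eq_zero fun j _ => ?_
      rw [← mul_zero (z (Sum.inr (Sum.inl j))), ← e6 j, Finset.mul_sum]
      refine Finset.sum_congr rfl fun l _ => by ring
    have e8 : ∀ l, Dr (∑ j, A j * ck (ξ j l)) = ck (ξ i l) := by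
      intro l
      simp [hDA, hDc]
    simp only [map_sum, map_zero] at e5
    have e9 : ∑ l, ck (ξ i l) * x l = 0 := by
      rw [← e5]
      rw [← add_zero (∑ l, ck (ξ i l) * x l), ← e7, ← Finset.sum_add_distrib]
      refine Finset.sum_congr rfl fun l _ => ?_
      rw [Derivation.leibniz, e8, smul_eq_mul, smul_eq_mul]
      ring
    rw [e9, mul_zero] at e3
    exact zero_ne_one e3)
  refine ⟨g, hg, fun a ha x hx c hc => ?_⟩
  by_contra hne
  obtain ⟨p, hp, hp0⟩ := hga a ha (Sum.elim x (Sum.elim c fun _ => (∑ l, ξ i l * x l)⁻¹))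
  apply hp0
  have hev : ∀ q : MvPolynomial (Fin m) k, eval₂ (eval a) (Sum.elim x (Sum.elim c fun _ => (∑ l, ξ i l * x l)⁻¹)) (aeval xx q) = eval x q := by
    intro q
    rw [eval₂_aeval_inl]
    have : (eval a).comp (algebraMap k (MvPolynomial (Fin N) k)) = RingHom.id k := by
      ext c
      simp [MvPolynomial.algebraMap_eq]
    rw [this]
    rfl
  rcases hp with (⟨j, rfl⟩ | ⟨l, rfl⟩) | rfl
  · rw [hev, hx]
  · simp only [p2, eval₂_sub, eval₂_sum, eval₂_mul, eval₂_X, eval₂_C, map_mul, hev, sub_eq_zero]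
    simpa using hc l
  · simp only [p3, eval₂_sub, eval₂_sum, eval₂_mul, eval₂_X, eval₂_C, eval₂_one, sub_eq_zero]
    simpa using inv_mul_cancel₀ hne

end Bert

-- Part F
namespace Bert
open IsLocalRing

theorem quot_dim_aux {R : Type} [CommRing R] [IsNoetherianRing R] [IsLocalRing R] (x : R)
    (p : Ideal R) [p.IsPrime] (hx : x ∈ maximalIdeal R) (hdom : IsDomain (R ⧸ Ideal.span {x})) (d : ℕ)
    (h1 : ((d + 1 : ℕ) : WithBot ℕ∞) ≤ ringKrullDim (R ⧸ p))
    (h2 : ringKrullDim (R ⧸ Ideal.span {x}) ≤ d) : p ≤ Ideal.span {x} := by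
  intro u hu
  by_contra hux
  let xb : R ⧸ p := Ideal.Quotient.mk p x
  haveI : IsLocalRing (R ⧸ p) := IsLocalRing.of_surjective' _ Ideal.Quotient.mk_surjective
  haveI : IsLocalHom (Ideal.Quotient.mk p) := IsLocalHom.of_surjective _ Ideal.Quotient.mk_surjective
  have hxb : xb ∈ maximalIdeal (R ⧸ p) := by
    rw [mem_maximalIdeal] at hx ⊢
    intro hc
    exact hx ((isUnit_map_iff (Ideal.Quotient.mk p) x).1 hc)
  have e1 : ringKrullDim (R ⧸ p) ≤ ringKrullDim ((R ⧸ p) ⧸ Ideal.span {xb}) + 1 := by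
    have := ringKrullDim_le_ringKrullDim_quotient_add_encard ({xb} : Set (R ⧸ p)) (by
      rw [IsLocalRing.ringJacobson_eq_maximalIdeal]
      simpa using hxb)
    simpa using this
  let ub : R ⧸ Ideal.span {x} := Ideal.Quotient.mk _ u
  have hub : ub ≠ 0 := fun h => hux (Ideal.Quotient.eq_zero_iff_mem.1 h)
  have e2 := ringKrullDim_quotient_succ_le_of_nonZeroDivisor (mem_nonZeroDivisors_of_ne_zero hub)
  let q : R →+* (R ⧸ p) ⧸ Ideal.span {xb} := (Ideal.Quotient.mk _).comp (Ideal.Quotient.mk p)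
  have hq : Function.Surjective q := Ideal.Quotient.mk_surjective.comp Ideal.Quotient.mk_surjective
  have hqx : q x = 0 := Ideal.Quotient.eq_zero_iff_mem.2 (Ideal.mem_span_singleton_self xb)
  have hqu : q u = 0 := by
    change Ideal.Quotient.mk _ (Ideal.Quotient.mk p u) = 0
    rw [Ideal.Quotient.eq_zero_iff_mem.2 hu, map_zero]
  let q1 : (R ⧸ Ideal.span {x}) →+* (R ⧸ p) ⧸ Ideal.span {xb} := Ideal.Quotient.lift _ q (by
    intro a ha
    obtain ⟨b, rfl⟩ := Ideal.mem_span_singleton'.1 ha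
    rw [map_mul, hqx, mul_zero])
  have hq1 : Function.Surjective q1 := Ideal.Quotient.lift_surjective_of_surjective _ _ hq
  let q2 : ((R ⧸ Ideal.span {x}) ⧸ Ideal.span {ub}) →+* (R ⧸ p) ⧸ Ideal.span {xb} :=
    Ideal.Quotient.lift _ q1 (by
      intro a ha
      obtain ⟨b, rfl⟩ := Ideal.mem_span_singleton'.1 ha
      have : q1 ub = 0 := hqu
      rw [map_mul, this, mul_zero])
  have hq2 : Function.Surjective q2 := Ideal.Quotient.lift_surjective_of_surjective _ _ hq1
  have e3 := ringKrullDim_le_of_surjective q2 hq2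
  have e4 : ((d + 1 : ℕ) : WithBot ℕ∞) ≤ d := calc
    _ ≤ _ := h1
    _ ≤ _ := e1
    _ ≤ ringKrullDim ((R ⧸ Ideal.span {x}) ⧸ Ideal.span {ub}) + 1 := by gcongr
    _ ≤ _ := e2
    _ ≤ _ := h2
  have : d + 1 ≤ d := by exact_mod_cast e4
  omega

theorem regular_domain (d : ℕ) : ∀ (R : Type) [CommRing R] [IsNoetherianRing R] [IsLocalRing R]
    (x : Fin d → R), Ideal.span (Set.range x) = maximalIdeal R →
    (d : WithBot ℕ∞) ≤ ringKrullDim R → IsDomain R := by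
  induction d with
  | zero =>
    intro R _ _ _ x hx _
    have : maximalIdeal R = ⊥ := by
      rw [← hx, Set.range_eq_empty, Ideal.span_empty]
    exact (IsLocalRing.isField_iff_maximalIdeal_eq.2 this).isDomain
  | succ d ih =>
    intro R _ _ _ x hx hdim
    obtain ⟨l, hl⟩ := Order.le_krullDim_iff.1 hdim
    let p : Ideal R := l.head.asIdeal
    have hp : p.IsPrime := l.head.isPrime
    have h1 : ((d + 1 : ℕ) : WithBot ℕ∞) ≤ ringKrullDim (R ⧸ p) := by
      rw [ringKrullDim_quotient, Order.le_krullDim_iff]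
      refine ⟨⟨l.length, fun i => ⟨l i, ?_⟩, fun i => l.step i⟩, hl⟩
      have : l.head ≤ l i := LTSeries.head_le l i
      exact this
    have hex : ∃ i, x i ∉ p := by
      by_contra! hall
      have hm : p = maximalIdeal R := by
        apply le_antisymm (IsLocalRing.le_maximalIdeal hp.ne_top)
        rw [← hx, Ideal.span_le]
        rintro _ ⟨i, rfl⟩
        exact hall i
      have : p.IsMaximal := hm ▸ inferInstance
      letI := Ideal.Quotient.field p
      rw [ringKrullDim_eq_zero_of_field] at h1
      have : d + 1 ≤ 0 := by exact_mod_cast h1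
      omega
    obtain ⟨i, hi⟩ := hex
    have hxm : ∀ j, x j ∈ maximalIdeal R := fun j => hx ▸ Ideal.subset_span ⟨j, rfl⟩
    have hne : Ideal.span {x i} ≠ ⊤ := by
      intro h
      have := (Ideal.span_singleton_le_iff_mem (I := maximalIdeal R)).2 (hxm i)
      rw [h, top_le_iff] at this
      exact Ideal.IsPrime.ne_top' this
    haveI : Nontrivial (R ⧸ Ideal.span {x i}) := Ideal.Quotient.nontrivial_iff.2 hne
    haveI : IsLocalRing (R ⧸ Ideal.span {x i}) :=
      IsLocalRing.of_surjective' _ Ideal.Quotient.mk_surjective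
    have hgen : Ideal.span (Set.range fun j : Fin d => Ideal.Quotient.mk (Ideal.span {x i}) (x (i.succAbove j)))
        = maximalIdeal (R ⧸ Ideal.span {x i}) := by
      have e1 : (maximalIdeal R).map (Ideal.Quotient.mk (Ideal.span {x i})) =
          maximalIdeal (R ⧸ Ideal.span {x i}) := by
        rcases Ideal.map_eq_top_or_isMaximal_of_surjective (Ideal.Quotient.mk (Ideal.span {x i}))
          Ideal.Quotient.mk_surjective (I := maximalIdeal R) inferInstance with h | h
        · exfalso
          have h2 := congrArg (Ideal.comap (Ideal.Quotient.mk (Ideal.span {x i}))) h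
          rw [Ideal.comap_map_of_surjective _ Ideal.Quotient.mk_surjective, ← RingHom.ker_eq_comap_bot,
            Ideal.mk_ker, Ideal.comap_top, sup_eq_left.2] at h2
          · exact Ideal.IsPrime.ne_top' h2
          · exact (Ideal.span_singleton_le_iff_mem _).2 (hxm i)
        · exact IsLocalRing.eq_maximalIdeal h
      rw [← e1, ← hx, Ideal.map_span]
      apply le_antisymm
      · apply Ideal.span_mono
        rintro _ ⟨j, rfl⟩
        exact ⟨_, ⟨_, rfl⟩, rfl⟩
      · rw [Ideal.span_le]
        rintro _ ⟨_, ⟨j, rfl⟩, rfl⟩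
        rcases Fin.eq_self_or_eq_succAbove i j with h | ⟨l, rfl⟩
        · subst h
          rw [Ideal.Quotient.eq_zero_iff_mem.2 (Ideal.mem_span_singleton_self _)]
          exact zero_mem _
        · exact Ideal.subset_span ⟨l, rfl⟩
    have hd1 : (d : WithBot ℕ∞) ≤ ringKrullDim (R ⧸ Ideal.span {x i}) := by
      have := ringKrullDim_le_ringKrullDim_quotient_add_encard ({x i} : Set R) (by
        rw [IsLocalRing.ringJacobson_eq_maximalIdeal]
        simpa using hxm i)
      have h3 := hdim.trans this
      simp only [Set.encard_singleton, Nat.cast_add, Nat.cast_one, WithBot.coe_one] at h3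
      exact ENat.WithBot.add_le_add_one_right_iff.1 h3
    have hdom := ih (R ⧸ Ideal.span {x i}) _ hgen hd1
    have hd2 : ringKrullDim (R ⧸ Ideal.span {x i}) ≤ d := by
      refine (ringKrullDim_le_spanFinrank_maximalIdeal _).trans ?_
      rw [← hgen]
      have h4 := Submodule.spanFinrank_span_le_ncard_of_finite (R := R ⧸ Ideal.span {x i})
        (Set.finite_range fun j : Fin d => Ideal.Quotient.mk (Ideal.span {x i}) (x (i.succAbove j)))
      have h5 : (Set.range fun j : Fin d => Ideal.Quotient.mk (Ideal.span {x i}) (x (i.succAbove j))).ncard ≤ d := by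
        rw [← Set.image_univ]
        refine (Set.ncard_image_le Set.finite_univ).trans ?_
        rw [Set.ncard_univ]
        simp
      exact_mod_cast h4.trans h5
    have hple := quot_dim_aux (x i) p (hxm i) hdom d h1 hd2
    have hp0 : p = ⊥ := by
      apply Submodule.eq_bot_of_le_smul_of_le_jacobson_bot (maximalIdeal R) p (IsNoetherian.noetherian p)
      · intro u hu
        obtain ⟨w, rfl⟩ := Ideal.mem_span_singleton'.1 (hple hu)
        have hw : w ∈ p := (hp.mem_or_mem hu).resolve_right hi
        rw [mul_comm]
        exact Submodule.smul_mem_smul (hxm i) hw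
      · rw [IsLocalRing.jacobson_eq_maximalIdeal _ bot_ne_top]
    rw [hp0] at hp
    exact IsDomain.of_bot_isPrime R

end Bert

-- Part G
namespace Bert
open MvPolynomial
variable {k : Type} [Field k] {n : ℕ}

/-- the affine linear form with linear part `w` vanishing at `v` -/
noncomputable def affForm {m : ℕ} (v w : Fin m → k) : MvPolynomial (Fin m) k :=
  ∑ j, C (w j) * (X j - C (v j))

theorem affForm_mem {m : ℕ} (v w : Fin m → k) : affForm v w ∈ RingHom.ker (eval v) := by
  rw [RingHom.mem_ker, affForm, map_sum]
  apply Finset.sum_eq_zero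
  intro j _
  simp

theorem taylor {m : ℕ} (v : Fin m → k) (f : MvPolynomial (Fin m) k) :
    f - C (eval v f) - affForm v (fun j => eval v (pderiv j f)) ∈ (RingHom.ker (eval v)) ^ 2 := by
  induction f using MvPolynomial.induction_on with
  | C a => simp [affForm]
  | add p q hp hq =>
    have : p + q - C (eval v (p+q)) - affForm v (fun j => eval v (pderiv j (p+q))) =
      (p - C (eval v p) - affForm v (fun j => eval v (pderiv j p))) +
      (q - C (eval v q) - affForm v (fun j => eval v (pderiv j q))) := by
      simp only [affForm, map_add, add_mul, Finset.sum_add_distrib]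
      ring
    rw [this]
    exact add_mem hp hq
  | mul_X p i hp =>
    have h1 : affForm v (fun j => eval v (pderiv j (p * X i))) =
        C (v i) * affForm v (fun j => eval v (pderiv j p)) + C (eval v p) * (X i - C (v i)) := by
      have : ∀ j, C (eval v (pderiv j (p * X i))) * (X j - C (v j)) =
        C (v i) * (C (eval v (pderiv j p)) * (X j - C (v j))) +
          (if j = i then C (eval v p) * (X j - C (v j)) else 0) := by
        intro j
        rw [Derivation.leibniz, pderiv_X, Pi.single_apply]
        split_ifs with h1 h2 h2
        · simp only [smul_eq_mul, map_add, map_mul, eval_X, map_one]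
          ring
        · exact absurd h1.symm h2
        · exact absurd h2.symm h1
        · simp only [smul_eq_mul, map_add, map_mul, eval_X, map_zero]
          ring
      simp only [affForm, this, Finset.sum_add_distrib, Finset.mul_sum]
      simp
    have h2 : p * X i - C (eval v (p * X i)) - affForm v (fun j => eval v (pderiv j (p * X i))) =
        X i * (p - C (eval v p) - affForm v (fun j => eval v (pderiv j p))) +
        (X i - C (v i)) * affForm v (fun j => eval v (pderiv j p)) := by
      rw [h1]
      simp only [map_mul, eval_X]
      ring
    rw [h2]
    refine add_mem (Ideal.mul_mem_left _ _ hp) ?_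
    rw [pow_two]
    exact Ideal.mul_mem_mul (by simp [RingHom.mem_ker]) (affForm_mem v _)

theorem affForm_add {m : ℕ} (v w w' : Fin m → k) : affForm v (w + w') = affForm v w + affForm v w' := by
  simp [affForm, add_mul, Finset.sum_add_distrib]

theorem affForm_smul {m : ℕ} (v w : Fin m → k) (c : k) : affForm v (c • w) = C c * affForm v w := by
  simp [affForm, Finset.mul_sum, mul_assoc]

theorem unique_min {m e : ℕ} {B : Type} [CommRing B] [IsNoetherianRing B]
    (π : MvPolynomial (Fin m) k →+* B) (hπ : Function.Surjective π) (M : Ideal B) [hM : M.IsPrime]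
    (v : Fin m → k) (hMv : M.comap π = RingHom.ker (eval v))
    (hr : m ≤ Module.finrank k (gradSpan (RingHom.ker π) v) + e)
    (hh : (e : ℕ∞) ≤ M.height) :
    ∃ K : Ideal B, K.IsPrime ∧ K ≤ M ∧ ∀ q : Ideal B, q.IsPrime → q ≤ M → K ≤ q := by
  let R := Localization.AtPrime M
  obtain ⟨W, hW⟩ := Submodule.exists_isCompl (gradSpan (RingHom.ker π) v)
  have hWf : Module.finrank k (gradSpan (RingHom.ker π) v) + Module.finrank k W = m := by
    have := Submodule.finrank_add_eq_of_isCompl hW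
    simpa using this
  let b := Module.finBasis k W
  let ψ : MvPolynomial (Fin m) k →+* R := (algebraMap B R).comp π
  let x : Fin (Module.finrank k W) → R := fun i => ψ (affForm v (b i : Fin m → k))
  let J : Ideal R := Ideal.span (Set.range x)
  let mx := IsLocalRing.maximalIdeal R
  have hmx : mx = (RingHom.ker (eval v)).map ψ := by
    rw [← Ideal.map_map, ← hMv, Ideal.map_comap_of_surjective π hπ,
      Localization.AtPrime.map_eq_maximalIdeal]
  have hmem : ∀ f ∈ RingHom.ker (eval v), ψ f ∈ mx := fun f hf => by
    rw [hmx]; exact Ideal.mem_map_of_mem ψ hf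
  have hmem2 : ∀ f ∈ (RingHom.ker (eval v)) ^ 2, ψ f ∈ mx ^ 2 := fun f hf => by
    rw [hmx, ← Ideal.map_pow]; exact Ideal.mem_map_of_mem ψ hf
  have hJ : J ≤ mx := by
    rw [Ideal.span_le]
    rintro _ ⟨i, rfl⟩
    exact hmem _ (affForm_mem v _)
  have hgr : ∀ w ∈ gradSpan (RingHom.ker π) v, ψ (affForm v w) ∈ mx ^ 2 := by
    intro w hw
    induction hw using Submodule.span_induction with
    | mem w hw =>
      obtain ⟨f, hf, rfl⟩ := hw
      have hf0 : eval v f = 0 := by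
        have : f ∈ M.comap π := by
          rw [Ideal.mem_comap, RingHom.mem_ker.1 hf]
          exact zero_mem _
        rw [hMv] at this
        exact this
      have hψf : ψ f = 0 := by
        change algebraMap B R (π f) = 0
        rw [RingHom.mem_ker.1 hf, map_zero]
      have h1 := hmem2 _ (taylor v f)
      rw [hf0, map_zero, sub_zero, map_sub, hψf, zero_sub] at h1
      exact neg_mem_iff.1 h1
    | zero => 
      have : affForm v (0 : Fin m → k) = 0 := by simp [affForm]
      rw [this, map_zero]; exact zero_mem _
    | add a b _ _ ha hb => rw [affForm_add, map_add]; exact add_mem ha hb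
    | smul c a _ ha => rw [affForm_smul, map_mul]; exact Ideal.mul_mem_left _ _ ha
  have hWm : ∀ w ∈ W, ψ (affForm v w) ∈ J := by
    intro w hw
    have h1 := b.sum_repr ⟨w, hw⟩
    have h2 : w = ∑ i, b.repr ⟨w, hw⟩ i • (b i : Fin m → k) := by
      have := congrArg W.subtype h1
      rw [map_sum] at this
      exact this.symm
    rw [h2]
    have h3 : ∀ (s : Finset (Fin (Module.finrank k W))),
        ψ (affForm v (∑ i ∈ s, b.repr ⟨w, hw⟩ i • (b i : Fin m → k))) ∈ J := by
      intro s
      induction s using Finset.induction_on with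
      | empty =>
        have : affForm v (0 : Fin m → k) = 0 := by simp [affForm]
        rw [Finset.sum_empty, this, map_zero]; exact zero_mem _
      | insert a s ha ih =>
        rw [Finset.sum_insert ha, affForm_add, affForm_smul, map_add, map_mul]
        exact add_mem (Ideal.mul_mem_left _ _ (Ideal.subset_span ⟨a, rfl⟩)) ih
    exact h3 _
  have hall : ∀ f ∈ RingHom.ker (eval v), ψ f ∈ J ⊔ mx ^ 2 := by
    intro f hf
    have h1 := hmem2 _ (taylor v f)
    rw [RingHom.mem_ker.1 hf, map_zero, sub_zero, map_sub] at h1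
    have h2 : ψ (affForm v (fun j => eval v (pderiv j f))) ∈ J ⊔ mx ^ 2 := by
      have : (fun j => eval v (pderiv j f)) ∈ gradSpan (RingHom.ker π) v ⊔ W := by
        rw [hW.sup_eq_top]; trivial
      obtain ⟨a, ha, c, hc, hac⟩ := Submodule.mem_sup.1 this
      rw [← hac, affForm_add, map_add]
      exact add_mem (Ideal.mem_sup_right (hgr a ha)) (Ideal.mem_sup_left (hWm c hc))
    have := add_mem (Ideal.mem_sup_right (S := J) h1) h2
    rwa [sub_add_cancel] at this
  have hle : mx ≤ J ⊔ mx • mx := by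
    rw [smul_eq_mul, ← pow_two]
    conv_lhs => rw [hmx]
    rw [Ideal.map_le_iff_le_comap]
    exact hall
  haveI : IsNoetherianRing R := IsLocalization.isNoetherianRing M.primeCompl R inferInstance
  have hJm : J = mx := by
    apply le_antisymm hJ
    apply Submodule.le_of_le_smul_of_le_jacobson_bot (IsNoetherian.noetherian mx) _ hle
    rw [IsLocalRing.jacobson_eq_maximalIdeal _ bot_ne_top]
  have hdim : ((Module.finrank k W : ℕ) : WithBot ℕ∞) ≤ ringKrullDim R := by
    rw [IsLocalization.AtPrime.ringKrullDim_eq_height M R]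
    have h1 : ((Module.finrank k W : ℕ) : ℕ∞) ≤ e := by
      have : Module.finrank k W ≤ e := by omega
      exact_mod_cast this
    exact_mod_cast h1.trans hh
  haveI : IsDomain R := regular_domain _ R x hJm hdim
  refine ⟨RingHom.ker (algebraMap B R), RingHom.ker_isPrime _, ?_, ?_⟩
  · intro b hb
    obtain ⟨s, hs⟩ := (IsLocalization.map_eq_zero_iff M.primeCompl R b).1 hb
    have : (s : B) * b ∈ M := by rw [hs]; exact zero_mem _
    exact (hM.mem_or_mem this).resolve_left s.2
  · intro q hq hqM b hb
    obtain ⟨s, hs⟩ := (IsLocalization.map_eq_zero_iff M.primeCompl R b).1 hb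
    have : (s : B) * b ∈ q := by rw [hs]; exact zero_mem _
    exact (hq.mem_or_mem this).resolve_left fun h => s.2 (hqM h)

/-- partial evaluation at the first `j` coordinates of `w` -/
noncomputable def epw {D : ℕ} (w : Fin D → k) (j : ℕ) : MvPolynomial (Fin D) k →ₐ[k] MvPolynomial (Fin D) k :=
  aeval (fun i => if i.val < j then C (w i) else X i)

theorem height_point {D : ℕ} (w : Fin D → k) : (D : ℕ∞) ≤ (RingHom.ker (eval w)).height := by
  let pr : Fin (D+1) → PrimeSpectrum (MvPolynomial (Fin D) k) := fun j =>
    ⟨RingHom.ker (epw w j.val).toRingHom, RingHom.ker_isPrime _⟩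
  have hle : ∀ j : ℕ, RingHom.ker (epw w j).toRingHom ≤ RingHom.ker (epw w (j+1)).toRingHom := by
    intro j f hf
    have : (epw w (j+1)).comp (epw w j) = epw w (j+1) := by
      apply MvPolynomial.algHom_ext
      intro i
      simp only [epw, AlgHom.comp_apply, aeval_X]
      split_ifs with h1 h2
      · simp
      · omega
      · simp only [aeval_X]; rw [if_pos (by assumption)]
      · simp only [aeval_X]; rw [if_neg (by assumption)]
    have hf' : epw w j f = 0 := hf
    change epw w (j+1) f = 0
    rw [← this, AlgHom.comp_apply, hf', map_zero]
  have hX : ∀ (j : ℕ) (i : Fin D), X i - C (w i) ∈ RingHom.ker (epw w j).toRingHom ↔ i.val < j := by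
    intro j i
    change epw w j (X i - C (w i)) = 0 ↔ _
    have hC : epw w j (C (w i)) = C (w i) := (epw w j).commutes (w i)
    rw [map_sub, hC]
    simp only [epw, aeval_X]
    split_ifs with h
    · simp [h]
    · simp only [h, iff_false]
      intro hc
      have := congrArg (eval (fun i => w i + 1)) hc
      simp at this
  have hmono : StrictMono pr := by
    rw [Fin.strictMono_iff_lt_succ]
    intro i
    change RingHom.ker (epw w i.val).toRingHom < RingHom.ker (epw w (i.val+1)).toRingHom
    refine lt_of_le_of_ne (hle _) fun h => ?_
    have h1 := (hX (i.val+1) i).2 (by omega)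
    rw [← h] at h1
    have := (hX i.val i).1 h1
    omega
  let l : LTSeries (PrimeSpectrum (MvPolynomial (Fin D) k)) := LTSeries.mk D pr hmono
  haveI : (RingHom.ker (eval w)).IsPrime := RingHom.ker_isPrime _
  have hlast : l.last ≤ ⟨RingHom.ker (eval w), inferInstance⟩ := by
    change RingHom.ker (epw w D).toRingHom ≤ _
    intro f hf
    have : (eval w).comp (epw w D).toRingHom = eval w := by
      apply MvPolynomial.ringHom_ext
      · intro r
        have hC : epw w D (C r) = C r := (epw w D).commutes r
        change eval w (epw w D (C r)) = _
        rw [hC]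
      · intro i
        change eval w (epw w D (X i)) = _
        simp [epw]
    rw [RingHom.mem_ker, ← this, RingHom.comp_apply, RingHom.mem_ker.1 hf, map_zero]
  have h1 := Order.length_le_height hlast
  have h2 := PrimeSpectrum.height_eq_orderHeight ⟨RingHom.ker (eval w), inferInstance⟩
  rw [h2]
  exact h1

end Bert

-- Part H
namespace Bert
open MvPolynomial
variable {k : Type} [Field k] {n : ℕ}

theorem gd_height {S B : Type} [CommRing S] [IsDomain S] [IsNoetherianRing S] [IsIntegrallyClosed S] [CommRing B] [IsDomain B]
    [IsNoetherianRing B] (φ : S →+* B) (inj : Function.Injective φ) (hIntg : φ.IsIntegral)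
    (q : Ideal B) [q.IsPrime] : (q.comap φ).height ≤ q.height := by
  letI := φ.toAlgebra
  haveI : Algebra.IsIntegral S B := ⟨hIntg⟩
  haveI : FaithfulSMul S B := (faithfulSMul_iff_algebraMap_injective S B).2 inj
  haveI : q.LiesOver (q.comap φ) := ⟨rfl⟩
  rw [Ideal.height_eq_height_add_of_liesOver_of_hasGoingDown (q.comap φ) q]
  exact le_self_add

theorem lemmaH {S B : Type} [CommRing S] [IsDomain S] [IsNoetherianRing S] [IsIntegrallyClosed S] [CommRing B] [IsDomain B]
    [IsNoetherianRing B] (φ : S →+* B) (inj : Function.Injective φ) (hIntg : φ.IsIntegral)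
    (b : B) (q : Ideal B) (hq : q ∈ (Ideal.span {b}).minimalPrimes) (p0 : Ideal S) [p0.IsPrime]
    (h0 : p0 ≠ ⊥) (hle : p0 ≤ q.comap φ) : p0 = q.comap φ := by
  haveI : q.IsPrime := hq.1.1
  by_contra hne
  have hlt : p0 < q.comap φ := lt_of_le_of_ne hle hne
  have h1 : q.height ≤ 1 := Ideal.height_le_one_of_isPrincipal_of_mem_minimalPrimes _ _ hq
  have h2 := (gd_height φ inj hIntg q).trans h1
  have h3 := Ideal.height_add_one_le_of_lt_of_isPrime hlt
  have h4 := Ideal.height_add_one_le_of_lt_of_isPrime (bot_lt_iff_ne_bot.2 h0)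
  have h5 : (1:ℕ∞) ≤ p0.height := le_trans (by simp) h4
  have h6 : (1:ℕ∞) + 1 ≤ 1 := (add_le_add_left h5 1).trans (h3.trans h2)
  exact absurd h6 (by decide)

theorem k5_aux {m e : ℕ} {A : Type} [CommRing A] [IsNoetherianRing A]
    (π : MvPolynomial (Fin m) k →+* A) (hπ : Function.Surjective π) (M : Ideal A) [hM : M.IsPrime]
    (v : Fin m → k) (hMv : M.comap π = RingHom.ker (eval v)) (h : MvPolynomial (Fin m) k)
    (hv : eval v h = 0)
    (hr : m ≤ Module.finrank k (gradSpan (RingHom.ker π ⊔ Ideal.span {h}) v) + e)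
    (hh : ((e + 1 : ℕ) : ℕ∞) ≤ M.height) :
    ∃ K : Ideal (MvPolynomial (Fin m) k), K.IsPrime ∧ RingHom.ker π ⊔ Ideal.span {h} ≤ K ∧
      K ≤ RingHom.ker (eval v) ∧ (∀ q : Ideal (MvPolynomial (Fin m) k), q.IsPrime →
        RingHom.ker π ⊔ Ideal.span {h} ≤ q → q ≤ RingHom.ker (eval v) → K ≤ q) ∧
      (e : WithBot ℕ∞) ≤ ringKrullDim (MvPolynomial (Fin m) k ⧸ K) := by
  let I0 : Ideal A := Ideal.span {π h}
  let ρ : MvPolynomial (Fin m) k →+* A ⧸ I0 := (Ideal.Quotient.mk I0).comp π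
  have hρ : Function.Surjective ρ := Ideal.Quotient.mk_surjective.comp hπ
  have hhM : π h ∈ M := by
    have : h ∈ M.comap π := by rw [hMv]; exact hv
    exact this
  have hI0 : I0 ≤ M := (Ideal.span_singleton_le_iff_mem _).2 hhM
  have hker : RingHom.ker ρ = RingHom.ker π ⊔ Ideal.span {h} := by
    have : RingHom.ker ρ = (I0).comap π := by
      rw [← RingHom.comap_ker, Ideal.mk_ker]
    rw [this]
    have h2 : I0 = (Ideal.span {h}).map π := by rw [Ideal.map_span, Set.image_singleton]
    rw [h2, Ideal.comap_map_of_surjective π hπ, sup_comm]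
    rfl
  let MB : Ideal (A ⧸ I0) := M.map (Ideal.Quotient.mk I0)
  have hMB : MB.comap (Ideal.Quotient.mk I0) = M := by
    rw [Ideal.comap_map_of_surjective _ Ideal.Quotient.mk_surjective, ← RingHom.ker_eq_comap_bot,
      Ideal.mk_ker, sup_eq_left.2 hI0]
  haveI : MB.IsPrime := by
    apply Ideal.map_isPrime_of_surjective Ideal.Quotient.mk_surjective
    rw [Ideal.mk_ker]; exact hI0
  have hMBv : MB.comap ρ = RingHom.ker (eval v) := by
    rw [← hMv, ← Ideal.comap_comap, hMB]
  have hht : (e : ℕ∞) ≤ MB.height := by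
    have h1 := hh.trans (Ideal.height_le_height_add_one_of_mem hhM)
    rw [Nat.cast_add, Nat.cast_one] at h1
    exact (ENat.add_le_add_iff_right (by simp)).1 h1
  rw [← hker] at hr
  obtain ⟨K, hK, hKM, hKu⟩ := unique_min ρ hρ MB v hMBv hr hht
  rw [← hker]
  have hu : ∀ q : Ideal (MvPolynomial (Fin m) k), q.IsPrime →
        RingHom.ker ρ ≤ q → q ≤ RingHom.ker (eval v) → K.comap ρ ≤ q := by
    intro q hq hkq hqv
    have h1 : (q.map ρ).comap ρ = q := by
      rw [Ideal.comap_map_of_surjective _ hρ, ← RingHom.ker_eq_comap_bot, sup_eq_left.2 hkq]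
    have h2 : (q.map ρ).IsPrime := Ideal.map_isPrime_of_surjective hρ hkq
    have h3 : q.map ρ ≤ MB := by
      rw [Ideal.map_le_iff_le_comap, hMBv]; exact hqv
    rw [← h1]
    exact Ideal.comap_mono (hKu _ h2 h3)
  refine ⟨K.comap ρ, Ideal.IsPrime.comap ρ, ?_, ?_, hu, ?_⟩
  · exact Ideal.ker_le_comap ρ
  · rw [← hMBv]; exact Ideal.comap_mono hKM
  · obtain ⟨l, hl, hlen⟩ := MB.exists_ltSeries_length_eq_height
    rw [← hlen] at hht
    have hht' : e ≤ l.length := by exact_mod_cast hht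
    rw [ringKrullDim_quotient]
    have hmem : ∀ i, PrimeSpectrum.comap ρ (l i) ∈ PrimeSpectrum.zeroLocus (K.comap ρ : Set (MvPolynomial (Fin m) k)) := by
      intro i
      have : l i ≤ l.last := l.monotone (Fin.le_last i)
      rw [hl] at this
      exact Ideal.comap_mono (hKu _ (l i).2 this)
    refine le_trans ?_ (Order.LTSeries.length_le_krullDim ⟨l.length, fun i => ⟨PrimeSpectrum.comap ρ (l i), hmem i⟩, ?_⟩)
    · exact_mod_cast hht'
    · intro i
      have h1 : l i.castSucc < l i.succ := l.step i
      refine lt_of_le_of_ne (Ideal.comap_mono h1.le) fun h => h1.ne ?_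
      exact PrimeSpectrum.comap_injective_of_surjective ρ hρ (PrimeSpectrum.ext h)

theorem height_LN {m : ℕ} {I : Ideal (MvPolynomial (Fin m) k)} [I.IsPrime]
    {D : ℕ} {y : Fin D → MvPolynomial (Fin m) k} (hy : LN I y) (v : Fin m → k)
    (M : Ideal (MvPolynomial (Fin m) k ⧸ I)) [M.IsPrime]
    (hM : M.comap (Ideal.Quotient.mk I) = RingHom.ker (eval v)) : (D : ℕ∞) ≤ M.height := by
  refine le_trans ?_ (gd_height (lnMap I y).toRingHom hy.inj hy.int M)
  have : M.comap (lnMap I y).toRingHom = RingHom.ker (eval (fun i => eval v (y i))) := by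
    have h1 : M.comap (lnMap I y).toRingHom = (M.comap (Ideal.Quotient.mk I)).comap (aeval y : _ →ₐ[k] _).toRingHom := rfl
    rw [h1, hM, RingHom.comap_ker]
    congr 1
    apply MvPolynomial.ringHom_ext
    · intro r; simp
    · intro i; simp
  rw [this]
  exact height_point _

theorem k5 {m e : ℕ} {I : Ideal (MvPolynomial (Fin m) k)} [I.IsPrime]
    {y : Fin (e+1) → MvPolynomial (Fin m) k} (hy : LN I y) (v : Fin m → k)
    (hI : I ≤ RingHom.ker (eval v)) (h : MvPolynomial (Fin m) k) (hv : eval v h = 0)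
    (hr : m ≤ Module.finrank k (gradSpan (I ⊔ Ideal.span {h}) v) + e) :
    ∃ K : Ideal (MvPolynomial (Fin m) k), K.IsPrime ∧ I ⊔ Ideal.span {h} ≤ K ∧
      K ≤ RingHom.ker (eval v) ∧ (∀ q : Ideal (MvPolynomial (Fin m) k), q.IsPrime →
        I ⊔ Ideal.span {h} ≤ q → q ≤ RingHom.ker (eval v) → K ≤ q) ∧
      (e : WithBot ℕ∞) ≤ ringKrullDim (MvPolynomial (Fin m) k ⧸ K) := by
  haveI : (RingHom.ker (eval v)).IsPrime := RingHom.ker_isPrime _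
  let M : Ideal (MvPolynomial (Fin m) k ⧸ I) := (RingHom.ker (eval v)).map (Ideal.Quotient.mk I)
  have hM : M.comap (Ideal.Quotient.mk I) = RingHom.ker (eval v) := by
    rw [Ideal.comap_map_of_surjective _ Ideal.Quotient.mk_surjective, ← RingHom.ker_eq_comap_bot,
      Ideal.mk_ker, sup_eq_left.2 hI]
  haveI : M.IsPrime := by
    apply Ideal.map_isPrime_of_surjective Ideal.Quotient.mk_surjective
    rw [Ideal.mk_ker]; exact hI
  have := k5_aux (e := e) (Ideal.Quotient.mk I) Ideal.Quotient.mk_surjective M v hM h hv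
    (by rw [Ideal.mk_ker]; exact hr) (height_LN hy v M hM)
  rwa [Ideal.mk_ker] at this

end Bert

-- Part I
namespace Bert
open MvPolynomial
variable {k : Type} [Field k] {n : ℕ}

/-- substitution solving `∑ a_i ξ_i = 0` for `a_j` -/
noncomputable def PhiSub {A L : Type} [CommRing A] [Field L] [Algebra A L] (ξ : Fin n → A)
    (j : Fin n) : MvPolynomial (Fin n) A →+* MvPolynomial (Fin n) L :=
  eval₂Hom (C.comp (algebraMap A L)) (fun i => if i = j then
    - ∑ i ∈ Finset.univ.erase j, C (algebraMap A L (ξ i) / algebraMap A L (ξ j)) * X i else X i)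

theorem PhiSub_C {A L : Type} [CommRing A] [Field L] [Algebra A L] (ξ : Fin n → A)
    (j : Fin n) (a : A) : PhiSub (L := L) ξ j (C a) = C (algebraMap A L a) := by
  simp [PhiSub]

theorem PhiSub_X_ne {A L : Type} [CommRing A] [Field L] [Algebra A L] (ξ : Fin n → A)
    (j i : Fin n) (h : i ≠ j) : PhiSub (L := L) ξ j (X i) = X i := by
  simp [PhiSub, h]

theorem PhiSub_rest {A L : Type} [CommRing A] [Field L] [Algebra A L] (ξ : Fin n → A)
    (j : Fin n) : PhiSub (L := L) ξ j (∑ i ∈ Finset.univ.erase j, C (ξ i) * X i) =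
      ∑ i ∈ Finset.univ.erase j, C (algebraMap A L (ξ i)) * X i := by
  rw [map_sum]
  refine Finset.sum_congr rfl fun i hi => ?_
  rw [map_mul, PhiSub_C, PhiSub_X_ne _ _ _ (Finset.ne_of_mem_erase hi)]

theorem PhiSub_h {A L : Type} [CommRing A] [Field L] [Algebra A L] (ξ : Fin n → A)
    (j : Fin n) (hj : algebraMap A L (ξ j) ≠ 0) : PhiSub (L := L) ξ j (∑ i, C (ξ i) * X i) = 0 := by
  rw [← Finset.add_sum_erase _ _ (Finset.mem_univ j), map_add, PhiSub_rest, map_mul, PhiSub_C]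
  have : PhiSub (L := L) ξ j (X j) =
    - ∑ i ∈ Finset.univ.erase j, C (algebraMap A L (ξ i) / algebraMap A L (ξ j)) * X i := by
    simp [PhiSub]
  rw [this, mul_neg, Finset.mul_sum, neg_add_eq_zero]
  refine Finset.sum_congr rfl fun i hi => ?_
  rw [← mul_assoc, ← C_mul, mul_div_cancel₀ _ hj]

theorem PhiSub_ker {A L : Type} [CommRing A] [Field L] [Algebra A L]
    (hinj : Function.Injective (algebraMap A L)) (ξ : Fin n → A)
    (j : Fin n) (hj : ξ j ≠ 0) (u : MvPolynomial (Fin n) A) (hu : PhiSub (L := L) ξ j u = 0) :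
    ∃ N : ℕ, C (ξ j) ^ N * u ∈ Ideal.span {∑ i, C (ξ i) * X i} := by
  have hj' : algebraMap A L (ξ j) ≠ 0 := by
    rw [Ne, map_eq_zero_iff _ hinj]; exact hj
  have key : ∀ u : MvPolynomial (Fin n) A, ∃ (N : ℕ) (w : MvPolynomial (Fin n) A),
      C (ξ j) ^ N * u - w ∈ Ideal.span {∑ i, C (ξ i) * X i} ∧
      PhiSub (L := L) ξ j w = map (algebraMap A L) w := by
    intro u
    induction u using MvPolynomial.induction_on with
    | C a => exact ⟨0, C a, by simp, by rw [PhiSub_C, map_C]⟩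
    | add p q hp hq =>
      obtain ⟨N, w, h1, h2⟩ := hp
      obtain ⟨N', w', h1', h2'⟩ := hq
      refine ⟨N + N', C (ξ j) ^ N' * w + C (ξ j) ^ N * w', ?_, ?_⟩
      · have : C (ξ j) ^ (N + N') * (p + q) - (C (ξ j) ^ N' * w + C (ξ j) ^ N * w') =
          C (ξ j) ^ N' * (C (ξ j) ^ N * p - w) + C (ξ j) ^ N * (C (ξ j) ^ N' * q - w') := by ring
        rw [this]
        exact add_mem (Ideal.mul_mem_left _ _ h1) (Ideal.mul_mem_left _ _ h1')
      · simp only [map_add, map_mul, map_pow, h2, h2', PhiSub_C, map_C]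
    | mul_X p i hp =>
      obtain ⟨N, w, h1, h2⟩ := hp
      by_cases hij : i = j
      · subst hij
        refine ⟨N + 1, - (w * ∑ l ∈ Finset.univ.erase i, C (ξ l) * X l), ?_, ?_⟩
        · have : C (ξ i) ^ (N + 1) * (p * X i) - -(w * ∑ l ∈ Finset.univ.erase i, C (ξ l) * X l) =
              C (ξ i) ^ N * p * (∑ l, C (ξ l) * X l) -
              (∑ l ∈ Finset.univ.erase i, C (ξ l) * X l) * (C (ξ i) ^ N * p - w) := by
            rw [← Finset.add_sum_erase _ _ (Finset.mem_univ i)]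
            ring
          rw [this]
          exact sub_mem (Ideal.mul_mem_left _ _ (Ideal.mem_span_singleton_self _)) (Ideal.mul_mem_left _ _ h1)
        · rw [map_neg, map_mul, PhiSub_rest, h2, map_neg, map_mul, map_sum]
          simp
      · refine ⟨N, w * X i, ?_, ?_⟩
        · have : C (ξ j) ^ N * (p * X i) - w * X i = X i * (C (ξ j) ^ N * p - w) := by ring
          rw [this]
          exact Ideal.mul_mem_left _ _ h1
        · rw [map_mul, PhiSub_X_ne _ _ _ hij, h2, map_mul, map_X]
  obtain ⟨N, w, h1, h2⟩ := key u
  refine ⟨N, ?_⟩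
  have h3 : PhiSub (L := L) ξ j (C (ξ j) ^ N * u - w) = 0 := by
    obtain ⟨c, hc⟩ := Ideal.mem_span_singleton'.1 h1
    rw [← hc, map_mul, PhiSub_h ξ j hj', mul_zero]
  rw [map_sub, map_mul, hu, mul_zero, zero_sub, neg_eq_zero, h2] at h3
  have h4 : w = 0 := map_injective _ hinj (by rw [h3, map_zero])
  rwa [h4, sub_zero] at h1

noncomputable def theta {A : Type} [CommRing A] [Algebra k A] (n : ℕ) {D : ℕ}
    (φ : MvPolynomial (Fin D) k →ₐ[k] A) :
    MvPolynomial (Fin D) (MvPolynomial (Fin n) k) →+* MvPolynomial (Fin n) A :=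
  eval₂Hom (map (algebraMap k A)) (fun i => C (φ (X i)))

theorem theta_mapC {A : Type} [CommRing A] [Algebra k A] (n : ℕ) {D : ℕ}
    (φ : MvPolynomial (Fin D) k →ₐ[k] A) :
    (theta n φ).comp (map C) = C.comp φ.toRingHom := by
  apply MvPolynomial.ringHom_ext
  · intro r
    have : φ (C r) = algebraMap k A r := φ.commutes r
    simp [theta, this]
  · intro i
    simp [theta]

theorem theta_eval {A : Type} [CommRing A] [Algebra k A] (n : ℕ) {D : ℕ}
    (φ : MvPolynomial (Fin D) k →ₐ[k] A) (a : Fin n → k) :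
    (eval (fun i => algebraMap k A (a i))).comp (theta n φ) = φ.toRingHom.comp (map (eval a)) := by
  apply MvPolynomial.ringHom_ext
  · intro r
    have h1 : φ (C (eval a r)) = algebraMap k A (eval a r) := φ.commutes _
    simp only [theta, RingHom.comp_apply, coe_eval₂Hom, eval₂_C, map_C, AlgHom.toRingHom_eq_coe, RingHom.coe_coe, h1]
    rw [eval_map]
    exact eval₂_comp_left (algebraMap k A) (RingHom.id k) a r |>.symm
  · intro i
    simp [theta]

theorem theta_integral {A : Type} [CommRing A] [Algebra k A] (n : ℕ) {D : ℕ}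
    (φ : MvPolynomial (Fin D) k →ₐ[k] A) (hφ : φ.toRingHom.IsIntegral) :
    (theta n φ).IsIntegral := by
  intro u
  induction u using MvPolynomial.induction_on with
  | C a =>
    obtain ⟨p, hp, hp0⟩ := hφ a
    refine ⟨p.map (map C), hp.map _, ?_⟩
    rw [Polynomial.eval₂_map, theta_mapC]
    have := Polynomial.hom_eval₂ p φ.toRingHom (C : A →+* MvPolynomial (Fin n) A) a
    rw [← this, hp0, map_zero]
  | add p q hp hq => exact RingHom.IsIntegralElem.add _ hp hq
  | mul_X p i hp =>
    refine RingHom.IsIntegralElem.mul _ hp ?_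
    have : (X i : MvPolynomial (Fin n) A) = theta n φ (C (X i)) := by simp [theta]
    rw [this]
    exact RingHom.isIntegralElem_map _

theorem k1 {A : Type} [CommRing A] [IsDomain A] [Algebra k A] {D : ℕ}
    (φ : MvPolynomial (Fin D) k →ₐ[k] A) (hφ : φ.toRingHom.IsIntegral) (ξ : Fin n → A)
    (j0 : Fin n) (hj0 : ξ j0 ≠ 0) :
    ∃ F : MvPolynomial (Fin D) (MvPolynomial (Fin n) k), Prime F ∧
      ∀ (a : Fin n → k) (j : Fin n), ∃ N : ℕ,
        ξ j ^ N * φ (map (eval a) F) ∈ Ideal.span {∑ i, algebraMap k A (a i) * ξ i} := by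
  let L := FractionRing A
  have hinj : Function.Injective (algebraMap A L) := IsFractionRing.injective A L
  have hj' : ∀ j, ξ j ≠ 0 → algebraMap A L (ξ j) ≠ 0 := fun j hj => by
    rw [Ne, map_eq_zero_iff _ hinj]; exact hj
  let h : MvPolynomial (Fin n) A := ∑ i, C (ξ i) * X i
  have hh : h ≠ 0 := by
    intro h0
    have := congrArg (eval (Pi.single j0 1)) h0
    simp only [h, map_sum, map_mul, eval_C, eval_X, map_zero, Pi.single_apply, mul_ite, mul_one, mul_zero,
      Finset.sum_ite_eq', Finset.mem_univ, if_true] at this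
    exact hj0 this
  let 𝔭 : Ideal (MvPolynomial (Fin D) (MvPolynomial (Fin n) k)) :=
    (RingHom.ker (PhiSub (L := L) ξ j0)).comap (theta n φ)
  have hpr : 𝔭.IsPrime := by
    haveI : (RingHom.ker (PhiSub (L := L) ξ j0)).IsPrime := RingHom.ker_isPrime _
    exact Ideal.IsPrime.comap _
  have hne : 𝔭 ≠ ⊥ := by
    letI := (theta n φ).toAlgebra
    exact Ideal.comap_ne_bot_of_integral_mem hh
      (show h ∈ RingHom.ker (PhiSub (L := L) ξ j0) from PhiSub_h ξ j0 (hj' _ hj0)) (theta_integral n φ hφ h)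
  obtain ⟨F, hF, hFp⟩ := Ideal.IsPrime.exists_mem_prime_of_ne_bot hpr hne
  refine ⟨F, hFp, ?_⟩
  have hF0 : PhiSub (L := L) ξ j0 (theta n φ F) = 0 := hF
  obtain ⟨N0, hN0⟩ := PhiSub_ker hinj ξ j0 hj0 _ hF0
  have hFj : ∀ j, ∃ N : ℕ, C (ξ j) ^ N * theta n φ F ∈ Ideal.span {h} := by
    intro j
    by_cases hj : ξ j = 0
    · exact ⟨1, by simp [hj]⟩
    · apply PhiSub_ker hinj ξ j hj
      obtain ⟨c, hc⟩ := Ideal.mem_span_singleton'.1 hN0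
      have h1 := congrArg (PhiSub (L := L) ξ j) hc
      rw [map_mul, PhiSub_h ξ j (hj' _ hj), mul_zero, map_mul, map_pow, PhiSub_C] at h1
      have h2 : (C (algebraMap A L (ξ j0)) : MvPolynomial (Fin n) L) ^ N0 ≠ 0 := by
        apply pow_ne_zero
        rw [Ne, C_eq_zero]
        exact hj' _ hj0
      exact (mul_eq_zero.1 h1.symm).resolve_left h2
  intro a j
  obtain ⟨N, hN⟩ := hFj j
  refine ⟨N, ?_⟩
  obtain ⟨c, hc⟩ := Ideal.mem_span_singleton'.1 hN
  have h1 := congrArg (eval (fun i => algebraMap k A (a i))) hc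
  have h2 : eval (fun i => algebraMap k A (a i)) (theta n φ F) = φ (map (eval a) F) :=
    RingHom.congr_fun (theta_eval n φ a) F
  have h3 : eval (fun i => algebraMap k A (a i)) h = ∑ i, algebraMap k A (a i) * ξ i := by
    simp only [h, map_sum, map_mul, eval_C, eval_X]
    exact Finset.sum_congr rfl fun i _ => mul_comm _ _
  rw [map_mul, map_mul, map_pow, eval_C, h2, h3] at h1
  exact Ideal.mem_span_singleton'.2 ⟨_, h1⟩

end Bert

-- Part J
namespace Bert
open MvPolynomial
variable {k : Type} [Field k] {n : ℕ}

theorem prime_frac {R K : Type} [CommRing R] [IsDomain R] [Field K] [Algebra R K] [IsFractionRing R K]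
    {D : ℕ} (F : MvPolynomial (Fin D) R) (hF : Prime F) (y0 : Fin D → R) (h0 : eval y0 F = 0) :
    (Ideal.span {map (algebraMap R K) F}).IsPrime := by
  letI : Algebra (MvPolynomial (Fin D) R) (MvPolynomial (Fin D) K) := (map (algebraMap R K)).toAlgebra
  haveI : IsLocalization ((nonZeroDivisors R).map (C (σ := Fin D))) (MvPolynomial (Fin D) K) :=
    MvPolynomial.isLocalization _ _
  have h1 := IsLocalization.isPrime_of_isPrime_disjoint ((nonZeroDivisors R).map (C (σ := Fin D)))
    (MvPolynomial (Fin D) K) (Ideal.span {F}) ((Ideal.span_singleton_prime hF.ne_zero).2 hF) (by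
      rw [Set.disjoint_left]
      rintro _ ⟨r, hr, rfl⟩ hc
      obtain ⟨c, hc⟩ := Ideal.mem_span_singleton'.1 hc
      have := congrArg (eval y0) hc
      rw [map_mul, h0, mul_zero, eval_C] at this
      exact nonZeroDivisors.ne_zero hr this.symm)
  rw [Ideal.map_span, Set.image_singleton] at h1
  exact h1

theorem map_integral {K E : Type} [Field K] [Field E] [Algebra K E] [FiniteDimensional K E] {D : ℕ} :
    (map (algebraMap K E) : MvPolynomial (Fin D) K →+* MvPolynomial (Fin D) E).IsIntegral := by
  intro u
  induction u using MvPolynomial.induction_on with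
  | C a =>
    obtain ⟨p, hp, hp0⟩ := Algebra.IsIntegral.isIntegral (R := K) a
    refine ⟨p.map C, hp.map _, ?_⟩
    have h1 : (map (algebraMap K E)).comp C = (C : E →+* MvPolynomial (Fin D) E).comp (algebraMap K E) := by
      ext r
      simp
    rw [Polynomial.eval₂_map, h1, ← Polynomial.hom_eval₂, hp0, map_zero]
  | add p q hp hq => exact RingHom.IsIntegralElem.add _ hp hq
  | mul_X p i hp =>
    refine RingHom.IsIntegralElem.mul _ hp ?_
    have : (X i : MvPolynomial (Fin D) E) = map (algebraMap K E) (X i) := by simp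
    rw [this]
    exact RingHom.isIntegralElem_map _

theorem sub_eval_mem {E : Type} [CommRing E] {D : ℕ} (y : Fin D → E) (P : Ideal (MvPolynomial (Fin D) E))
    (h : ∀ i, X i - C (y i) ∈ P) (f : MvPolynomial (Fin D) E) : f - C (eval y f) ∈ P := by
  induction f using MvPolynomial.induction_on with
  | C a => simp
  | add p q hp hq =>
    have : p + q - C (eval y (p + q)) = (p - C (eval y p)) + (q - C (eval y q)) := by
      rw [map_add, map_add]; ring
    rw [this]; exact add_mem hp hq
  | mul_X p i hp =>
    have : p * X i - C (eval y (p * X i)) = X i * (p - C (eval y p)) + C (eval y p) * (X i - C (y i)) := by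
      rw [map_mul, map_mul, eval_X]; ring
    rw [this]; exact add_mem (Ideal.mul_mem_left _ _ hp) (Ideal.mul_mem_left _ _ (h i))

theorem mem_ker_of_mem {E : Type} [Field E] {D : ℕ} (y : Fin D → E) (P : Ideal (MvPolynomial (Fin D) E))
    [hP : P.IsPrime] (h : ∀ i, X i - C (y i) ∈ P) (f : MvPolynomial (Fin D) E) (hf : f ∈ P) : eval y f = 0 := by
  by_contra hne
  have h1 := sub_mem hf (sub_eval_mem y P h f)
  rw [sub_sub_cancel] at h1
  exact hP.ne_top (Ideal.eq_top_of_isUnit_mem _ h1 ((isUnit_iff_ne_zero.2 hne).map C))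

theorem k2 {R K E : Type} [CommRing R] [IsDomain R] [Field K] [Algebra R K] [IsFractionRing R K]
    [Field E] [Algebra K E] [FiniteDimensional K E] {D : ℕ} (F : MvPolynomial (Fin D) R) (hF : Prime F)
    (y0 : Fin D → R) (h0 : eval y0 F = 0) (G1 G2 : MvPolynomial (Fin D) E)
    (hG : G1 * G2 = map ((algebraMap K E).comp (algebraMap R K)) F) (hu : ¬ IsUnit G1) :
    eval (fun i => algebraMap K E (algebraMap R K (y0 i))) G1 = 0 := by
  let FK := map (algebraMap R K) F
  have hFK : map (algebraMap K E) FK = G1 * G2 := by rw [hG, map_map]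
  haveI hpr : (Ideal.span {FK}).IsPrime := prime_frac F hF y0 h0
  have hFK0 : FK ≠ 0 := by
    intro h
    exact hF.ne_zero (map_injective _ (IsFractionRing.injective R K) (by rw [map_zero]; exact h))
  have hinj : Function.Injective (map (algebraMap K E) : MvPolynomial (Fin D) K →+* MvPolynomial (Fin D) E) :=
    map_injective _ (algebraMap K E).injective
  have hG1 : G1 ≠ 0 := by
    rintro rfl
    rw [zero_mul] at hFK
    exact hFK0 (hinj (by rw [hFK, map_zero]))
  obtain ⟨g, hg, hgG⟩ := WfDvdMonoid.exists_irreducible_factor hu hG1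
  have hgp : Prime g := UniqueFactorizationMonoid.irreducible_iff_prime.1 hg
  haveI hgi : (Ideal.span {g}).IsPrime := (Ideal.span_singleton_prime hgp.ne_zero).2 hgp
  have hH := lemmaH (map (algebraMap K E) : MvPolynomial (Fin D) K →+* MvPolynomial (Fin D) E) hinj
    map_integral g (Ideal.span {g}) (by rw [Ideal.minimalPrimes_eq_subsingleton_self]; rfl)
    (Ideal.span {FK}) (by rwa [Ne, Ideal.span_singleton_eq_bot]) (by
      rw [Ideal.span_singleton_le_iff_mem, Ideal.mem_comap, hFK, Ideal.mem_span_singleton]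
      exact hgG.mul_right G2)
  let yK : Fin D → K := fun i => algebraMap R K (y0 i)
  haveI : (RingHom.ker (eval yK)).IsPrime := RingHom.ker_isPrime _
  letI : Algebra (MvPolynomial (Fin D) K) (MvPolynomial (Fin D) E) := (map (algebraMap K E)).toAlgebra
  haveI : Algebra.IsIntegral (MvPolynomial (Fin D) K) (MvPolynomial (Fin D) E) := ⟨map_integral⟩
  obtain ⟨Q, hQg, hQ, hQc⟩ := Ideal.exists_ideal_over_prime_of_isIntegral (RingHom.ker (eval yK))
    (Ideal.span {g}) (by
      change Ideal.comap (map (algebraMap K E)) _ ≤ _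
      rw [← hH, Ideal.span_singleton_le_iff_mem, RingHom.mem_ker, eval_map]
      have := eval₂_comp_left (algebraMap R K) (RingHom.id R) y0 F
      rw [RingHom.comp_id] at this
      change eval₂ (algebraMap R K) (algebraMap R K ∘ y0) F = 0
      rw [← this]
      change algebraMap R K (eval y0 F) = 0
      rw [h0, map_zero])
  have hXi : ∀ i, X i - C (algebraMap K E (yK i)) ∈ Q := by
    intro i
    have h1 : X i - C (yK i) ∈ Q.comap (algebraMap (MvPolynomial (Fin D) K) (MvPolynomial (Fin D) E)) := by
      rw [hQc, RingHom.mem_ker]; simp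
    have h2 : algebraMap (MvPolynomial (Fin D) K) (MvPolynomial (Fin D) E) (X i - C (yK i)) =
      X i - C (algebraMap K E (yK i)) := by
      change map (algebraMap K E) _ = _
      simp
    rw [Ideal.mem_comap, h2] at h1
    exact h1
  have hgQ : g ∈ Q := hQg (Ideal.mem_span_singleton_self g)
  have hg0 := mem_ker_of_mem (fun i => algebraMap K E (yK i)) Q hXi g hgQ
  obtain ⟨c, rfl⟩ := hgG
  change eval (fun i => algebraMap K E (yK i)) (g * c) = 0
  rw [map_mul, hg0, zero_mul]

/-- exponent box -/
noncomputable def toF {D N : ℕ} (α : Fin D → Fin (N+1)) : Fin D →₀ ℕ :=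
  Finsupp.equivFunOnFinite.symm (fun i => (α i).val)

theorem toF_inj {D N : ℕ} : Function.Injective (toF : (Fin D → Fin (N+1)) → _) := by
  intro a b h
  funext i
  exact Fin.ext (DFunLike.congr_fun h i)

noncomputable def genP {D N : ℕ} {E : Type} [CommRing E] (z : (Fin D → Fin (N+1)) → E) : MvPolynomial (Fin D) E :=
  ∑ α, monomial (toF α) (z α)

theorem coeff_genP {D N : ℕ} {E : Type} [CommRing E] (z : (Fin D → Fin (N+1)) → E) (α : Fin D → Fin (N+1)) :
    coeff (toF α) (genP z) = z α := by
  rw [genP, coeff_sum, Finset.sum_eq_single α]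
  · simp
  · intro b _ hb
    rw [coeff_monomial, if_neg fun h => hb (toF_inj h)]
  · simp

theorem map_genP {D N : ℕ} {E E' : Type} [CommRing E] [CommRing E'] (f : E →+* E')
    (z : (Fin D → Fin (N+1)) → E) : map f (genP z) = genP (fun α => f (z α)) := by
  simp [genP, map_monomial]

theorem eq_genP {D N : ℕ} {E : Type} [CommRing E] (G : MvPolynomial (Fin D) E) (hG : G.totalDegree ≤ N) :
    genP (N := N) (fun α => coeff (toF α) G) = G := by
  ext β
  by_cases h : ∃ α : Fin D → Fin (N+1), toF α = β
  · obtain ⟨α, rfl⟩ := h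
    exact coeff_genP _ α
  · push Not at h
    have h1 : coeff β G = 0 := by
      by_contra hc
      have h2 : ∀ i, β i < N + 1 := by
        intro i
        have h3 := le_totalDegree (mem_support_iff.2 hc)
        have h4 : β i ≤ β.sum fun _ e => e := by
          by_cases hi : i ∈ β.support
          · exact Finset.single_le_sum (f := fun i => β i) (fun _ _ => Nat.zero_le _) hi
          · rw [Finsupp.notMem_support_iff.1 hi]; exact Nat.zero_le _
        omega
      exact h (fun i => ⟨β i, h2 i⟩) (by ext i; rfl)
    rw [h1, genP, coeff_sum]
    apply Finset.sum_eq_zero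
    intro α _
    rw [coeff_monomial, if_neg (h α)]

theorem k3_one {D : ℕ} (F : MvPolynomial (Fin D) (MvPolynomial (Fin n) k)) (hF : Prime F)
    (y0 : Fin D → k) (h0 : eval (fun i => C (y0 i)) F = 0) (N : ℕ) (α : Fin D → Fin (N+1)) (hα : toF α ≠ 0) :
    ∃ g : MvPolynomial (Fin n) k, g ≠ 0 ∧ ∀ a, eval a g ≠ 0 →
      ∀ z1 z2 : (Fin D → Fin (N+1)) → k, genP z1 * genP z2 = map (eval a) F →
        eval y0 (genP z1) ≠ 0 → z1 α = 0 := by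
  let τ := (Fin D → Fin (N+1)) ⊕ (Fin D → Fin (N+1)) ⊕ Unit
  let U1 : MvPolynomial (Fin D) (MvPolynomial τ (MvPolynomial (Fin n) k)) := genP (N := N) (fun α => X (Sum.inl α))
  let U2 : MvPolynomial (Fin D) (MvPolynomial τ (MvPolynomial (Fin n) k)) :=
    genP (N := N) (fun α => X (Sum.inr (Sum.inl α)))
  let W := U1 * U2 - map C F
  let q : MvPolynomial τ (MvPolynomial (Fin n) k) :=
    X (Sum.inr (Sum.inr ())) * eval (fun i => C (C (y0 i))) U1 * X (Sum.inl α) - 1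
  let P : Set (MvPolynomial τ (MvPolynomial (Fin n) k)) := {p | p = q ∨ ∃ β, p = coeff β W}
  have main : ∀ (E : Type) [Field E] (ρ : MvPolynomial (Fin n) k →+* E) (z : τ → E),
      (∀ p ∈ P, eval₂ ρ z p = 0) ↔
        ((genP fun α => z (Sum.inl α)) * (genP fun α => z (Sum.inr (Sum.inl α))) = map ρ F ∧
        z (Sum.inr (Sum.inr ())) * eval (fun i => ρ (C (y0 i))) (genP fun α => z (Sum.inl α)) * z (Sum.inl α) = 1) := by
    intro E _ ρ z
    let f := eval₂Hom ρ z
    have hU1 : map f U1 = genP fun α => z (Sum.inl α) := by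
      simp only [U1, map_genP]
      congr 1; funext α; simp [f]
    have hU2 : map f U2 = genP fun α => z (Sum.inr (Sum.inl α)) := by
      simp only [U2, map_genP]
      congr 1; funext α; simp [f]
    have hFm : map f (map C F) = map ρ F := by
      rw [map_map]; congr 1; ext r <;> simp [f]
    have hW : map f W = (genP fun α => z (Sum.inl α)) * (genP fun α => z (Sum.inr (Sum.inl α))) - map ρ F := by
      rw [map_sub, map_mul, hU1, hU2, hFm]
    have hev : f (eval (fun i => C (C (y0 i))) U1) = eval (fun i => ρ (C (y0 i))) (genP fun α => z (Sum.inl α)) := by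
      rw [← hU1, eval_map]
      have := eval₂_comp_left f (RingHom.id _) (fun i => C (C (y0 i))) U1
      rw [RingHom.comp_id] at this
      change f (eval₂ (RingHom.id _) _ U1) = _
      rw [this]
      congr 1
      funext i
      simp [f]
    have hq : f q = z (Sum.inr (Sum.inr ())) * eval (fun i => ρ (C (y0 i))) (genP fun α => z (Sum.inl α)) * z (Sum.inl α) - 1 := by
      simp only [q, map_sub, map_mul, hev, map_one]
      simp [f]
    constructor
    · intro h
      constructor
      · rw [← sub_eq_zero, ← hW]
        ext β
        rw [coeff_map, coeff_zero]
        exact h _ (Or.inr ⟨β, rfl⟩)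
      · rw [← sub_eq_zero, ← hq]
        exact h _ (Or.inl rfl)
    · rintro ⟨h1, h2⟩ p (rfl | ⟨β, rfl⟩)
      · change f q = 0
        rw [hq, h2, sub_self]
      · change f (coeff β W) = 0
        rw [← coeff_map, hW, h1, sub_self, coeff_zero]
  obtain ⟨g, hg, hgs⟩ := spec P (by
    intro E _ _ _ z
    by_contra! hc
    obtain ⟨h1, h2⟩ := (main E _ z).1 hc
    have hu : ¬ IsUnit (genP fun α => z (Sum.inl α)) := by
      intro hu
      have hz : z (Sum.inl α) ≠ 0 := by
        intro hz; rw [hz, mul_zero] at h2; exact zero_ne_one h2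
      rw [MvPolynomial.isUnit_iff_eq_C_of_isReduced] at hu
      obtain ⟨r, -, hr⟩ := hu
      have h3 := coeff_genP (fun α => z (Sum.inl α)) α
      rw [hr, coeff_C, if_neg hα.symm] at h3
      exact hz h3.symm
    have h4 := k2 (K := FractionRing (MvPolynomial (Fin n) k)) F hF _ h0 _ _ h1 hu
    have h5 := h2
    rw [show eval (fun i => ((algebraMap (FractionRing (MvPolynomial (Fin n) k)) E).comp
        (algebraMap (MvPolynomial (Fin n) k) (FractionRing (MvPolynomial (Fin n) k)))) (C (y0 i)))
          (genP fun α => z (Sum.inl α)) = 0 from h4, mul_zero, zero_mul] at h5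
    exact zero_ne_one h5)
  refine ⟨g, hg, fun a ha z1 z2 h1 h2 => ?_⟩
  by_contra hz
  obtain ⟨p, hp, hp0⟩ := hgs a ha (Sum.elim z1 (Sum.elim z2 fun _ => (eval y0 (genP z1) * z1 α)⁻¹))
  refine hp0 ((main k (eval a) _).2 ⟨?_, ?_⟩ p hp)
  · exact h1
  · simp only [Sum.elim_inl, Sum.elim_inr, eval_C]
    rw [mul_assoc]
    exact inv_mul_cancel₀ (mul_ne_zero h2 hz)

theorem k3 {D : ℕ} (F : MvPolynomial (Fin D) (MvPolynomial (Fin n) k)) (hF : Prime F)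
    (y0 : Fin D → k) (h0 : eval (fun i => C (y0 i)) F = 0) :
    ∃ g : MvPolynomial (Fin n) k, g ≠ 0 ∧ ∀ a, eval a g ≠ 0 → map (eval a) F ≠ 0 ∧
      ∀ G1 G2 : MvPolynomial (Fin D) k, G1 * G2 = map (eval a) F → eval y0 G1 ≠ 0 → IsUnit G1 := by
  classical
  set N := F.totalDegree
  have h1 : ∀ α : Fin D → Fin (N+1), ∃ g : MvPolynomial (Fin n) k, g ≠ 0 ∧ ∀ a, eval a g ≠ 0 → toF α ≠ 0 → 
      ∀ z1 z2 : (Fin D → Fin (N+1)) → k, genP z1 * genP z2 = map (eval a) F →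
        eval y0 (genP z1) ≠ 0 → z1 α = 0 := by
    intro α
    by_cases hα : toF α = 0
    · exact ⟨1, one_ne_zero, fun a _ h => absurd hα h⟩
    · obtain ⟨g, hg, h⟩ := k3_one F hF y0 h0 N α hα
      exact ⟨g, hg, fun a ha _ => h a ha⟩
  choose g hg hgs using h1
  obtain ⟨β, hβ⟩ := ne_zero_iff.1 hF.ne_zero
  refine ⟨coeff β F * ∏ α, g α, mul_ne_zero hβ (Finset.prod_ne_zero_iff.2 fun α _ => hg α), fun a ha => ?_⟩
  rw [map_mul, map_prod] at ha
  have ha1 := left_ne_zero_of_mul ha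
  have ha2 := Finset.prod_ne_zero_iff.1 (right_ne_zero_of_mul ha)
  have hne : map (eval a) F ≠ 0 := by
    rw [ne_zero_iff]
    exact ⟨β, by rwa [coeff_map]⟩
  refine ⟨hne, fun G1 G2 hG hy => ?_⟩
  have hG1 : G1 ≠ 0 := by rintro rfl; rw [zero_mul] at hG; exact hne hG.symm
  have hG2 : G2 ≠ 0 := by rintro rfl; rw [mul_zero] at hG; exact hne hG.symm
  have hdeg : G1.totalDegree + G2.totalDegree ≤ N := by
    rw [← totalDegree_mul_of_isDomain hG1 hG2, hG]
    exact Finset.sup_mono (support_map_subset _ _)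
  have e1 := eq_genP (N := N) G1 (by omega)
  have e2 := eq_genP (N := N) G2 (by omega)
  have hz : ∀ α : Fin D → Fin (N+1), toF α ≠ 0 → coeff (toF α) G1 = 0 := by
    intro α hα
    exact hgs α a (ha2 α (Finset.mem_univ _)) hα (fun α => coeff (toF α) G1) (fun α => coeff (toF α) G2)
      (by rw [e1, e2, hG]) (by rwa [e1])
  have hC : G1 = C (coeff 0 G1) := by
    ext γ
    rw [coeff_C]
    split_ifs with hγ
    · rw [hγ]
    · conv_lhs => rw [← e1]
      rw [genP, coeff_sum]
      apply Finset.sum_eq_zero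
      intro α _
      rw [coeff_monomial]
      split_ifs with h
      · exact hz α (by rw [h]; exact fun h => hγ h.symm)
      · rfl
  rw [hC]
  apply IsUnit.map
  rw [isUnit_iff_ne_zero]
  intro h
  rw [h, map_zero] at hC
  exact hG1 hC

end Bert

-- Part K
namespace Bert
open MvPolynomial
variable {k : Type} [Field k] {n : ℕ}

theorem sub_aeval_mem {D : ℕ} (s : Fin D → MvPolynomial (Fin D) k) (P : Ideal (MvPolynomial (Fin D) k))
    (h : ∀ i, X i - s i ∈ P) (f : MvPolynomial (Fin D) k) : f - aeval s f ∈ P := by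
  induction f using MvPolynomial.induction_on with
  | C a =>
    have : aeval s (C a) = C a := (aeval s).commutes a
    simp [this]
  | add p q hp hq =>
    have : p + q - aeval s (p + q) = (p - aeval s p) + (q - aeval s q) := by
      rw [map_add]; ring
    rw [this]; exact add_mem hp hq
  | mul_X p i hp =>
    have : p * X i - aeval s (p * X i) = X i * (p - aeval s p) + aeval s p * (X i - s i) := by
      rw [map_mul, aeval_X]; ring
    rw [this]; exact add_mem (Ideal.mul_mem_left _ _ hp) (Ideal.mul_mem_left _ _ (h i))

/-- a minimal prime of a principal ideal cannot contain all two-by-two minors -/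
theorem no_minors {A : Type} [CommRing A] [IsDomain A] [IsNoetherianRing A] [Algebra k A] {D : ℕ}
    (φ : MvPolynomial (Fin D) k →ₐ[k] A) (hinj : Function.Injective φ) (hIntg : φ.toRingHom.IsIntegral)
    (y0 : Fin D → k) (hy0 : y0 ≠ 0) (hD : 3 ≤ D) (b : A) (q : Ideal A)
    (hq : q ∈ (Ideal.span {b}).minimalPrimes)
    (hmin : ∀ i i', φ (C (y0 i) * X i' - C (y0 i') * X i) ∈ q) : False := by
  obtain ⟨i0, hi0⟩ := Function.ne_iff.1 hy0
  have hi0 : y0 i0 ≠ 0 := hi0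
  obtain ⟨i1, hi1⟩ : ∃ i1 : Fin D, i1 ≠ i0 := by
    have := Fin.exists_ne_and_ne_of_two_lt i0 i0 (by omega)
    obtain ⟨i, h, _⟩ := this
    exact ⟨i, h⟩
  obtain ⟨i2, hi2, hi21⟩ := Fin.exists_ne_and_ne_of_two_lt i0 i1 (by omega)
  let c := y0 i1 / y0 i0
  let s : Fin D → MvPolynomial (Fin D) k := fun i => if i = i1 then C c * X i0 else X i
  let p0 : Ideal (MvPolynomial (Fin D) k) := RingHom.ker (aeval s : _ →ₐ[k] MvPolynomial (Fin D) k).toRingHom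
  haveI : p0.IsPrime := RingHom.ker_isPrime _
  have hform : ∀ i, X i - C (y0 i / y0 i0) * X i0 ∈ q.comap φ.toRingHom := by
    intro i
    have h1 : φ.toRingHom (C (y0 i0) * X i - C (y0 i) * X i0) ∈ q := hmin i0 i
    have h2 : X i - C (y0 i / y0 i0) * X i0 = C ((y0 i0)⁻¹) * (C (y0 i0) * X i - C (y0 i) * X i0) := by
      rw [mul_sub, ← mul_assoc, ← mul_assoc, ← C_mul, ← C_mul, inv_mul_cancel₀ hi0, C_1, one_mul, div_eq_inv_mul]
    rw [h2]
    exact Ideal.mul_mem_left _ _ h1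
  have hle : p0 ≤ q.comap φ.toRingHom := by
    intro f hf
    have h1 := sub_aeval_mem s (q.comap φ.toRingHom) (by
      intro i
      simp only [s]
      split_ifs with h
      · rw [h]; exact hform i1
      · rw [sub_self]; exact zero_mem _) f
    have h2 : aeval s f = 0 := hf
    rwa [h2, sub_zero] at h1
  have hne : ∀ i, i ≠ i0 → ∀ c : k, (X i - C c * X i0 : MvPolynomial (Fin D) k) ≠ 0 := by
    intro i hi c h
    have := congrArg (eval (Pi.single i 1)) h
    simp [Pi.single_apply, hi.symm] at this
  have h1 : p0 ≠ ⊥ := by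
    intro h
    have : X i1 - C c * X i0 ∈ p0 := by
      change aeval s (X i1 - C c * X i0) = 0
      have hC : aeval s (C c) = C c := (aeval s).commutes c
      rw [map_sub, map_mul, hC, aeval_X, aeval_X]
      simp [s, hi1.symm]
    rw [h] at this
    exact hne i1 hi1 c this
  have h2 := lemmaH φ.toRingHom hinj hIntg b q hq p0 h1 hle
  have h3 := hform i2
  rw [← h2] at h3
  have h4 : aeval s (X i2 - C (y0 i2 / y0 i0) * X i0) = 0 := h3
  have hC : aeval s (C (y0 i2 / y0 i0)) = C (y0 i2 / y0 i0) := (aeval s).commutes _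
  rw [map_sub, map_mul, hC, aeval_X, aeval_X] at h4
  simp only [s, if_neg hi21, if_neg hi1.symm] at h4
  exact hne i2 hi2 _ h4

theorem k4a [Infinite k] {A : Type} [CommRing A] [IsDomain A] [IsNoetherianRing A] [Algebra k A] {D : ℕ}
    (φ : MvPolynomial (Fin D) k →ₐ[k] A) (hinj : Function.Injective φ) (hIntg : φ.toRingHom.IsIntegral)
    (y0 : Fin D → k) (hy0 : y0 ≠ 0) (hD : 3 ≤ D) (ξ : Fin n → A)
    (hmin : ∀ i i', φ (C (y0 i) * X i' - C (y0 i') * X i) ∈ Ideal.span (Set.range ξ))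
    (M : Ideal A) [M.IsPrime] (hM : M.comap φ.toRingHom = RingHom.ker (eval y0)) (hξ : ∀ j, ξ j ∈ M) :
    ∃ g : MvPolynomial (Fin n) k, g ≠ 0 ∧ ∀ a, eval a g ≠ 0 →
      ∀ q ∈ (Ideal.span {∑ i, algebraMap k A (a i) * ξ i}).minimalPrimes,
        q.comap φ.toRingHom ≤ RingHom.ker (eval y0) := by
  have hnot : ∀ b : A, ∀ q ∈ (Ideal.span {b}).minimalPrimes, ∃ j, ξ j ∉ q := by
    intro b q hq
    by_contra! hall
    refine no_minors φ hinj hIntg y0 hy0 hD b q hq fun i i' => ?_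
    have : Ideal.span (Set.range ξ) ≤ q := by
      rw [Ideal.span_le]; rintro _ ⟨j, rfl⟩; exact hall j
    exact this (hmin i i')
  obtain ⟨j0, hj0⟩ : ∃ j, ξ j ≠ 0 := by
    obtain ⟨q, hq, -⟩ := Ideal.exists_minimalPrimes_le (I := Ideal.span {(0:A)}) (J := ⊥) (by simp)
    obtain ⟨j, hj⟩ := hnot 0 q hq
    exact ⟨j, fun h => hj (by rw [h]; exact zero_mem _)⟩
  obtain ⟨F, hF, hFa⟩ := k1 φ hIntg ξ j0 hj0
  have hFq : ∀ a, ∀ q ∈ (Ideal.span {∑ i, algebraMap k A (a i) * ξ i}).minimalPrimes,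
      φ (map (eval a) F) ∈ q := by
    intro a q hq
    haveI : q.IsPrime := hq.1.1
    obtain ⟨j, hj⟩ := hnot _ q hq
    obtain ⟨N, hN⟩ := hFa a j
    exact (Ideal.IsPrime.mem_or_mem ‹_› (hq.1.2 hN)).resolve_left fun h => hj (Ideal.IsPrime.mem_of_pow_mem ‹_› _ h)
  have hF0 : eval (fun i => C (y0 i)) F = 0 := by
    apply MvPolynomial.funext
    intro a
    obtain ⟨q, hq, hqM⟩ := Ideal.exists_minimalPrimes_le
      (I := Ideal.span {∑ i, algebraMap k A (a i) * ξ i}) (J := M) (by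
        rw [Ideal.span_singleton_le_iff_mem]
        exact sum_mem fun i _ => Ideal.mul_mem_left _ _ (hξ i))
    have h1 : map (eval a) F ∈ M.comap φ.toRingHom := hqM (hFq a q hq)
    rw [hM, RingHom.mem_ker, eval_map] at h1
    have h2 := eval₂_comp_left (eval a) (RingHom.id _) (fun i => C (y0 i)) F
    rw [RingHom.comp_id] at h2
    rw [map_zero]
    refine h2.trans ?_
    convert h1 using 2
    funext i
    simp
  obtain ⟨g, hg, hgs⟩ := k3 F hF y0 hF0
  refine ⟨g, hg, fun a ha q hq => ?_⟩
  obtain ⟨h1, h2⟩ := hgs a ha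
  haveI : q.IsPrime := hq.1.1
  have h3 : map (eval a) F ∈ q.comap φ.toRingHom := hFq a q hq
  have hpr : (q.comap φ.toRingHom).IsPrime := Ideal.IsPrime.comap _
  have h4 : q.comap φ.toRingHom ≠ ⊥ := by
    intro h; rw [h] at h3; exact h1 h3
  obtain ⟨G, hG, hGp⟩ := Ideal.IsPrime.exists_mem_prime_of_ne_bot hpr h4
  haveI : (Ideal.span {G}).IsPrime := (Ideal.span_singleton_prime hGp.ne_zero).2 hGp
  have h5 := lemmaH φ.toRingHom hinj hIntg _ q hq (Ideal.span {G})
    (by rw [Ne, Ideal.span_singleton_eq_bot]; exact hGp.ne_zero)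
    ((Ideal.span_singleton_le_iff_mem _).2 hG)
  rw [← h5, Ideal.span_singleton_le_iff_mem, RingHom.mem_ker]
  rw [← h5, Ideal.mem_span_singleton] at h3
  obtain ⟨G2, hG2⟩ := h3
  by_contra hne
  exact hGp.not_unit (h2 G G2 hG2.symm hne)

theorem homI_eval_smul {m : ℕ} {I : Ideal (MvPolynomial (Fin m) k)} (hI : HomI I) (v : Fin m → k)
    (hv : ∀ f ∈ I, eval v f = 0) (c : k) : ∀ f ∈ I, eval (c • v) f = 0 := by
  intro f hf
  rw [← sum_homogeneousComponent f, map_sum]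
  apply Finset.sum_eq_zero
  intro N _
  rw [eval_smul_hom (homogeneousComponent_isHomogeneous N f), hv _ (hI f hf N), mul_zero]

theorem fibre_finite {m : ℕ} {I : Ideal (MvPolynomial (Fin m) k)} {D : ℕ}
    {y : Fin D → MvPolynomial (Fin m) k} (hy : LN I y) (w : Fin D → k) :
    {v : Fin m → k | (∀ f ∈ I, eval v f = 0) ∧ ∀ i, eval v (y i) = w i}.Finite := by
  have h1 : ∀ l : Fin m, ∃ p : Polynomial k, p ≠ 0 ∧ ∀ v : Fin m → k, (∀ f ∈ I, eval v f = 0) →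
      (∀ i, eval v (y i) = w i) → p.eval (v l) = 0 := by
    intro l
    obtain ⟨p, hp, hp0⟩ := hy.int (Ideal.Quotient.mk I (X l))
    refine ⟨p.map (eval w), (hp.map _).ne_zero, fun v hv hvy => ?_⟩
    have h2 : p.eval₂ (aeval y : _ →ₐ[k] MvPolynomial (Fin m) k).toRingHom (X l) ∈ I := by
      rw [← Ideal.Quotient.eq_zero_iff_mem, Polynomial.hom_eval₂]
      exact hp0
    have h3 := hv _ h2
    rw [Polynomial.hom_eval₂, eval_X] at h3
    have h4 : (eval v).comp (aeval y : _ →ₐ[k] MvPolynomial (Fin m) k).toRingHom = eval w := by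
      apply MvPolynomial.ringHom_ext
      · intro r; simp
      · intro i; simp [hvy]
    rw [h4] at h3
    rw [Polynomial.eval_map]
    exact h3
  choose p hp hpv using h1
  refine Set.Finite.subset (Set.Finite.pi' (t := fun l => {x | (p l).eval x = 0}) fun l => ?_) ?_
  · refine Set.Finite.subset (Polynomial.finite_setOf_isRoot (hp l)) fun x hx => hx
  · intro v hv l
    exact hpv l v hv.1 hv.2

theorem exists_zero [IsAlgClosed k] {m : ℕ} (P : Ideal (MvPolynomial (Fin m) k)) (hP : P ≠ ⊤) :
    ∃ v : Fin m → k, ∀ f ∈ P, eval v f = 0 := by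
  obtain ⟨M, hM, hPM⟩ := Ideal.exists_le_maximal P hP
  obtain ⟨v, hv⟩ := (MvPolynomial.isMaximal_iff_eq_vanishingIdeal_singleton (K := k)).1 hM
  refine ⟨v, fun f hf => ?_⟩
  have := hPM hf
  rw [hv] at this
  simpa using this

theorem homI_sup_single {m : ℕ} {I : Ideal (MvPolynomial (Fin m) k)} (hI : HomI I)
    {h : MvPolynomial (Fin m) k} {N : ℕ} (hh : h.IsHomogeneous N) : HomI (I ⊔ Ideal.span {h}) := by
  letI := gradedAlgebra (σ := Fin m) (R := k)
  rw [homI_iff] at hI ⊢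
  refine Ideal.IsHomogeneous.sup hI (Ideal.homogeneous_span _ _ ?_)
  intro x hx
  rw [Set.mem_singleton_iff.1 hx]
  exact ⟨N, hh⟩

theorem homI_minimal {m : ℕ} {J : Ideal (MvPolynomial (Fin m) k)} (hJ : HomI J)
    {p : Ideal (MvPolynomial (Fin m) k)} (hp : p ∈ J.minimalPrimes) : HomI p := by
  haveI := hp.1.1
  obtain ⟨Q, hQ, hQh, hQp, hQm, -⟩ := exists_core p
  have h1 : J ≤ Q := hQm J hJ hp.1.2
  have h2 : p ≤ Q := hp.2 ⟨hQ, h1⟩ hQp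
  rw [le_antisymm h2 hQp]
  exact hQh

theorem k4 [IsAlgClosed k] {m : ℕ} {I : Ideal (MvPolynomial (Fin m) k)} [I.IsPrime] (hI : HomI I)
    {D : ℕ} {y : Fin D → MvPolynomial (Fin m) k} (hy : LN I y) (hD : 3 ≤ D) (v0 : Fin m → k) (hv0 : v0 ≠ 0)
    (hIv : ∀ f ∈ I, eval v0 f = 0) (ξ : Fin n → MvPolynomial (Fin m) k) (hξl : ∀ j, (ξ j).IsHomogeneous 1)
    (hξ : ∀ j, eval v0 (ξ j) = 0)
    (hspan : ∀ f : MvPolynomial (Fin m) k, f.IsHomogeneous 1 → eval v0 f = 0 → f ∈ Ideal.span (Set.range ξ)) :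
    ∃ g : MvPolynomial (Fin n) k, g ≠ 0 ∧ ∀ a, eval a g ≠ 0 →
      ∀ p ∈ (I ⊔ Ideal.span {∑ j, C (a j) * ξ j}).minimalPrimes, p ≤ RingHom.ker (eval v0) := by
  classical
  haveI : Infinite k := IsAlgClosed.instInfinite
  let y0 : Fin D → k := fun i => eval v0 (y i)
  have hy0 : y0 ≠ 0 := by
    intro h
    obtain ⟨l, hl⟩ := Function.ne_iff.1 hv0
    have hf := fibre_finite hy 0
    refine Set.infinite_of_injective_forall_mem (f := fun c : k => c • v0) ?_ ?_ hf
    · intro c c' hc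
      have := congrFun hc l
      simp only [Pi.smul_apply, smul_eq_mul] at this
      exact mul_right_cancel₀ hl this
    · intro c
      refine ⟨homI_eval_smul hI v0 hIv c, fun i => ?_⟩
      rw [eval_smul_hom (hy.lin i)]
      have : eval v0 (y i) = 0 := congrFun h i
      rw [this, mul_zero]; rfl
  haveI : (RingHom.ker (eval v0)).IsPrime := RingHom.ker_isPrime _
  let M : Ideal (MvPolynomial (Fin m) k ⧸ I) := (RingHom.ker (eval v0)).map (Ideal.Quotient.mk I)
  have hM : M.comap (Ideal.Quotient.mk I) = RingHom.ker (eval v0) := by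
    rw [Ideal.comap_map_of_surjective _ Ideal.Quotient.mk_surjective, ← RingHom.ker_eq_comap_bot,
      Ideal.mk_ker, sup_eq_left.2 hIv]
  haveI : M.IsPrime := by
    apply Ideal.map_isPrime_of_surjective Ideal.Quotient.mk_surjective
    rw [Ideal.mk_ker]; exact hIv
  have hMφ : M.comap (lnMap I y).toRingHom = RingHom.ker (eval y0) := by
    have h1 : M.comap (lnMap I y).toRingHom = (M.comap (Ideal.Quotient.mk I)).comap (aeval y : _ →ₐ[k] _).toRingHom := rfl
    rw [h1, hM, RingHom.comap_ker]
    congr 1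
    apply MvPolynomial.ringHom_ext
    · intro r; simp
    · intro i; simp [y0]
  have hmin : ∀ i i', lnMap I y (C (y0 i) * X i' - C (y0 i') * X i) ∈
      Ideal.span (Set.range fun j => Ideal.Quotient.mk I (ξ j)) := by
    intro i i'
    have h1 : C (y0 i) * y i' - C (y0 i') * y i ∈ Ideal.span (Set.range ξ) := by
      apply hspan
      · refine IsHomogeneous.sub ?_ ?_
        · simpa using (isHomogeneous_C _ (y0 i)).mul (hy.lin i')
        · simpa using (isHomogeneous_C _ (y0 i')).mul (hy.lin i)
      · simp [y0, mul_comm]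
    have h2 := Ideal.mem_map_of_mem (Ideal.Quotient.mk I) h1
    rw [Ideal.map_span, ← Set.range_comp] at h2
    have hC : ∀ c : k, aeval y (C c) = C c := fun c => (aeval y : _ →ₐ[k] MvPolynomial (Fin m) k).commutes c
    have h3 : lnMap I y (C (y0 i) * X i' - C (y0 i') * X i) =
        Ideal.Quotient.mk I (C (y0 i) * y i' - C (y0 i') * y i) := by
      have h4 : (aeval y : MvPolynomial (Fin D) k →ₐ[k] MvPolynomial (Fin m) k)
          (C (y0 i) * X i' - C (y0 i') * X i) = C (y0 i) * y i' - C (y0 i') * y i := by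
        rw [map_sub, map_mul, map_mul, hC, hC, aeval_X, aeval_X]
      rw [← h4]
      rfl
    rw [h3]
    exact h2
  obtain ⟨g, hg, hgs⟩ := k4a (lnMap I y) hy.inj hy.int y0 hy0 hD (fun j => Ideal.Quotient.mk I (ξ j)) hmin M hMφ
    (fun j => Ideal.mem_map_of_mem _ (hξ j))
  have hfin := fibre_finite hy y0
  let Fb := hfin.toFinset.filter (fun v => ∃ j, eval v (ξ j) ≠ 0)
  let gv : (Fin m → k) → MvPolynomial (Fin n) k := fun v => ∑ j, C (eval v (ξ j)) * X j
  refine ⟨g * ∏ v ∈ Fb, gv v, mul_ne_zero hg (Finset.prod_ne_zero_iff.2 ?_), ?_⟩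
  · intro v hv h0
    obtain ⟨j, hj⟩ := (Finset.mem_filter.1 hv).2
    apply hj
    have := congrArg (eval (Pi.single j 1)) h0
    simpa [gv, Pi.single_apply] using this
  · intro a ha p hp
    rw [map_mul, map_prod] at ha
    have ha1 := hgs a (left_ne_zero_of_mul ha)
    have ha2 := Finset.prod_ne_zero_iff.1 (right_ne_zero_of_mul ha)
    have hhom : (∑ j, C (a j) * ξ j).IsHomogeneous 1 := by
      apply IsHomogeneous.sum
      intro j _
      simpa using (isHomogeneous_C _ (a j)).mul (hξl j)
    have hph : HomI p := homI_minimal (homI_sup_single hI hhom) hp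
    have hpp : p.IsPrime := hp.1.1
    have hmk : Ideal.Quotient.mk I (∑ j, C (a j) * ξ j) =
        ∑ j, algebraMap k (MvPolynomial (Fin m) k ⧸ I) (a j) * Ideal.Quotient.mk I (ξ j) := by
      rw [map_sum]
      refine Finset.sum_congr rfl fun j _ => ?_
      rw [map_mul]; rfl
    have hcom : I ⊔ Ideal.span {∑ j, C (a j) * ξ j} = (Ideal.span {∑ j, algebraMap k (MvPolynomial (Fin m) k ⧸ I) (a j) *
        Ideal.Quotient.mk I (ξ j)}).comap (Ideal.Quotient.mk I) := by
      have hsp : ∀ h : MvPolynomial (Fin m) k, Ideal.span {Ideal.Quotient.mk I h} =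
          (Ideal.span {h}).map (Ideal.Quotient.mk I) := fun h => by
        rw [Ideal.map_span, Set.image_singleton]
      rw [← hmk, hsp, Ideal.comap_map_of_surjective _ Ideal.Quotient.mk_surjective,
        ← RingHom.ker_eq_comap_bot, Ideal.mk_ker, sup_comm]
    have hp' := hp
    rw [hcom, Ideal.comap_minimalPrimes_eq_of_surjective Ideal.Quotient.mk_surjective] at hp'
    obtain ⟨q, hq, rfl⟩ := hp'
    have h1 := ha1 q hq
    have h1' : (q.comap (Ideal.Quotient.mk I)).comap (aeval y : _ →ₐ[k] _).toRingHom ≤ RingHom.ker (eval y0) := h1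
    have hIp : I ≤ q.comap (Ideal.Quotient.mk I) := le_sup_left.trans hp.1.2
    haveI : (RingHom.ker (eval y0)).IsPrime := RingHom.ker_isPrime _
    obtain ⟨P1, hP1, hpP1, hP1c⟩ := hy.exists_over _ hIp _ h1'
    obtain ⟨v, hv⟩ := exists_zero P1 hP1.ne_top
    have hvy : ∀ i, eval v (y i) = y0 i := by
      intro i
      have h2 : X i - C (y0 i) ∈ P1.comap (aeval y : _ →ₐ[k] _).toRingHom := by
        rw [hP1c, RingHom.mem_ker]; simp
      have h3 := hv _ h2
      have hC : aeval y (C (y0 i)) = C (y0 i) := (aeval y : _ →ₐ[k] MvPolynomial (Fin m) k).commutes _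
      have h4 : (aeval y : _ →ₐ[k] _).toRingHom (X i - C (y0 i)) = y i - C (y0 i) := by
        change aeval y (X i - C (y0 i)) = _
        rw [map_sub, aeval_X, hC]
      rw [h4, map_sub, eval_C] at h3
      exact sub_eq_zero.1 h3
    have hvI : ∀ f ∈ I, eval v f = 0 := fun f hf => hv f (hpP1 (hIp hf))
    have hvξ : ∀ j, eval v (ξ j) = 0 := by
      by_contra! hc
      have hvF : v ∈ Fb := Finset.mem_filter.2 ⟨hfin.mem_toFinset.2 ⟨hvI, hvy⟩, hc⟩
      apply ha2 v hvF
      have h5 := hv _ (hpP1 (hp.1.2 (Ideal.mem_sup_right (Ideal.mem_span_singleton_self _))))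
      simp only [map_sum, map_mul, eval_C] at h5
      simp only [gv, map_sum, map_mul, eval_C, eval_X]
      rw [← h5]
      exact Finset.sum_congr rfl fun j _ => mul_comm _ _
    obtain ⟨l, hl⟩ := Function.ne_iff.1 hv0
    have hl : v0 l ≠ 0 := hl
    have hvc : v = (v l / v0 l) • v0 := by
      funext j
      have h6 : C (v0 l) * X j - C (v0 j) * X l ∈ Ideal.span (Set.range ξ) := by
        apply hspan
        · refine IsHomogeneous.sub ?_ ?_
          · simpa using (isHomogeneous_C _ (v0 l)).mul (isHomogeneous_X k j)
          · simpa using (isHomogeneous_C _ (v0 j)).mul (isHomogeneous_X k l)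
        · simp [mul_comm]
      have h7 : Ideal.span (Set.range ξ) ≤ RingHom.ker (eval v) := by
        rw [Ideal.span_le]; rintro _ ⟨j, rfl⟩; exact hvξ j
      have h8 := h7 h6
      rw [RingHom.mem_ker] at h8
      simp only [map_sub, map_mul, eval_C, eval_X] at h8
      simp only [Pi.smul_apply, smul_eq_mul]
      field_simp
      linear_combination h8
    set c := v l / v0 l
    have hc : c ≠ 0 := by
      intro hc
      rw [hc, zero_smul] at hvc
      apply hy0
      funext i
      rw [← hvy i, hvc]
      have := eval_smul_hom (hy.lin i) 0 (0 : Fin m → k)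
      simpa using this
    intro f hf
    have h9 := homI_eval_smul hph v (fun f hf => hv f (hpP1 hf)) c⁻¹ f hf
    rw [hvc, smul_smul, inv_mul_cancel₀ hc, one_smul] at h9
    exact h9

end Bert

-- Part L
namespace Bert
open MvPolynomial
variable {k : Type} [Field k] {n : ℕ}

noncomputable def lform {m : ℕ} (w : Fin m → k) : MvPolynomial (Fin m) k := ∑ l, C (w l) * X l

theorem eval_lform {m : ℕ} (w x : Fin m → k) : eval x (lform w) = ∑ l, w l * x l := by
  simp [lform]

theorem lform_hom {m : ℕ} (w : Fin m → k) : (lform w).IsHomogeneous 1 := by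
  apply IsHomogeneous.sum
  intro j _
  simpa using (isHomogeneous_C _ (w j)).mul (isHomogeneous_X k j)

theorem pderiv_lform {m : ℕ} (w : Fin m → k) (l : Fin m) : pderiv l (lform w) = C (w l) := by
  classical
  rw [lform, map_sum, Finset.sum_eq_single l]
  · rw [Derivation.leibniz, pderiv_C, pderiv_X_self]; simp
  · intro j _ hj
    rw [Derivation.leibniz, pderiv_C, pderiv_X_of_ne hj]; simp
  · simp

theorem sum_lform {m N : ℕ} (a : Fin N → k) (ξ : Fin N → Fin m → k) :
    ∑ j, C (a j) * lform (ξ j) = lform (fun l => ∑ j, a j * ξ j l) := by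
  simp only [lform, Finset.mul_sum, map_sum, Finset.sum_mul, map_mul]
  rw [Finset.sum_comm]
  simp only [mul_assoc]

theorem grad_lform {m : ℕ} (w v : Fin m → k) : (fun j => eval v (pderiv j (lform w))) = w := by
  funext j; rw [pderiv_lform, eval_C]

theorem gradSpan_mono {m : ℕ} {P Q : Ideal (MvPolynomial (Fin m) k)} (h : P ≤ Q) (v : Fin m → k) :
    gradSpan P v ≤ gradSpan Q v := by
  apply Submodule.span_mono
  rintro w ⟨f, hf, rfl⟩
  exact ⟨f, h hf, rfl⟩

theorem mem_gradSpan {m : ℕ} {Q : Ideal (MvPolynomial (Fin m) k)} {f : MvPolynomial (Fin m) k} (hf : f ∈ Q)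
    (v : Fin m → k) : (fun j => eval v (pderiv j f)) ∈ gradSpan Q v :=
  Submodule.subset_span ⟨f, hf, rfl⟩

theorem gradSpan_gens {m r : ℕ} (f : Fin r → MvPolynomial (Fin m) k) (x : Fin m → k)
    (hx : ∀ j, eval x (f j) = 0) {w : Fin m → k} (hw : w ∈ gradSpan (Ideal.span (Set.range f)) x) :
    ∃ c : Fin r → k, ∀ l, w l = ∑ j, c j * eval x (pderiv l (f j)) := by
  unfold gradSpan at hw
  induction hw using Submodule.span_induction with
  | mem w hw =>
    obtain ⟨p, hp, rfl⟩ := hw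
    obtain ⟨c, rfl⟩ := (Ideal.mem_span_range_iff_exists_fun).1 hp
    refine ⟨fun j => eval x (c j), fun l => ?_⟩
    beta_reduce
    rw [map_sum, map_sum]
    refine Finset.sum_congr rfl fun j _ => ?_
    rw [Derivation.leibniz, map_add]
    simp [hx j]
  | zero => exact ⟨0, by simp⟩
  | add u w _ _ hu hw =>
    obtain ⟨c, hc⟩ := hu
    obtain ⟨c', hc'⟩ := hw
    refine ⟨c + c', fun l => ?_⟩
    simp [hc, hc', add_mul, Finset.sum_add_distrib]
  | smul t w _ hw =>
    obtain ⟨c, hc⟩ := hw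
    refine ⟨t • c, fun l => ?_⟩
    simp [hc, Finset.mul_sum, mul_assoc]

theorem gradSpan_hom {m : ℕ} {Q : Ideal (MvPolynomial (Fin m) k)} (hQ : HomI Q) (v : Fin m → k) :
    gradSpan Q v = Submodule.span k {w | ∃ f ∈ Q, (∃ N, f.IsHomogeneous N) ∧ w = fun j => eval v (pderiv j f)} := by
  apply le_antisymm
  · apply Submodule.span_le.2
    rintro w ⟨f, hf, rfl⟩
    have : (fun j => eval v (pderiv j f)) = ∑ N ∈ Finset.range (f.totalDegree + 1),
        fun j => eval v (pderiv j (homogeneousComponent N f)) := by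
      funext j
      conv_lhs => rw [← sum_homogeneousComponent f]
      rw [map_sum, map_sum, Finset.sum_apply]
    rw [this]
    refine Submodule.sum_mem _ fun N _ => Submodule.subset_span
      ⟨_, hQ f hf N, ⟨N, homogeneousComponent_isHomogeneous N f⟩, rfl⟩
  · apply Submodule.span_mono
    rintro w ⟨f, hf, _, rfl⟩
    exact ⟨f, hf, rfl⟩

theorem gradSpan_smul {m : ℕ} {Q : Ideal (MvPolynomial (Fin m) k)} (hQ : HomI Q) (v : Fin m → k) (c : k) :
    gradSpan Q (c • v) ≤ gradSpan Q v := by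
  rw [gradSpan_hom hQ (c • v)]
  apply Submodule.span_le.2
  rintro w ⟨f, hf, ⟨N, hN⟩, rfl⟩
  have : (fun j => eval (c • v) (pderiv j f)) = c ^ (N-1) • fun j => eval v (pderiv j f) := by
    funext j
    rw [eval_smul_hom (hN.pderiv)]; rfl
  rw [this]
  exact Submodule.smul_mem _ _ (mem_gradSpan hf v)

theorem span_homVan [Infinite k] (S : Set (ProjPt k n)) (v : Fin (n+1) → k) :
    Submodule.span k {w | ∃ h ∈ homVanishingPolys S, w = gradientAt h v} = gradSpan (vanI S) v := by
  rw [gradSpan_hom (homI_vanI S)]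
  congr 1
  ext w
  constructor
  · rintro ⟨h, ⟨hN, hh⟩, rfl⟩
    exact ⟨h, hh, hN, rfl⟩
  · rintro ⟨h, hh, hN, rfl⟩
    exact ⟨h, ⟨hN, hh⟩, rfl⟩

theorem finrank_succ_le {m : ℕ} {U W : Submodule k (Fin m → k)} (hUW : U ≤ W) {w : Fin m → k} (hw : w ∈ W)
    (hwU : w ∉ U) : Module.finrank k U + 1 ≤ Module.finrank k W :=
  Submodule.finrank_lt_finrank_of_lt (lt_of_le_of_ne hUW fun h => hwU (h ▸ hw))

theorem lin_cond {m N : ℕ} (W : Submodule k (Fin m → k)) (ξ : Fin N → Fin m → k) (a0 : Fin N → k)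
    (h0 : (fun l => ∑ j, a0 j * ξ j l) ∉ W) :
    ∃ g : MvPolynomial (Fin N) k, g ≠ 0 ∧ ∀ a, eval a g ≠ 0 → (fun l => ∑ j, a j * ξ j l) ∉ W := by
  obtain ⟨φ, hφ, hW⟩ := Submodule.exists_le_ker_of_notMem h0
  have key : ∀ a : Fin N → k, eval a (lform fun j => φ (ξ j)) = φ (fun l => ∑ j, a j * ξ j l) := by
    intro a
    rw [eval_lform]
    have : (fun l => ∑ j, a j * ξ j l) = ∑ j, a j • ξ j := by
      funext l; simp
    rw [this, map_sum]
    simp [mul_comm]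
  refine ⟨lform fun j => φ (ξ j), ?_, ?_⟩
  · intro h
    apply hφ
    rw [← key, h, map_zero]
  · intro a ha hc
    exact ha ((key a).trans (hW hc))

end Bert

-- Part M
namespace Bert
open MvPolynomial
variable {k : Type} [Field k] {n : ℕ}

theorem core [IsAlgClosed k] [CharZero k] {I : Ideal (MvPolynomial (Fin (n+1)) k)} [hIp : I.IsPrime]
    (hI : HomI I) {d : ℕ} (hd : 2 ≤ d) {y : Fin (d+1) → MvPolynomial (Fin (n+1)) k} (hy : LN I y)
    (hsm : ∀ v : Fin (n+1) → k, v ≠ 0 → (∀ f ∈ I, eval v f = 0) → Module.finrank k (gradSpan I v) = n - d)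
    (v0 : Fin (n+1) → k) (hv0 : v0 ≠ 0) (hIv : ∀ f ∈ I, eval v0 f = 0)
    (ξ : Fin n → Fin (n+1) → k) (hξ : ∀ j, ∑ l, ξ j l * v0 l = 0) (hli : LinearIndependent k ξ)
    (hspan : ∀ f : MvPolynomial (Fin (n+1)) k, f.IsHomogeneous 1 → eval v0 f = 0 →
      ∃ a : Fin n → k, f = lform (fun l => ∑ j, a j * ξ j l)) :
    ∃ g : MvPolynomial (Fin n) k, g ≠ 0 ∧ ∀ a, eval a g ≠ 0 →
      ∃ K : Ideal (MvPolynomial (Fin (n+1)) k), K.IsPrime ∧ HomI K ∧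
        I ⊔ Ideal.span {lform (fun l => ∑ j, a j * ξ j l)} ≤ K ∧ K ≤ RingHom.ker (eval v0) ∧
        (∀ v, (∀ f ∈ I, eval v f = 0) → eval v (lform (fun l => ∑ j, a j * ξ j l)) = 0 →
          ∀ f ∈ K, eval v f = 0) ∧
        (∃ y' : Fin d → MvPolynomial (Fin (n+1)) k, LN K y') ∧
        ∀ v : Fin (n+1) → k, v ≠ 0 → (∀ f ∈ K, eval v f = 0) →
          Module.finrank k (gradSpan K v) = n + 1 - d := by
  classical
  haveI : Infinite k := IsAlgClosed.instInfinite
  have hdn : d ≤ n := by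
    have := grad_rank_le hy v0 hIv
    omega
  obtain ⟨r, f, hf, hfI⟩ := exists_hom_gens I hI
  choose gs hgs0 hgs using fun i => smooth_general f hf ξ i
  have hspanI : ∀ f : MvPolynomial (Fin (n+1)) k, f.IsHomogeneous 1 → eval v0 f = 0 →
      f ∈ Ideal.span (Set.range fun j => lform (ξ j)) := by
    intro f hf hfv
    obtain ⟨a, rfl⟩ := hspan f hf hfv
    rw [← sum_lform]
    exact Ideal.sum_mem _ fun j _ => Ideal.mul_mem_left _ _ (Ideal.subset_span ⟨j, rfl⟩)
  have hspanx : ∀ x : Fin (n+1) → k, (∀ j, ∑ l, ξ j l * x l = 0) → ∃ c : k, x = c • v0 := by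
    intro x hx
    obtain ⟨l, hl⟩ := Function.ne_iff.1 hv0
    have hl : v0 l ≠ 0 := hl
    refine ⟨x l / v0 l, ?_⟩
    funext j
    have h6 : C (v0 l) * X j - C (v0 j) * X l ∈ Ideal.span (Set.range fun j => lform (ξ j)) := by
      apply hspanI
      · refine IsHomogeneous.sub ?_ ?_
        · simpa using (isHomogeneous_C _ (v0 l)).mul (isHomogeneous_X k j)
        · simpa using (isHomogeneous_C _ (v0 j)).mul (isHomogeneous_X k l)
      · simp [mul_comm]
    have h7 : Ideal.span (Set.range fun j => lform (ξ j)) ≤ RingHom.ker (eval x) := by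
      rw [Ideal.span_le]; rintro _ ⟨j, rfl⟩
      exact (eval_lform _ _).trans (hx j)
    have h8 := h7 h6
    rw [RingHom.mem_ker] at h8
    simp only [map_sub, map_mul, eval_C, eval_X] at h8
    simp only [Pi.smul_apply, smul_eq_mul]
    field_simp
    linear_combination h8
  obtain ⟨g0, hg0, hg0s⟩ : ∃ g : MvPolynomial (Fin n) k, g ≠ 0 ∧
      ∀ a, eval a g ≠ 0 → (fun l => ∑ j, a j * ξ j l) ∉ gradSpan I v0 := by
    have hex : ∃ j, ξ j ∉ gradSpan I v0 := by
      by_contra! hc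
      have h1 : Submodule.span k (Set.range ξ) ≤ gradSpan I v0 := by
        rw [Submodule.span_le]; rintro _ ⟨j, rfl⟩; exact hc j
      have h2 := Submodule.finrank_mono h1
      rw [finrank_span_eq_card hli, Fintype.card_fin, hsm v0 hv0 hIv] at h2
      omega
    obtain ⟨j, hj⟩ := hex
    refine lin_cond _ ξ (Pi.single j 1) ?_
    have h3 : (fun l => ∑ j', (Pi.single j 1 : Fin n → k) j' * ξ j' l) = ξ j := by
      funext l
      simp [Pi.single_apply]
    rw [h3]
    exact hj
  obtain ⟨g4, hg4, hg4s⟩ := k4 hI hy (by omega) v0 hv0 hIv (fun j => lform (ξ j)) (fun j => lform_hom _)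
    (fun j => (eval_lform _ _).trans (hξ j)) hspanI
  refine ⟨g0 * g4 * ∏ i, gs i, mul_ne_zero (mul_ne_zero hg0 hg4)
    (Finset.prod_ne_zero_iff.2 fun i _ => hgs0 i), fun a ha => ?_⟩
  rw [map_mul, map_mul, map_prod] at ha
  have ha0 := hg0s a (left_ne_zero_of_mul (left_ne_zero_of_mul ha))
  have ha4 := hg4s a (right_ne_zero_of_mul (left_ne_zero_of_mul ha))
  have has := fun i => hgs i a (Finset.prod_ne_zero_iff.1 (right_ne_zero_of_mul ha) i (Finset.mem_univ i))
  rw [sum_lform] at ha4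
  set w : Fin (n+1) → k := fun l => ∑ j, a j * ξ j l with hw
  have hwv0 : eval v0 (lform w) = 0 := by
    rw [hw, ← sum_lform, map_sum]
    refine Finset.sum_eq_zero fun j _ => ?_
    rw [map_mul, eval_lform, hξ, mul_zero]
  have hnot : ∀ x : Fin (n+1) → k, x ≠ 0 → (∀ f ∈ I, eval x f = 0) → w ∉ gradSpan I x := by
    intro x hx hxI hwx
    have hxf : ∀ j, eval x (f j) = 0 := fun j => hxI _ (hfI ▸ Ideal.subset_span ⟨j, rfl⟩)
    obtain ⟨c, hc⟩ := gradSpan_gens f x hxf (hfI.symm ▸ hwx)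
    obtain ⟨t, rfl⟩ := hspanx x fun i => has i x hxf c hc
    exact ha0 (gradSpan_smul hI v0 t hwx)
  have hrank : ∀ x : Fin (n+1) → k, x ≠ 0 → (∀ f ∈ I, eval x f = 0) →
      n + 1 - d ≤ Module.finrank k (gradSpan (I ⊔ Ideal.span {lform w}) x) := by
    intro x hx hxI
    have h1 : w ∈ gradSpan (I ⊔ Ideal.span {lform w}) x := by
      have := mem_gradSpan (Q := I ⊔ Ideal.span {lform w})
        (Ideal.mem_sup_right (Ideal.mem_span_singleton_self (lform w))) x
      rwa [grad_lform] at this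
    have h2 := finrank_succ_le (gradSpan_mono le_sup_left x) h1 (hnot x hx hxI)
    rw [hsm x hx hxI] at h2
    omega
  obtain ⟨K, hK, hJK, hKv, hKq, hKd⟩ := k5 hy v0 hIv (lform w) hwv0 (by
    have := hrank v0 hv0 hIv
    omega)
  have hpK : ∀ p ∈ (I ⊔ Ideal.span {lform w}).minimalPrimes, p = K := by
    intro p hp
    have h1 := hKq p hp.1.1 hp.1.2 (ha4 p hp)
    exact le_antisymm (hp.2 ⟨hK, hJK⟩ h1) h1
  have hKmin : K ∈ (I ⊔ Ideal.span {lform w}).minimalPrimes := by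
    obtain ⟨p, hp, -⟩ := Ideal.exists_minimalPrimes_le hJK
    rwa [← hpK p hp]
  have hKh : HomI K := homI_minimal (homI_sup_single hI (lform_hom w)) hKmin
  obtain ⟨D', y', hy'⟩ := exists_LN K hKh hK.ne_top
  have hrK : ∀ x : Fin (n+1) → k, x ≠ 0 → (∀ f ∈ K, eval x f = 0) →
      n + 1 - d ≤ Module.finrank k (gradSpan K x) := fun x hx hxK =>
    (hrank x hx fun f hf => hxK f (hJK (Ideal.mem_sup_left hf))).trans
      (Submodule.finrank_mono (gradSpan_mono hJK x))
  have hD1 : d ≤ D' := by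
    have := hKd.trans hy'.dim_le
    exact_mod_cast this
  have hD2 : D' ≤ d := by
    have h1 := grad_rank_le hy' v0 hKv
    have h2 := hrK v0 hv0 hKv
    omega
  obtain rfl : D' = d := le_antisymm hD2 hD1
  refine ⟨K, hK, hKh, hJK, hKv, ?_, ⟨y', hy'⟩, ?_⟩
  · intro v hvI hvh
    have h1 : I ⊔ Ideal.span {lform w} ≤ RingHom.ker (eval v) := by
      refine sup_le hvI ?_
      rw [Ideal.span_singleton_le_iff_mem]
      exact hvh
    haveI : (RingHom.ker (eval v)).IsPrime := RingHom.ker_isPrime _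
    obtain ⟨p, hp, hpv⟩ := Ideal.exists_minimalPrimes_le h1
    rw [hpK p hp] at hpv
    exact hpv
  · intro v hv hvK
    have h1 := grad_rank_le hy' v hvK
    have h2 := hrK v hv hvK
    omega

end Bert

-- Part N
namespace Bert
open MvPolynomial
variable {k : Type} [Field k] {n : ℕ}

theorem exists_xi (v0 : Fin (n+1) → k) (i0 : Fin (n+1)) (hi : v0 i0 ≠ 0) :
    ∃ ξ : Fin n → Fin (n+1) → k, (∀ j, ∑ l, ξ j l * v0 l = 0) ∧
      (∀ (a : Fin n → k) j, ∑ j', a j' * ξ j' (i0.succAbove j) = a j) ∧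
      ∀ w : Fin (n+1) → k, ∑ l, w l * v0 l = 0 → w = fun l => ∑ j, w (i0.succAbove j) * ξ j l := by
  classical
  let ξ : Fin n → Fin (n+1) → k := fun j =>
    Fin.insertNth i0 (-(v0 (i0.succAbove j) / v0 i0)) (Pi.single j (1 : k) : Fin n → k)
  have h1 : ∀ j, ξ j i0 = -(v0 (i0.succAbove j) / v0 i0) := fun j => by simp [ξ]
  have h2 : ∀ j j', ξ j (i0.succAbove j') = (Pi.single j (1 : k) : Fin n → k) j' := fun j j' => by
    simp [ξ]
  refine ⟨ξ, ?_, ?_, ?_⟩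
  · intro j
    rw [Fin.sum_univ_succAbove _ i0, h1]
    simp only [h2]
    simp [Pi.single_apply, hi]
  · intro a j
    simp only [h2]
    simp [Pi.single_apply]
  · intro w hw
    rw [Fin.sum_univ_succAbove _ i0] at hw
    funext l
    rcases Fin.eq_self_or_eq_succAbove i0 l with rfl | ⟨j, rfl⟩
    · simp only [h1]
      have : ∑ j, w (l.succAbove j) * -(v0 (l.succAbove j) / v0 l) =
          - (∑ j, w (l.succAbove j) * v0 (l.succAbove j)) / v0 l := by
        rw [neg_div, Finset.sum_div, ← Finset.sum_neg_distrib]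
        refine Finset.sum_congr rfl fun j _ => ?_
        ring
      rw [this]
      field_simp
      linear_combination hw
    · simp only [h2]
      simp [Pi.single_apply]

theorem pzl_smul (c : k) (hc : c ≠ 0) (h : MvPolynomial (Fin (n+1)) k) :
    projZeroLocus {C c * h} = projZeroLocus {h} := by
  ext x
  simp only [projZeroLocus, Set.mem_singleton_iff, forall_eq, Set.mem_setOf_eq, VanishesAt, map_mul, eval_C,
    mul_eq_zero, hc, false_or]

theorem main_bertini
    {k : Type} [Field k] [IsAlgClosed k] [CharZero k] {n : ℕ}
    (X : Set (ProjPt k n)) (d : ℕ) (hd : 2 ≤ d) (hX : IsSmoothVariety X d)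
    (P0 : ProjPt k n) (hP0 : P0 ∈ X) :
    ∃ Z : Set (MvPolynomial (Fin (n+1)) k), IsZClosed k Z ∧ IsCone k Z ∧
      (∃ h : MvPolynomial (Fin (n+1)) k,
        h.IsHomogeneous 1 ∧ h ≠ 0 ∧ VanishesAt h P0 ∧ h ∉ Z) ∧
      (∀ h : MvPolynomial (Fin (n+1)) k,
        h.IsHomogeneous 1 → h ≠ 0 → VanishesAt h P0 → h ∉ Z →
          IsSmoothVariety (X ∩ projZeroLocus {h}) (d - 1)) := by
  classical
  haveI : Infinite k := IsAlgClosed.instInfinite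
  obtain ⟨hXc, hXi, hXd, hXs⟩ := hX
  have hIp : (vanI X).IsPrime := vanI_prime hXi
  have hI : HomI (vanI X) := homI_vanI X
  have hXe := closed_eq hXc
  obtain ⟨D, y, hy⟩ := exists_LN (vanI X) hI hIp.ne_top
  obtain rfl : D = d + 1 := LN_of_hasDim hI hy (by rw [hXe]; exact hXd)
  obtain ⟨v0, hv0, rfl⟩ := exists_rep P0
  have hmemX : ∀ v (hv : v ≠ 0), Projectivization.mk k v hv ∈ X ↔ ∀ f ∈ vanI X, eval v f = 0 := by
    intro v hv
    conv_lhs => rw [← hXe]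
    exact mem_pzl hI v hv
  have hIv := (hmemX v0 hv0).1 hP0
  have hdn : d ≤ n := by
    have := grad_rank_le hy v0 hIv
    omega
  obtain ⟨i0, hi0⟩ := Function.ne_iff.1 hv0
  obtain ⟨ξ, hξ, hξa, hξw⟩ := exists_xi v0 i0 hi0
  let lam : Fin n → MvPolynomial (Fin (n+1)) k →ₗ[k] k := fun j =>
    (MvPolynomial.lcoeff k 0).comp (pderiv (i0.succAbove j)).toLinearMap
  have hlam : ∀ w j, lam j (lform w) = w (i0.succAbove j) := by
    intro w j
    change coeff 0 (pderiv (i0.succAbove j) (lform w)) = _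
    rw [pderiv_lform, coeff_zero_C]
  have hspan : ∀ f : MvPolynomial (Fin (n+1)) k, f.IsHomogeneous 1 → eval v0 f = 0 →
      f = lform (fun l => ∑ j, lam j f * ξ j l) := by
    intro f hf hfv
    obtain ⟨w, rfl⟩ : ∃ w, f = lform w := ⟨_, lin_eq hf⟩
    rw [eval_lform] at hfv
    simp only [hlam]
    exact congrArg lform (hξw w hfv)
  have hli : LinearIndependent k ξ := by
    rw [Fintype.linearIndependent_iff]
    intro a ha j
    rw [← hξa a j]
    have := congrFun ha (i0.succAbove j)
    simpa using this
  obtain ⟨g, hg, hgs⟩ := core hI hd hy (fun v hv hvI => by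
      rw [← span_homVan]
      exact hXs _ ((hmemX v hv).2 hvI) v hv rfl) v0 hv0 hIv ξ hξ hli
    (fun f hf hfv => ⟨_, hspan f hf hfv⟩)
  let j0 : Fin n := ⟨0, by omega⟩
  let g' : MvPolynomial (Fin n) k := g * MvPolynomial.X j0
  have hg' : g' ≠ 0 := mul_ne_zero hg (X_ne_zero j0)
  have hlamv : ∀ a : Fin n → k, (fun j => lam j (lform (fun l => ∑ j', a j' * ξ j' l))) = a := by
    intro a; funext j; rw [hlam, hξa]
  refine ⟨{h | ∀ c : k, eval (fun j => c * lam j h) g' = 0}, ?_, ?_, ?_, ?_⟩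
  · refine ⟨{F | ∃ c : k, F = fun h => eval (fun j => c * lam j h) g'}, ?_, ?_⟩
    · rintro F ⟨c, rfl⟩
      exact ⟨n, fun j => c • lam j, g', rfl⟩
    · ext h
      constructor
      · rintro hh F ⟨c, rfl⟩
        exact hh c
      · intro hh c
        exact hh _ ⟨c, rfl⟩
  · intro c h hh c'
    have := hh (c' * c)
    simpa [mul_assoc] using this
  · obtain ⟨a, ha⟩ : ∃ a, eval a g' ≠ 0 := by
      by_contra! hc
      exact hg' (MvPolynomial.funext fun a => by rw [hc a, map_zero])
    have hnz : lform (fun l => ∑ j', a j' * ξ j' l) ∉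
        {h : MvPolynomial (Fin (n+1)) k | ∀ c : k, eval (fun j => c * lam j h) g' = 0} := by
      intro hc
      have := hc 1
      simp only [one_mul, hlamv] at this
      exact ha this
    refine ⟨lform (fun l => ∑ j', a j' * ξ j' l), lform_hom _, ?_, ?_, hnz⟩
    · intro h0
      apply hnz
      rw [h0]
      intro c
      simp only [map_zero, mul_zero, g', map_mul, eval_X]
    · rw [vanishesAt_hom (lform_hom _), ← sum_lform, map_sum]
      refine Finset.sum_eq_zero fun j _ => ?_
      rw [map_mul, eval_lform, hξ, mul_zero]
  · intro h hh _ hhv hhZ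
    simp only [Set.mem_setOf_eq, not_forall] at hhZ
    obtain ⟨c, hc⟩ := hhZ
    have hc0 : c ≠ 0 := by
      rintro rfl
      apply hc
      simp only [zero_mul, mul_zero, g', map_mul, eval_X]
    rw [vanishesAt_hom hh] at hhv
    have hch : C c * h = lform (fun l => ∑ j, (c * lam j h) * ξ j l) := by
      conv_lhs => rw [hspan h hh hhv]
      simp only [lform, Finset.mul_sum, mul_assoc, map_sum, map_mul, Finset.sum_mul]
    have hcg : eval (fun j => c * lam j h) g ≠ 0 := by
      simp only [g', map_mul] at hc
      exact left_ne_zero_of_mul hc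
    obtain ⟨K, hK, hKh, hJK, hKv, hKz, ⟨y', hy'⟩, hKr⟩ := hgs _ hcg
    rw [← pzl_smul c hc0 h]
    have hhom : (C c * h).IsHomogeneous 1 := by rw [hch]; exact lform_hom _
    rw [← hch] at hJK hKz
    have hKX : ∃ i, MvPolynomial.X i ∉ K := ⟨i0, fun hc => hi0 (by
      have := hKv hc
      rw [RingHom.mem_ker, eval_X] at this
      exact this)⟩
    have hY : X ∩ projZeroLocus {C c * h} = projZeroLocus (K : Set (MvPolynomial (Fin (n+1)) k)) := by
      ext x
      obtain ⟨v, hv, rfl⟩ := exists_rep x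
      rw [mem_pzl hKh, Set.mem_inter_iff, hmemX]
      have h1 : Projectivization.mk k v hv ∈ projZeroLocus {C c * h} ↔ eval v (C c * h) = 0 := by
        rw [← vanishesAt_hom hhom v hv]
        simp [projZeroLocus]
      rw [h1]
      constructor
      · rintro ⟨h2, h3⟩
        exact hKz v h2 h3
      · intro h2
        exact ⟨fun f hf => h2 f (hJK (Ideal.mem_sup_left hf)),
          h2 _ (hJK (Ideal.mem_sup_right (Ideal.mem_span_singleton_self _)))⟩
    rw [hY]
    obtain ⟨e, rfl⟩ : ∃ e, d = e + 1 := ⟨d - 1, by omega⟩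
    refine ⟨isClosed_pzl hKh, irred_pzl hKh hKX, hasDim_of_LN hKh hy', ?_⟩
    intro x hx v hv hvx
    subst hvx
    rw [span_homVan, vanI_pzl hKh hKX, hKr v hv ((mem_pzl hKh v hv).1 hx)]
    omega

end Bert

/-- **Bertini theorem for hyperplanes through a point of `X`.**
Let `X` be an irreducible smooth projective variety of dimension `d ≥ 2` in `ℙⁿ` over an
algebraically closed field of characteristic zero and let `P0` be a closed point on `X`.
Then a general hyperplane passing through `P0` (i.e. a general member of the linear system of
degree-one forms vanishing at `P0`) intersects `X` in an irreducible smooth subvariety of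
codimension `1` on `X`. -/
theorem general_hyperplane_through_point_on_X_smooth_irreducible
    {k : Type} [Field k] [IsAlgClosed k] [CharZero k] {n : ℕ}
    (X : Set (ProjPt k n)) (d : ℕ) (hd : 2 ≤ d) (hX : IsSmoothVariety X d)
    (P0 : ProjPt k n) (hP0 : P0 ∈ X) :
    ∃ Z : Set (MvPolynomial (Fin (n+1)) k), IsZClosed k Z ∧ IsCone k Z ∧
      (∃ h : MvPolynomial (Fin (n+1)) k,
        h.IsHomogeneous 1 ∧ h ≠ 0 ∧ VanishesAt h P0 ∧ h ∉ Z) ∧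
      (∀ h : MvPolynomial (Fin (n+1)) k,
        h.IsHomogeneous 1 → h ≠ 0 → VanishesAt h P0 → h ∉ Z →
          IsSmoothVariety (X ∩ projZeroLocus {h}) (d - 1)) := by
  exact Bert.main_bertini X d hd hX P0 hP0
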